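/- In the blow-up setup, after passing to a subsequence there exist positive reals (ν_i) and ε₀ ∈ {−1, +1} such that: (i) ν_i → 0; (ii) ν_i^{(n−2k)/2}·u_i(ν_i ·) → ε₀·U in C^{2k}_loc(ℝⁿ∖{0}); (iii) lim_{R→∞} limsup_{i→∞} sup_{x ∈ B, |x| ≥ Rν_i} |x|^{(n−2k)/2}|u_i(x)| = 0. -/

import Mathlib

/-!
Radial solutions are studied in the Emden–Fowler variable `t = log |x|`. With `m = (n - 2k)/2` and
`q = 2* - 2 = 2k/m`, the profile `w(t) = e^{mt} u(e^t)` of a solution satisfies on `(-∞, 0]`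
`∏_{j<2k} (∂ - a_j) w = |w|^q w + λ e^{2kt} w`, where the exponents `a_j` are `m, m + 2, …, m + 2(k-1)` and
their negatives (`iterLap_radial`, `chainPoly_expo`). A solution is handled as a chain of quasi-derivatives
`D 0 = w`, `D (j+1) = (∂ - a_j) (D j)`; the Dirichlet conditions become `D j 0 = 0` for `j < k`, smoothness at
the origin becomes decay like `e^{mt}` at `-∞`, and the critical norm becomes the `L^{q+2}` norm of `w`. All
exponents are nonzero and scaling in `x` is translation in `t`.

The proof rests on four facts.

* *Bounds and compactness.* The critical norm bounds the last quasi-derivative, and the first-order factors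
  propagate the bound to all others (`radSol_bound`). Hence translates of the profiles are precompact with all
  quasi-derivatives, and the limits solve the limit equation `D (2k) = |D 0|^q D 0` (`chain_compact`). Finite
  energy makes a limit tend to zero at the infinite ends of its domain (`chain_tendsto_zero`).
* *Small solutions decay.* Where `|w|` is small the equation is a small perturbation of a hyperbolic linear
  one, so `w` is controlled by its boundary values with exponential decay into the interval (`chain_decay`).
  In particular a solution on `(-∞, 0]` that is small everywhere vanishes (`halfline_small`), and a nontrivial
  solution attains a fixed threshold `δ`.
* *No solution on a half-line.* A bounded solution of the limit equation on `(-∞, 0]` with Dirichlet data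
  vanishes (`dirichlet_limit_zero`). The conserved quantity of the equation (Pohozaev's identity) gives
  the additional condition `D k 0 = 0` for even `k`. Then sign changes are counted: by a weighted Rolle argument each
  factor of the chain preserves the number of sign changes, the extra condition produces one more, and since
  `D (2k)` has the sign of `D 0`, the number of sign changes grows after each cycle. So `w` has infinitely many
  zeros, which forces `w = 0` (`halfline_zero`). For odd `k` the same count, without Pohozaev's
  identity, shows that the Dirichlet problem itself has no nontrivial radial solution (`RadSol.even`).
* *Classification.* If two entire solutions tending to zero at both ends have the same coefficient
  `lim e^{-mt} w` at `-∞`, the same count applied to their difference shows that they agree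
  (`line_unique`). This coefficient is a complete invariant, and the translates of `±` the bubble realize all
  its nonzero values (`line_classify`).

Let `τ_i` be the last time at which `|w_i|` reaches `δ`. If `τ_i` stayed bounded, a limit of the `w_i` would be a
nontrivial solution of the Dirichlet problem on a half-line; so `τ_i → -∞` (`last_tendsto`). The translates
`w_i(· + τ_i)` converge along a subsequence to an entire solution, which is a translate of `±` the bubble, and a
bounded correction of `τ_i` centres it (`log_concentration_aux`). With `ν_i = e^{τ_i}` this is the asserted
convergence (`cLocConv_of_prof`). To the right of `τ_i` the profile stays below `δ`, hence decays
exponentially, which is the tail estimate (`tail_of_prof`).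
-/

open MeasureTheory Metric Filter Topology Real

noncomputable section

def lap {n : ℕ} (u : EuclideanSpace ℝ (Fin n) → ℝ) : EuclideanSpace ℝ (Fin n) → ℝ :=
  fun x => ∑ i : Fin n, iteratedFDeriv ℝ 2 u x (fun _ => EuclideanSpace.single i 1)

def iterLap {n : ℕ} (k : ℕ) (u : EuclideanSpace ℝ (Fin n) → ℝ) :
    EuclideanSpace ℝ (Fin n) → ℝ :=
  lap^[k] u

def twoStar (n k : ℕ) : ℝ := 2 * n / ((n : ℝ) - 2 * k)

def ank (n k : ℕ) : ℝ :=
  (∏ j ∈ Finset.range (2 * k), ((n : ℝ) + 2 * ((j : ℝ) - (k : ℝ)))) ^ (-(1 : ℝ) / (k : ℝ))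

def Ubub (n k : ℕ) (x : EuclideanSpace ℝ (Fin n)) : ℝ :=
  (1 / (1 + ank n k * ‖x‖ ^ 2)) ^ (((n : ℝ) - 2 * k) / 2)

def BlowUpSetup (n k : ℕ) (M : ℝ) (lam : ℕ → ℝ)
    (u : ℕ → EuclideanSpace ℝ (Fin n) → ℝ) : Prop :=
  (∀ i, 0 < lam i) ∧ Filter.Tendsto lam Filter.atTop (nhds 0) ∧
  (∀ i, ContDiff ℝ (2 * k : ℕ) (u i)) ∧
  (∀ i, ∀ x y : EuclideanSpace ℝ (Fin n), ‖x‖ = ‖y‖ → u i x = u i y) ∧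
  (∀ i, ∀ x ∈ Metric.ball (0 : EuclideanSpace ℝ (Fin n)) 1,
    iterLap k (u i) x - lam i * u i x = |u i x| ^ (twoStar n k - 2) * u i x) ∧
  (∀ i, ∀ x : EuclideanSpace ℝ (Fin n), ‖x‖ = 1 → ∀ j < k,
    iteratedFDeriv ℝ j (u i) x (fun _ => x) = 0) ∧
  (∀ i, ∃ x ∈ Metric.closedBall (0 : EuclideanSpace ℝ (Fin n)) 1, u i x ≠ 0) ∧
  (∀ i, (∫ x in Metric.ball (0 : EuclideanSpace ℝ (Fin n)) 1, |u i x| ^ twoStar n k)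
      ≤ M ^ twoStar n k)

def CLocConv {n : ℕ} (m : ℕ) (S : Set (EuclideanSpace ℝ (Fin n)))
    (f : ℕ → EuclideanSpace ℝ (Fin n) → ℝ) (g : EuclideanSpace ℝ (Fin n) → ℝ) : Prop :=
  ∀ K : Set (EuclideanSpace ℝ (Fin n)), K ⊆ S → IsCompact K → ∀ j ≤ m,
    Filter.Tendsto
      (fun i => ⨆ x : K, ‖iteratedFDeriv ℝ j (f i) (x : EuclideanSpace ℝ (Fin n))
        - iteratedFDeriv ℝ j g (x : EuclideanSpace ℝ (Fin n))‖)
      Filter.atTop (nhds 0)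

def Concentration (n k : ℕ) (u : ℕ → EuclideanSpace ℝ (Fin n) → ℝ)
    (ν : ℕ → ℝ) (ε₀ : ℝ) : Prop :=
  (∀ i, 0 < ν i) ∧ Filter.Tendsto ν Filter.atTop (nhds 0) ∧ (ε₀ = 1 ∨ ε₀ = -1) ∧
  CLocConv (2 * k) {(0 : EuclideanSpace ℝ (Fin n))}ᶜ
    (fun i z => (ν i) ^ (((n : ℝ) - 2 * k) / 2) * u i ((ν i) • z))
    (fun z => ε₀ * Ubub n k z) ∧
  Filter.Tendsto (fun R : ℝ => Filter.limsup (fun i =>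
      ⨆ x : {x : EuclideanSpace ℝ (Fin n) //
        x ∈ Metric.ball (0 : EuclideanSpace ℝ (Fin n)) 1 ∧ R * ν i ≤ ‖x‖},
        ‖(x : EuclideanSpace ℝ (Fin n))‖ ^ (((n : ℝ) - 2 * k) / 2)
          * |u i (x : EuclideanSpace ℝ (Fin n))|) Filter.atTop)
    Filter.atTop (nhds 0)

def Tfun (n k : ℕ) (u : EuclideanSpace ℝ (Fin n) → ℝ) (x : EuclideanSpace ℝ (Fin n)) : ℝ :=
  (((n : ℝ) - 2 * k) / 2) * u x + fderiv ℝ u x x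

def ndS {n : ℕ} (u : EuclideanSpace ℝ (Fin n) → ℝ) (x : EuclideanSpace ℝ (Fin n)) : ℝ :=
  fderiv ℝ u x (‖x‖⁻¹ • x)

def halfLapSq {n : ℕ} (k : ℕ) (u : EuclideanSpace ℝ (Fin n) → ℝ)
    (x : EuclideanSpace ℝ (Fin n)) : ℝ :=
  if k % 2 = 0 then (iterLap (k / 2) u x) ^ 2 else ‖gradient (iterLap (k / 2) u) x‖ ^ 2

def Sfun (n k : ℕ) (u : EuclideanSpace ℝ (Fin n) → ℝ) (x : EuclideanSpace ℝ (Fin n)) : ℝ :=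
  (∑ i ∈ Finset.range (k / 2),
    (-(ndS (iterLap (k - i - 1) u) x) * iterLap i (Tfun n k u) x
      + iterLap (k - i - 1) u x * ndS (iterLap i (Tfun n k u)) x))
  - (if k % 2 = 1 then ndS (iterLap (k / 2) u) x * iterLap (k / 2) (Tfun n k u) x else 0)

def sphVol (n : ℕ) : ℝ :=
  (μH[(n : ℝ) - 1] (Metric.sphere (0 : EuclideanSpace ℝ (Fin n)) 1)).toReal

def Cnk (n k : ℕ) : ℝ :=
  1 / (((n : ℝ) - 2) * sphVol n *
    ∏ i ∈ Finset.Icc 1 (k - 1), (((n : ℝ) - 2 * k + 2 * ((i : ℝ) - 1)) * (2 * (k : ℝ) - 2 * (i : ℝ))))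

/-! ### Chains of first-order factors -/

/-- `ChainOn a N D J`: on `J` the functions `D 0, …, D N` are the successive quasi-derivatives
`D (j+1) = (∂ - a j) (D j)`, so that `D N = ∏_{j<N} (∂ - a j) (D 0)`. Continuity is asked on the whole
of `J`, differentiability only in its interior, so that closed half-lines are covered without one-sided
derivatives. -/
def ChainOn (a : ℕ → ℝ) (N : ℕ) (D : ℕ → ℝ → ℝ) (J : Set ℝ) : Prop :=
  (∀ j < N, ContinuousOn (D j) J) ∧
  ∀ j < N, ∀ t ∈ interior J, HasDerivAt (D j) (a j * D j t + D (j + 1) t) t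

lemma ChainOn.mono {a : ℕ → ℝ} {N : ℕ} {D : ℕ → ℝ → ℝ} {J J' : Set ℝ} (h : ChainOn a N D J)
    (hJ : J' ⊆ J) : ChainOn a N D J' :=
  ⟨fun j hj => (h.1 j hj).mono hJ, fun j hj t ht => h.2 j hj t (interior_mono hJ ht)⟩

lemma ChainOn.shift {a : ℕ → ℝ} {N : ℕ} {D : ℕ → ℝ → ℝ} (h : ChainOn a N D Set.univ) (c : ℝ) :
    ChainOn a N (fun j t => D j (t + c)) Set.univ := by
  refine ⟨fun j hj => ?_, fun j hj t _ => ?_⟩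
  · exact ((h.1 j hj).comp (by fun_prop) (fun x _ => Set.mem_univ _))
  · simpa using (h.2 j hj (t + c) (by simp)).comp_add_const t c

lemma ChainOn.sub {a : ℕ → ℝ} {N : ℕ} {D E : ℕ → ℝ → ℝ} {J : Set ℝ} (h : ChainOn a N D J)
    (h' : ChainOn a N E J) : ChainOn a N (fun j t => D j t - E j t) J := by
  refine ⟨fun j hj => (h.1 j hj).sub (h'.1 j hj), fun j hj t ht => ?_⟩
  exact ((h.2 j hj t ht).sub (h'.2 j hj t ht)).congr_deriv (by ring)

lemma ChainOn.const_mul {a : ℕ → ℝ} {N : ℕ} {D : ℕ → ℝ → ℝ} {J : Set ℝ} (h : ChainOn a N D J)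
    (c : ℝ) : ChainOn a N (fun j t => c * D j t) J := by
  refine ⟨fun j hj => (h.1 j hj).const_mul c |>.congr (fun _ _ => rfl), fun j hj t ht => ?_⟩
  exact ((h.2 j hj t ht).const_mul c).congr_deriv (by ring)

lemma hasDerivAt_comp_neg' {y : ℝ → ℝ} {c t : ℝ} (h : HasDerivAt y c (-t)) :
    HasDerivAt (fun t => y (-t)) (-c) t := by
  have := HasDerivAt.comp t h (hasDerivAt_neg t)
  simpa [Function.comp_def] using this

/-- Reflection `t ↦ -t` turns the exponents `a j` into `-a j`. -/
lemma ChainOn.reflect {a : ℕ → ℝ} {N : ℕ} {D : ℕ → ℝ → ℝ} (h : ChainOn a N D Set.univ) :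
    ChainOn (fun j => -a j) N (fun j t => (-1) ^ j * D j (-t)) Set.univ := by
  refine ⟨fun j hj => ?_, fun j hj t _ => ?_⟩
  · have := (h.1 j hj).comp (f := fun t : ℝ => -t) (by fun_prop) (fun x _ => Set.mem_univ _) (s := Set.univ)
    exact continuousOn_const.mul this
  · exact ((hasDerivAt_comp_neg' (h.2 j hj (-t) (by simp))).const_mul ((-1 : ℝ) ^ j)).congr_deriv
      (by simp only [pow_succ]; ring)

/-- First-order estimate for `y' = a y + g`, integrated from the right end of the interval: the
weight `ρ` grows at a rate at most `a - κ`. -/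
lemma fo_right {y g ρ ρ' : ℝ → ℝ} {S T a G κ : ℝ} (hκ : 0 < κ) (hy : ContinuousOn y (Set.Icc S T))
    (hy' : ∀ t ∈ Set.Ioo S T, HasDerivAt y (a * y t + g t) t)
    (hρ : ∀ t, HasDerivAt ρ (ρ' t) t) (hρ0 : ∀ t, 0 ≤ ρ t) (hρ' : ∀ t, ρ' t ≤ (a - κ) * ρ t)
    (hg : ∀ t ∈ Set.Ioo S T, |g t| ≤ G * ρ t) (hG : 0 ≤ G) :
    ∀ t ∈ Set.Icc S T, |y t| ≤ G / κ * ρ t + exp (-(a * (T - t))) * |y T| := by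
  have key : ∀ s : ℝ, (s = 1 ∨ s = -1) → ∀ t ∈ Set.Icc S T,
      s * y t ≤ G / κ * ρ t + exp (-(a * (T - t))) * |y T| := by
    intro s hs t ht
    have hρc : Continuous ρ := continuous_iff_continuousAt.2 fun t => (hρ t).continuousAt
    have hmono : MonotoneOn (fun t => exp (-a * t) * (s * y t - G / κ * ρ t)) (Set.Icc S T) := by
      refine monotoneOn_of_hasDerivWithinAt_nonneg (convex_Icc S T)
        (f' := fun t => exp (-a * t) * (-a) * (s * y t - G / κ * ρ t)
          + exp (-a * t) * (s * (a * y t + g t) - G / κ * ρ' t)) ?_ ?_ ?_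
      · fun_prop
      · intro x hx
        rw [interior_Icc] at hx
        have h1 : HasDerivAt (fun t => exp (-a * t)) (exp (-a * x) * (-a)) x := by
          simpa using ((hasDerivAt_id x).const_mul (-a)).exp
        exact (h1.mul (((hy' x hx).const_mul s).sub ((hρ x).const_mul (G / κ)))).hasDerivWithinAt
      · intro x hx
        rw [interior_Icc] at hx
        have h1 : -(G * ρ x) ≤ s * g x := by
          have := hg x hx
          rw [abs_le] at this
          rcases hs with rfl | rfl <;> linarith
        have h2 : G / κ * ρ' x ≤ G / κ * ((a - κ) * ρ x) :=
          mul_le_mul_of_nonneg_left (hρ' x) (by positivity)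
        have h3 : G / κ * ((a - κ) * ρ x) = G / κ * a * ρ x - G * ρ x := by
          field_simp
        have : 0 ≤ exp (-a * x) * (s * g x - G / κ * ρ' x + G / κ * a * ρ x) :=
          mul_nonneg (exp_pos _).le (by linarith)
        linarith
    have h1 := hmono ht (Set.right_mem_Icc.2 (ht.1.trans ht.2)) ht.2
    simp only at h1
    have h2 : s * y T - G / κ * ρ T ≤ |y T| := by
      have : 0 ≤ G / κ * ρ T := mul_nonneg (by positivity) (hρ0 T)
      rcases hs with rfl | rfl
      · have := le_abs_self (y T); linarith
      · have := neg_abs_le (y T); linarith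
    have h3 : exp (a * t) * (exp (-a * t) * (s * y t - G / κ * ρ t))
        ≤ exp (a * t) * (exp (-a * T) * |y T|) :=
      mul_le_mul_of_nonneg_left (h1.trans (mul_le_mul_of_nonneg_left h2 (exp_pos _).le))
        (exp_pos _).le
    rw [← mul_assoc, ← mul_assoc, ← exp_add, ← exp_add] at h3
    rw [show a * t + -a * t = 0 by ring, exp_zero,
      show a * t + -a * T = -(a * (T - t)) by ring] at h3
    linarith
  intro t ht
  rw [abs_le]
  have h1 := key 1 (Or.inl rfl) t ht
  have h2 := key (-1) (Or.inr rfl) t ht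
  constructor <;> linarith

/-- Mirror image of `fo_right`: integration from the left end. -/
lemma fo_left {y g ρ ρ' : ℝ → ℝ} {S T a G κ : ℝ} (hκ : 0 < κ) (hy : ContinuousOn y (Set.Icc S T))
    (hy' : ∀ t ∈ Set.Ioo S T, HasDerivAt y (a * y t + g t) t)
    (hρ : ∀ t, HasDerivAt ρ (ρ' t) t) (hρ0 : ∀ t, 0 ≤ ρ t) (hρ' : ∀ t, (a + κ) * ρ t ≤ ρ' t)
    (hg : ∀ t ∈ Set.Ioo S T, |g t| ≤ G * ρ t) (hG : 0 ≤ G) :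
    ∀ t ∈ Set.Icc S T, |y t| ≤ G / κ * ρ t + exp (a * (t - S)) * |y S| := by
  have hm : ∀ t, t ∈ Set.Icc (-T) (-S) → -t ∈ Set.Icc S T := fun t ht =>
    ⟨by linarith [ht.2], by linarith [ht.1]⟩
  have hm' : ∀ t, t ∈ Set.Ioo (-T) (-S) → -t ∈ Set.Ioo S T := fun t ht =>
    ⟨by linarith [ht.2], by linarith [ht.1]⟩
  have := fo_right (y := fun t => y (-t)) (g := fun t => -g (-t)) (ρ := fun t => ρ (-t))
    (ρ' := fun t => -ρ' (-t)) (S := -T) (T := -S) (a := -a) (G := G) (κ := κ) hκ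
    (hy.comp (by fun_prop) hm)
    (fun t ht => (hasDerivAt_comp_neg' (hy' (-t) (hm' t ht))).congr_deriv (by ring))
    (fun t => hasDerivAt_comp_neg' (hρ (-t)))
    (fun t => hρ0 _) (fun t => by have := hρ' (-t); linarith)
    (fun t ht => by simpa using hg (-t) (hm' t ht)) hG
  intro t ht
  have h := this (-t) ⟨by linarith [ht.2], by linarith [ht.1]⟩
  simp only [neg_neg] at h
  rw [show -(-a * (-S - -t)) = a * (t - S) by ring] at h
  exact h

/-- If the exponents are bounded away from zero and `|D N| ≤ ε |D 0|` with `ε` small, then a chain on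
`[S, T]` is controlled by its boundary values, which decay exponentially into the interval. Factors with
positive exponent feel only the right end, factors with negative exponent only the left end. -/
lemma chain_decay {a : ℕ → ℝ} {N : ℕ} {D : ℕ → ℝ → ℝ} {S T β κ ε CL CR : ℝ} (hST : S ≤ T)
    (hN : 0 < N) (hκ : 0 < κ) (hκ1 : κ ≤ 1) (hε0 : 0 ≤ ε) (hε : ε * κ⁻¹ ^ N ≤ 1 / 2)
    (hβ : 0 ≤ β) (hCL : 0 < CL) (hCR : 0 < CR) (hD : ChainOn a N D (Set.Icc S T))
    (ha : ∀ j < N, (β + κ ≤ a j ∧ |D j T| ≤ CR) ∨ (a j ≤ -(β + κ) ∧ |D j S| ≤ CL))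
    (hDN : ∀ t ∈ Set.Ioo S T, |D N t| ≤ ε * |D 0 t|) :
    ∀ j < N, ∀ t ∈ Set.Icc S T,
      |D j t| ≤ 2 * N * κ⁻¹ ^ N * (CR * exp (β * (t - T)) + CL * exp (-β * (t - S))) := by
  set ρ : ℝ → ℝ := fun t => CR * exp (β * (t - T)) + CL * exp (-β * (t - S)) with hρdef
  have hρpos : ∀ t, 0 < ρ t := fun t => by positivity
  have hρcont : Continuous ρ := by simp only [hρdef]; fun_prop
  have hL1 : 1 ≤ κ⁻¹ := (one_le_inv₀ hκ).2 hκ1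
  have hLpow : ∀ i, 1 ≤ κ⁻¹ ^ i := fun i => one_le_pow₀ hL1
  have hρ' : ∀ t, HasDerivAt ρ (CR * (exp (β * (t - T)) * β) + CL * (exp (-β * (t - S)) * (-β))) t := by
    intro t
    have h1 : HasDerivAt (fun t => exp (β * (t - T))) (exp (β * (t - T)) * β) t := by
      simpa using (((hasDerivAt_id t).sub_const T).const_mul β).exp
    have h2 : HasDerivAt (fun t => exp (-β * (t - S))) (exp (-β * (t - S)) * (-β)) t := by
      simpa using (((hasDerivAt_id t).sub_const S).const_mul (-β)).exp
    exact (h1.const_mul CR).add (h2.const_mul CL)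
  -- `W` is the weighted supremum of `D 0`, attained at `t0`
  obtain ⟨t0, ht0, hmax⟩ := isCompact_Icc.exists_isMaxOn (Set.nonempty_Icc.2 hST)
    (f := fun t => |D 0 t| / ρ t)
    ((hD.1 0 hN).abs.div hρcont.continuousOn (fun t _ => (hρpos t).ne'))
  set W := |D 0 t0| / ρ t0 with hW
  have hW0 : 0 ≤ W := div_nonneg (abs_nonneg _) (hρpos _).le
  have hWle : ∀ t ∈ Set.Icc S T, |D 0 t| ≤ W * ρ t := by
    intro t ht
    have := hmax ht
    simp only [Set.mem_ofPred_eq] at this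
    rwa [div_le_iff₀ (hρpos t)] at this
  have hint : ∀ j < N, ∀ t ∈ Set.Ioo S T, HasDerivAt (D j) (a j * D j t + D (j + 1) t) t := by
    intro j hj t ht
    exact hD.2 j hj t (by rwa [interior_Icc])
  have step : ∀ j < N, ∀ G, 0 ≤ G → (∀ t ∈ Set.Ioo S T, |D (j + 1) t| ≤ G * ρ t) →
      ∀ t ∈ Set.Icc S T, |D j t| ≤ (G / κ + 1) * ρ t := by
    intro j hj G hG hg t ht
    rcases ha j hj with ⟨h1, h2⟩ | ⟨h1, h2⟩
    · have := fo_right hκ (hD.1 j hj) (hint j hj) hρ' (fun t => (hρpos t).le) (fun t => by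
        have e1 : 0 < CR * exp (β * (t - T)) := by positivity
        have e2 : 0 < CL * exp (-β * (t - S)) := by positivity
        simp only [hρdef]
        nlinarith) hg hG t ht
      have h3 : exp (-(a j * (T - t))) * |D j T| ≤ ρ t := by
        have e2 : 0 < CL * exp (-β * (t - S)) := by positivity
        have e3 : exp (-(a j * (T - t))) ≤ exp (β * (t - T)) := by
          apply exp_le_exp.2
          nlinarith [ht.2]
        have : exp (-(a j * (T - t))) * |D j T| ≤ exp (β * (t - T)) * CR := by gcongr
        simp only [hρdef]; linarith
      linarith
    · have := fo_left hκ (hD.1 j hj) (hint j hj) hρ' (fun t => (hρpos t).le) (fun t => by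
        have e1 : 0 < CR * exp (β * (t - T)) := by positivity
        have e2 : 0 < CL * exp (-β * (t - S)) := by positivity
        simp only [hρdef]
        nlinarith) hg hG t ht
      have h3 : exp (a j * (t - S)) * |D j S| ≤ ρ t := by
        have e2 : 0 < CR * exp (β * (t - T)) := by positivity
        have e3 : exp (a j * (t - S)) ≤ exp (-β * (t - S)) := by
          apply exp_le_exp.2
          nlinarith [ht.1]
        have : exp (a j * (t - S)) * |D j S| ≤ exp (-β * (t - S)) * CL := by gcongr
        simp only [hρdef]; linarith
      linarith
  have main : ∀ i < N, ∀ t ∈ Set.Icc S T,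
      |D (N - (i + 1)) t| ≤ (ε * W * κ⁻¹ ^ (i + 1) + (i + 1) * κ⁻¹ ^ (i + 1)) * ρ t := by
    have conv : ∀ (x : ℝ) (i : ℕ), (ε * W * κ⁻¹ ^ i + i * κ⁻¹ ^ i) / κ + 1 ≤
        ε * W * κ⁻¹ ^ (i + 1) + (i + 1) * κ⁻¹ ^ (i + 1) := by
      intro x i
      have := hLpow (i + 1)
      rw [div_eq_mul_inv, pow_succ]
      rw [pow_succ] at this
      nlinarith
    intro i
    induction i with
    | zero =>
      intro hi t ht
      have h1 := step (N - 1) (by omega) (ε * W) (by positivity) (by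
        intro t ht
        rw [Nat.sub_add_cancel hN]
        calc _ ≤ ε * |D 0 t| := hDN t ht
          _ ≤ ε * (W * ρ t) := by gcongr; exact hWle t (Set.Ioo_subset_Icc_self ht)
          _ = _ := by ring) t ht
      refine h1.trans (mul_le_mul_of_nonneg_right ?_ (hρpos t).le)
      simpa using conv 0 0
    | succ i ih =>
      intro hi t ht
      have h1 := step (N - (i + 1 + 1)) (by omega)
        (ε * W * κ⁻¹ ^ (i + 1) + (i + 1) * κ⁻¹ ^ (i + 1)) (by positivity) (by
        intro t ht
        rw [show N - (i + 1 + 1) + 1 = N - (i + 1) by omega]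
        exact ih (by omega) t (Set.Ioo_subset_Icc_self ht)) t ht
      refine h1.trans (mul_le_mul_of_nonneg_right ?_ (hρpos t).le)
      have := conv 0 (i + 1)
      push_cast at this ⊢
      exact this
  have hWb : W ≤ 2 * (N * κ⁻¹ ^ N) := by
    have h1 := main (N - 1) (by omega) t0 ht0
    rw [show N - (N - 1 + 1) = 0 by omega, Nat.sub_add_cancel hN] at h1
    rw [Nat.cast_sub (by omega)] at h1
    have h2 : W ≤ ε * W * κ⁻¹ ^ N + N * κ⁻¹ ^ N := by
      rw [hW, div_le_iff₀ (hρpos t0)]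
      simpa using h1
    nlinarith
  intro j hj t ht
  have h1 := main (N - j - 1) (by omega) t ht
  rw [show N - (N - j - 1 + 1) = j by omega] at h1
  refine h1.trans (mul_le_mul_of_nonneg_right ?_ (hρpos t).le)
  set i := N - j - 1 with hi
  have hiN : κ⁻¹ ^ (i + 1) ≤ κ⁻¹ ^ N := pow_le_pow_right₀ hL1 (by omega)
  have hiN' : ((i : ℝ) + 1) ≤ N := by
    have : i + 1 ≤ N := by omega
    exact_mod_cast this
  have e1 : ε * W * κ⁻¹ ^ (i + 1) ≤ N * κ⁻¹ ^ N := by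
    calc ε * W * κ⁻¹ ^ (i + 1) ≤ ε * W * κ⁻¹ ^ N := by gcongr
      _ = (ε * κ⁻¹ ^ N) * W := by ring
      _ ≤ 1 / 2 * W := by gcongr
      _ ≤ _ := by linarith
  have e2 : ((i : ℝ) + 1) * κ⁻¹ ^ (i + 1) ≤ N * κ⁻¹ ^ N := by gcongr
  linarith

/-- Gronwall estimate for the energy `∑ (D j)²`, valid in both time directions. -/
lemma chain_gronwall (a : ℕ → ℝ) (N : ℕ) (L : ℝ) : ∃ K : ℝ, 0 ≤ K ∧
    ∀ (D : ℕ → ℝ → ℝ) (S T η : ℝ), 0 < N → ChainOn a N D (Set.Icc S T) →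
    (∀ t ∈ Set.Ioo S T, |D N t| ≤ L * |D 0 t| + η) →
    ∀ s ∈ Set.Icc S T, ∀ t ∈ Set.Icc S T,
      (∑ j ∈ Finset.range N, (D j t) ^ 2) + η ^ 2 ≤
        ((∑ j ∈ Finset.range N, (D j s) ^ 2) + η ^ 2) * exp (K * |t - s|) := by
  set A := ∑ j ∈ Finset.range N, |a j| with hA
  have hA0 : 0 ≤ A := Finset.sum_nonneg fun _ _ => abs_nonneg _
  set K := 2 * A + 2 + 2 * L ^ 2 with hK
  have hK0 : 0 ≤ K := by positivity
  refine ⟨K, hK0, ?_⟩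
  intro D S T η hN hD hDN
  set e : ℝ → ℝ := fun t => (∑ j ∈ Finset.range N, (D j t) ^ 2) + η ^ 2 with he
  set e' : ℝ → ℝ := fun t => ∑ j ∈ Finset.range N, 2 * D j t * (a j * D j t + D (j + 1) t) with he'
  have hec : ContinuousOn e (Set.Icc S T) := by
    refine ContinuousOn.add (continuousOn_finsetSum _ fun j hj => ?_) continuousOn_const
    exact (hD.1 j (Finset.mem_range.1 hj)).pow 2
  have hed : ∀ t ∈ Set.Ioo S T, HasDerivAt e (e' t) t := by
    intro t ht
    have : HasDerivAt (fun t => ∑ j ∈ Finset.range N, (D j t) ^ 2) (e' t) t := by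
      refine HasDerivAt.fun_sum fun j hj => ?_
      have := (hD.2 j (Finset.mem_range.1 hj) t (by rwa [interior_Icc])).fun_pow 2
      simpa using this
    exact this.add_const _
  have hbd : ∀ t ∈ Set.Ioo S T, |e' t| ≤ K * e t := by
    intro t ht
    have h1 : |e' t| ≤ ∑ j ∈ Finset.range N,
        (2 * A * (D j t) ^ 2 + ((D j t) ^ 2 + (D (j + 1) t) ^ 2)) := by
      refine (Finset.abs_sum_le_sum_abs _ _).trans (Finset.sum_le_sum fun j hj => ?_)
      have haj : |a j| ≤ A := Finset.single_le_sum (f := fun j => |a j|)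
        (fun _ _ => abs_nonneg _) hj
      have := abs_le.1 haj
      rw [abs_le]
      constructor
      · nlinarith [sq_nonneg (D j t + D (j + 1) t), sq_nonneg (D j t)]
      · nlinarith [sq_nonneg (D j t - D (j + 1) t), sq_nonneg (D j t)]
    have h2 : ∑ j ∈ Finset.range N, (D (j + 1) t) ^ 2 ≤
        (∑ j ∈ Finset.range N, (D j t) ^ 2) + (D N t) ^ 2 := by
      have h3 := Finset.sum_range_succ' (fun j => (D j t) ^ 2) N
      have h4 := Finset.sum_range_succ (fun j => (D j t) ^ 2) N
      nlinarith [sq_nonneg (D 0 t)]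
    have h5 : (D N t) ^ 2 ≤ 2 * L ^ 2 * (D 0 t) ^ 2 + 2 * η ^ 2 := by
      have h6 := hDN t ht
      have h7 : (D N t) ^ 2 ≤ (L * |D 0 t| + η) ^ 2 := by
        rw [← sq_abs (D N t)]
        exact pow_le_pow_left₀ (abs_nonneg _) h6 2
      have h8 := sq_abs (D 0 t)
      nlinarith [sq_nonneg (L * |D 0 t| - η)]
    have h9 : (D 0 t) ^ 2 ≤ ∑ j ∈ Finset.range N, (D j t) ^ 2 :=
      Finset.single_le_sum (f := fun j => (D j t) ^ 2) (fun _ _ => sq_nonneg _)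
        (Finset.mem_range.2 hN)
    rw [Finset.sum_add_distrib, Finset.sum_add_distrib, ← Finset.mul_sum] at h1
    have h10 : 2 * L ^ 2 * (D 0 t) ^ 2 ≤ 2 * L ^ 2 * ∑ j ∈ Finset.range N, (D j t) ^ 2 := by
      gcongr
    simp only [he, hK]
    have : 0 ≤ 2 * A * η ^ 2 + 2 * L ^ 2 * η ^ 2 := by positivity
    nlinarith
  have hexp : ∀ (c x : ℝ), HasDerivAt (fun t => exp (c * t)) (exp (c * x) * c) x := fun c x => by
    simpa using ((hasDerivAt_id x).const_mul c).exp
  have mono : MonotoneOn (fun t => exp (K * t) * e t) (Set.Icc S T) := by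
    refine monotoneOn_of_hasDerivWithinAt_nonneg (convex_Icc S T)
      (f' := fun t => exp (K * t) * K * e t + exp (K * t) * e' t) (by fun_prop) ?_ ?_
    · intro x hx
      rw [interior_Icc] at hx
      exact ((hexp K x).mul (hed x hx)).hasDerivWithinAt
    · intro x hx
      rw [interior_Icc] at hx
      have := (abs_le.1 (hbd x hx)).1
      have : 0 ≤ exp (K * x) * (K * e x + e' x) := mul_nonneg (exp_pos _).le (by linarith)
      linarith
  have anti : AntitoneOn (fun t => exp (-K * t) * e t) (Set.Icc S T) := by
    refine antitoneOn_of_hasDerivWithinAt_nonpos (convex_Icc S T)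
      (f' := fun t => exp (-K * t) * (-K) * e t + exp (-K * t) * e' t) (by fun_prop) ?_ ?_
    · intro x hx
      rw [interior_Icc] at hx
      exact ((hexp (-K) x).mul (hed x hx)).hasDerivWithinAt
    · intro x hx
      rw [interior_Icc] at hx
      have := (abs_le.1 (hbd x hx)).2
      have : 0 ≤ exp (-K * x) * (K * e x - e' x) := mul_nonneg (exp_pos _).le (by linarith)
      linarith
  intro s hs t ht
  change e t ≤ e s * exp (K * |t - s|)
  rcases le_total s t with hst | hst
  · have h := anti hs ht hst
    simp only at h
    have h2 := mul_le_mul_of_nonneg_left h (exp_pos (K * t)).le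
    rw [← mul_assoc, ← mul_assoc, ← exp_add, ← exp_add, show K * t + -K * t = 0 by ring,
      exp_zero, one_mul] at h2
    rw [abs_of_nonneg (by linarith), mul_comm (e s)]
    rwa [show K * t + -K * s = K * (t - s) by ring] at h2
  · have h := mono ht hs hst
    simp only at h
    have h2 := mul_le_mul_of_nonneg_left h (exp_pos (-K * t)).le
    rw [← mul_assoc, ← mul_assoc, ← exp_add, ← exp_add, show -K * t + K * t = 0 by ring,
      exp_zero, one_mul] at h2
    rw [abs_of_nonpos (by linarith), mul_comm (e s)]
    rwa [show -K * t + K * s = K * -(t - s) by ring] at h2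

/-! ### Zeros of chains -/

/-- Mean value theorem for `e^{-a t} y`, whose derivative is `e^{-a t} g` when `y' = a y + g`. -/
lemma chain_mvt {y g : ℝ → ℝ} {a s t : ℝ} (hst : s < t) (hy : ContinuousOn y (Set.Icc s t))
    (hy' : ∀ x ∈ Set.Ioo s t, HasDerivAt y (a * y x + g x) x) :
    ∃ c ∈ Set.Ioo s t, exp (-a * c) * g c * (t - s) = exp (-a * t) * y t - exp (-a * s) * y s := by
  obtain ⟨c, hc, h⟩ := exists_hasDerivAt_eq_slope (fun x => exp (-a * x) * y x)
    (fun x => exp (-a * x) * g x) hst (by fun_prop) (by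
      intro x hx
      have h1 : HasDerivAt (fun t => exp (-a * t)) (exp (-a * x) * (-a)) x := by
        simpa using ((hasDerivAt_id x).const_mul (-a)).exp
      exact (h1.mul (hy' x hx)).congr_deriv (by ring))
  refine ⟨c, hc, ?_⟩
  rw [h]
  field_simp [(sub_pos.2 hst).ne']

/-- Rolle for chains: between two zeros of `D j` lies a zero of `D (j + 1)`, since
`e^{-a t} D j` has derivative `e^{-a t} D (j + 1)`. -/
lemma chain_rolle {a : ℕ → ℝ} {N j : ℕ} {D : ℕ → ℝ → ℝ} {J : Set ℝ} (hD : ChainOn a N D J)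
    (hj : j < N) {s t : ℝ} (hst : s < t) (hJ : Set.Icc s t ⊆ J) (hs : D j s = 0) (ht : D j t = 0) :
    ∃ c ∈ Set.Ioo s t, D (j + 1) c = 0 := by
  have h := hD.mono hJ
  obtain ⟨c, hc, h1⟩ := chain_mvt hst (h.1 j hj)
    (fun x hx => h.2 j hj x (by rwa [interior_Icc]))
  refine ⟨c, hc, ?_⟩
  rw [hs, ht] at h1
  simpa [(sub_pos.2 hst).ne'] using h1

/-- A chain with `|D N| ≤ L |D 0|` and infinitely many zeros in a compact interval vanishes: by Rolle
all `D j` vanish at an accumulation point of the zeros, and Gronwall applies. -/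
lemma chain_zero_of_infinite {a : ℕ → ℝ} {N : ℕ} {D : ℕ → ℝ → ℝ} {S T L : ℝ} (hN : 0 < N)
    (hD : ChainOn a N D (Set.Icc S T)) (hDN : ∀ t ∈ Set.Ioo S T, |D N t| ≤ L * |D 0 t|)
    (hinf : {t | t ∈ Set.Icc S T ∧ D 0 t = 0}.Infinite) :
    ∀ j < N, ∀ t ∈ Set.Icc S T, D j t = 0 := by
  obtain ⟨x, hx, hacc⟩ := hinf.exists_accPt_of_subset_isCompact isCompact_Icc (fun t ht => ht.1)
  have hfr : ∃ᶠ t in 𝓝[≠] x, t ∈ Set.Icc S T ∧ D 0 t = 0 := by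
    rw [accPt_iff_frequently_nhdsNE] at hacc
    exact hacc
  have hxz : ∀ j < N, D j x = 0 := by
    have hlim : ∀ j < N, (∃ᶠ t in 𝓝[≠] x, t ∈ Set.Icc S T ∧ D j t = 0) → D j x = 0 := by
      intro j hj hf
      by_contra hne
      have h1 : ∀ᶠ t in 𝓝[Set.Icc S T] x, D j t ≠ 0 := (hD.1 j hj x hx).eventually_ne hne
      rw [eventually_nhdsWithin_iff] at h1
      have h2 : ∀ᶠ t in 𝓝[≠] x, t ∈ Set.Icc S T → D j t ≠ 0 := h1.filter_mono nhdsWithin_le_nhds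
      obtain ⟨t, ht, ht'⟩ := (hf.and_eventually h2).exists
      exact ht' ht.1 ht.2
    rw [← nhdsLT_sup_nhdsGT, frequently_sup] at hfr
    rcases hfr with hfr | hfr
    · have hall : ∀ j < N, ∃ᶠ t in 𝓝[<] x, t ∈ Set.Icc S T ∧ D j t = 0 := by
        intro j
        induction j with
        | zero => exact fun _ => hfr
        | succ j ih =>
          intro hj
          have h := ih (by omega)
          rw [(nhdsLT_basis x).frequently_iff] at h ⊢
          intro y hy
          obtain ⟨t1, ht1, ht1'⟩ := h y hy
          obtain ⟨t2, ht2, ht2'⟩ := h _ ht1.2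
          obtain ⟨c, hc, hc'⟩ := chain_rolle hD (j := j) (by omega) ht2.1
            (Set.Icc_subset_Icc ht1'.1.1 ht2'.1.2) ht1'.2 ht2'.2
          exact ⟨c, ⟨ht1.1.trans hc.1, hc.2.trans ht2.2⟩,
            ⟨ht1'.1.1.trans hc.1.le, hc.2.le.trans ht2'.1.2⟩, hc'⟩
      exact fun j hj => hlim j hj ((hall j hj).filter_mono (nhdsWithin_mono _ (fun y hy => ne_of_lt hy)))
    · have hall : ∀ j < N, ∃ᶠ t in 𝓝[>] x, t ∈ Set.Icc S T ∧ D j t = 0 := by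
        intro j
        induction j with
        | zero => exact fun _ => hfr
        | succ j ih =>
          intro hj
          have h := ih (by omega)
          rw [(nhdsGT_basis x).frequently_iff] at h ⊢
          intro y hy
          obtain ⟨t1, ht1, ht1'⟩ := h y hy
          obtain ⟨t2, ht2, ht2'⟩ := h _ ht1.1
          obtain ⟨c, hc, hc'⟩ := chain_rolle hD (j := j) (by omega) ht2.2
            (Set.Icc_subset_Icc ht2'.1.1 ht1'.1.2) ht2'.2 ht1'.2
          exact ⟨c, ⟨ht2.1.trans hc.1, hc.2.trans ht1.2⟩,
            ⟨ht2'.1.1.trans hc.1.le, hc.2.le.trans ht1'.1.2⟩, hc'⟩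
      exact fun j hj => hlim j hj ((hall j hj).filter_mono (nhdsWithin_mono _ (fun y hy => ne_of_gt hy)))
  obtain ⟨K, hK, hG⟩ := chain_gronwall a N L
  intro j hj t ht
  have h := hG D S T 0 hN hD (by simpa using hDN) x hx t ht
  have h0 : ∑ j ∈ Finset.range N, (D j x) ^ 2 = 0 :=
    Finset.sum_eq_zero fun i hi => by simp [hxz i (Finset.mem_range.1 hi)]
  rw [h0] at h
  have h1 : (D j t) ^ 2 ≤ ∑ j ∈ Finset.range N, (D j t) ^ 2 :=
    Finset.single_le_sum (f := fun j => (D j t) ^ 2) (fun _ _ => sq_nonneg _) (Finset.mem_range.2 hj)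
  have h2 : (D j t) ^ 2 ≤ 0 := by simp at h; linarith
  exact pow_eq_zero_iff (two_ne_zero) |>.1 (le_antisymm h2 (sq_nonneg _))

lemma hasDerivAt_exp_mul (c x : ℝ) : HasDerivAt (fun t => exp (c * t)) (c * exp (c * x)) x := by
  have := ((hasDerivAt_id x).const_mul c).exp
  simp only [id, mul_one] at this
  exact this.congr_deriv (by ring)

/-- If the zeros of `y` reach `-∞`, then `y` decays at least as fast as `(∂ - a) y`, at any
non-resonant exponential rate. -/
lemma decay_of_zeros {y g : ℝ → ℝ} {a σ K T : ℝ} (hK : 0 ≤ K) (hσ : σ ≠ a)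
    (hy : ContinuousOn y (Set.Iic T)) (hy' : ∀ t < T, HasDerivAt y (a * y t + g t) t)
    (hz : ∀ s, ∃ t < s, y t = 0) (hg : ∀ t < T, |g t| ≤ K * exp (σ * t)) :
    (a + 1 ≤ σ → ∀ t ≤ T, |y t| ≤ K * exp (σ * t)) ∧
    ∃ K', 0 ≤ K' ∧ ∀ t ≤ T, |y t| ≤ K' * exp (σ * t) := by
  have hleft : ∀ κ, 0 < κ → a + κ ≤ σ → ∀ t ≤ T, |y t| ≤ K / κ * exp (σ * t) := by
    intro κ hκ hκ' t ht
    obtain ⟨s, hs, hs0⟩ := hz t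
    have := fo_left (y := y) (g := g) (ρ := fun t => exp (σ * t)) (ρ' := fun t => σ * exp (σ * t))
      (S := s) (T := T) (a := a) (G := K) (κ := κ) hκ (hy.mono fun x hx => hx.2)
      (fun x hx => hy' x hx.2) (fun x => hasDerivAt_exp_mul σ x) (fun x => (exp_pos _).le)
      (fun x => mul_le_mul_of_nonneg_right hκ' (exp_pos _).le) (fun x hx => hg x hx.2) hK t
      ⟨hs.le, ht⟩
    simpa [hs0] using this
  refine ⟨fun h t ht => by simpa using hleft 1 one_pos h t ht, ?_⟩
  rcases lt_or_gt_of_ne hσ with h | h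
  · refine ⟨K / (a - σ) + exp (-σ * T) * |y T|, ?_, ?_⟩
    · have : 0 < a - σ := by linarith
      positivity
    intro t ht
    have := fo_right (y := y) (g := g) (ρ := fun t => exp (σ * t)) (ρ' := fun t => σ * exp (σ * t))
      (S := t) (T := T) (a := a) (G := K) (κ := a - σ) (by linarith) (hy.mono fun x hx => hx.2)
      (fun x hx => hy' x hx.2) (fun x => hasDerivAt_exp_mul σ x) (fun x => (exp_pos _).le)
      (fun x => by ring_nf; rfl) (fun x hx => hg x hx.2) hK t ⟨le_rfl, ht⟩
    have h2 : exp (-(a * (T - t))) ≤ exp (-σ * T) * exp (σ * t) := by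
      rw [← exp_add]
      apply exp_le_exp.2
      nlinarith
    nlinarith [abs_nonneg (y T)]
  · exact ⟨K / (σ - a), by have : 0 < σ - a := by linarith
                           positivity, hleft (σ - a) (by linarith) (by linarith)⟩

/-- If the zeros of `D 0` reach `-∞` and `|D N| ≤ C e^{γ t} |D 0|`, then the decay rate improves
indefinitely and `D 0` vanishes near `-∞`. -/
lemma chain_zero_of_zeros_atBot {a : ℕ → ℝ} {N : ℕ} {D : ℕ → ℝ → ℝ} {T0 C γ : ℝ} (hγ : 0 < γ)
    (hC : 0 < C) (hD : ChainOn a N D (Set.Iic T0)) (hN : 0 < N)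
    (hz : ∀ s, ∃ t < s, D 0 t = 0) (hb : ∀ t ≤ T0, |D 0 t| ≤ C)
    (hDN : ∀ t < T0, |D N t| ≤ C * exp (γ * t) * |D 0 t|) :
    ∃ T ≤ T0, ∀ t ≤ T, D 0 t = 0 := by
  have hzj : ∀ j ≤ N, ∀ s, ∃ t < s, D j t = 0 := by
    intro j
    induction j with
    | zero => exact fun _ => hz
    | succ j ih =>
      intro hj s
      obtain ⟨t1, ht1, ht1'⟩ := ih (by omega) (min s T0)
      obtain ⟨t2, ht2, ht2'⟩ := ih (by omega) t1
      obtain ⟨c, hc, hc'⟩ := chain_rolle hD (j := j) (by omega) ht2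
        (fun x hx => hx.2.trans (ht1.le.trans (min_le_right _ _))) ht2' ht1'
      exact ⟨c, hc.2.trans (ht1.trans_le (min_le_left _ _)), hc'⟩
  have hder : ∀ j < N, ∀ t < T0, HasDerivAt (D j) (a j * D j t + D (j + 1) t) t :=
    fun j hj t ht => hD.2 j hj t (by simpa using ht)
  -- one round trip through the chain
  have round : ∀ σ K T, 0 ≤ K → T ≤ T0 → (∀ t < T, |D N t| ≤ K * exp (σ * t)) →
      (∀ j < N, σ ≠ a j) → ∃ K', ∀ t ≤ T, |D 0 t| ≤ K' * exp (σ * t) := by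
    intro σ K T hK hT hg hne
    have : ∀ i < N, ∃ K', 0 ≤ K' ∧ ∀ t ≤ T, |D (N - (i + 1)) t| ≤ K' * exp (σ * t) := by
      intro i
      induction i with
      | zero =>
        intro hi
        refine (decay_of_zeros hK (hne (N - 1) (by omega)) ((hD.1 (N - 1) (by omega)).mono
          (Set.Iic_subset_Iic.2 hT)) (g := D N) (fun t ht => ?_) (hzj _ (by omega)) hg).2
        have := hder (N - 1) (by omega) t (by linarith)
        rwa [Nat.sub_add_cancel hN] at this
      | succ i ih =>
        intro hi
        obtain ⟨K', hK', h⟩ := ih (by omega)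
        refine (decay_of_zeros hK' (hne (N - (i + 1 + 1)) (by omega)) ((hD.1 _ (by omega)).mono
          (Set.Iic_subset_Iic.2 hT)) (g := D (N - (i + 1))) (fun t ht => ?_) (hzj _ (by omega))
          (fun t ht => h t ht.le)).2
        have := hder (N - (i + 1 + 1)) (by omega) t (by linarith)
        rwa [show N - (i + 1 + 1) + 1 = N - (i + 1) by omega] at this
    obtain ⟨K', _, h⟩ := this (N - 1) (by omega)
    rw [show N - (N - 1 + 1) = 0 by omega] at h
    exact ⟨K', h⟩
  have lower : ∀ σ σ' K, σ ≤ σ' → (∀ t ≤ T0, |D 0 t| ≤ K * exp (σ' * t)) →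
      ∀ t ≤ T0, |D 0 t| ≤ K * exp ((σ' - σ) * T0) * exp (σ * t) := by
    intro σ σ' K hσ h t ht
    have hK : 0 ≤ K := by
      have := (abs_nonneg _).trans (h T0 le_rfl)
      exact nonneg_of_mul_nonneg_left this (exp_pos _)
    refine (h t ht).trans ?_
    rw [mul_assoc, ← exp_add]
    gcongr
    nlinarith
  have hfin : (a '' Set.Iio N).Finite := (Set.finite_Iio N).image a
  have hP : ∀ n : ℕ, ∀ σ < n * γ, ∃ K, ∀ t ≤ T0, |D 0 t| ≤ K * exp (σ * t) := by
    intro n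
    induction n with
    | zero =>
      intro σ hσ
      exact ⟨_, lower σ 0 C (by simpa using hσ.le) (by simpa using hb)⟩
    | succ n ih =>
      intro σ hσ
      push_cast at hσ
      obtain ⟨σ', hσ', hna⟩ := ((Set.Ioo_infinite hσ).sdiff hfin).nonempty
      obtain ⟨K, hK⟩ := ih (σ' - γ) (by linarith [hσ'.2])
      have hK0 : 0 ≤ K := by
        have := (abs_nonneg _).trans (hK T0 le_rfl)
        exact nonneg_of_mul_nonneg_left this (exp_pos _)
      obtain ⟨K', hK'⟩ := round σ' (C * K) T0 (by positivity) le_rfl (by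
        intro t ht
        refine (hDN t ht).trans ?_
        calc C * exp (γ * t) * |D 0 t| ≤ C * exp (γ * t) * (K * exp ((σ' - γ) * t)) := by
              gcongr; exact hK t ht.le
          _ = C * K * (exp (γ * t) * exp ((σ' - γ) * t)) := by ring
          _ = _ := by rw [← exp_add]; ring_nf) (fun j hj h => hna ⟨j, hj, h.symm⟩)
      exact ⟨_, lower σ σ' K' hσ'.1.le hK'⟩
  -- contraction at a rate exceeding all exponents
  obtain ⟨σ, hσ⟩ : ∃ σ, ∀ j < N, a j + 1 ≤ σ := by
    refine ⟨(∑ j ∈ Finset.range N, |a j|) + 1, fun j hj => ?_⟩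
    have := Finset.single_le_sum (f := fun j => |a j|) (fun _ _ => abs_nonneg _)
      (Finset.mem_range.2 hj)
    have h2 := le_abs_self (a j)
    linarith
  obtain ⟨T, hT, hTs⟩ : ∃ T ≤ T0, C * exp (γ * T) ≤ 1 / 2 := by
    have h1 : Tendsto (fun T => C * exp (γ * T)) atBot (𝓝 (C * 0)) :=
      (tendsto_exp_atBot.comp (tendsto_id.const_mul_atBot hγ)).const_mul C
    rw [mul_zero] at h1
    have h2 := (h1.eventually_le_const (show (0 : ℝ) < 1 / 2 by norm_num)).and (eventually_le_atBot T0)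
    obtain ⟨T, h⟩ := h2.exists
    exact ⟨T, h.2, h.1⟩
  obtain ⟨n, hn⟩ := exists_nat_gt (σ / γ)
  obtain ⟨K, hK⟩ := hP n σ (by rwa [div_lt_iff₀ hγ] at hn)
  have hK0 : 0 ≤ K := by
    have := (abs_nonneg _).trans (hK T0 le_rfl)
    exact nonneg_of_mul_nonneg_left this (exp_pos _)
  have hcontr : ∀ i : ℕ, ∀ t ≤ T, |D 0 t| ≤ K * (1 / 2) ^ i * exp (σ * t) := by
    intro i
    induction i with
    | zero => intro t ht; simpa using hK t (ht.trans hT)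
    | succ i ih =>
      have hg : ∀ t < T, |D N t| ≤ K * (1 / 2) ^ (i + 1) * exp (σ * t) := by
        intro t ht
        refine (hDN t (by linarith)).trans ?_
        have h1 : C * exp (γ * t) ≤ 1 / 2 := by
          refine le_trans ?_ hTs
          gcongr
        calc C * exp (γ * t) * |D 0 t| ≤ 1 / 2 * (K * (1 / 2) ^ i * exp (σ * t)) := by
              gcongr; exact ih t ht.le
          _ = _ := by ring
      have hall : ∀ l < N, ∀ t ≤ T, |D (N - (l + 1)) t| ≤ K * (1 / 2) ^ (i + 1) * exp (σ * t) := by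
        intro l
        induction l with
        | zero =>
          intro hl
          refine (decay_of_zeros (a := a (N - 1)) (by positivity) (by
            have := hσ (N - 1) (by omega); intro h; linarith) ((hD.1 (N - 1) (by omega)).mono
            (Set.Iic_subset_Iic.2 hT)) (g := D N) (fun t ht => ?_) (hzj _ (by omega)) hg).1
            (hσ _ (by omega))
          have := hder (N - 1) (by omega) t (by linarith)
          rwa [Nat.sub_add_cancel hN] at this
        | succ l ihl =>
          intro hl
          have h := ihl (by omega)
          refine (decay_of_zeros (a := a (N - (l + 1 + 1))) (by positivity) (by
            have := hσ (N - (l + 1 + 1)) (by omega); intro h; linarith) ((hD.1 _ (by omega)).mono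
            (Set.Iic_subset_Iic.2 hT)) (g := D (N - (l + 1))) (fun t ht => ?_) (hzj _ (by omega))
            (fun t ht => h t ht.le)).1 (hσ _ (by omega))
          have := hder (N - (l + 1 + 1)) (by omega) t (by linarith)
          rwa [show N - (l + 1 + 1) + 1 = N - (l + 1) by omega] at this
      have h := hall (N - 1) (by omega)
      rwa [show N - (N - 1 + 1) = 0 by omega] at h
  refine ⟨T, hT, fun t ht => ?_⟩
  have h1 : Tendsto (fun i : ℕ => K * (1 / 2) ^ i * exp (σ * t)) atTop (𝓝 (K * 0 * exp (σ * t))) :=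
    ((tendsto_pow_atTop_nhds_zero_of_lt_one (by norm_num) (by norm_num)).const_mul K).mul_const _
  have h2 := ge_of_tendsto' h1 (fun i => hcontr i t ht)
  simpa using h2

/-! ### Counting sign changes -/

/-- `Alt y I s m`: the function `y` has `m` points in `I`, in increasing order, at which its signs
alternate, starting with the sign of `s`. -/
def Alt (y : ℝ → ℝ) (I : Set ℝ) (s : ℝ) (m : ℕ) : Prop :=
  ∃ x : ℕ → ℝ, (∀ i, i + 1 < m → x i < x (i + 1)) ∧ ∀ i < m, x i ∈ I ∧ 0 < s * (-1) ^ i * y (x i)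

/-- If the increments of `e^{-a t} y` between successive points alternate in sign, then so does
`(∂ - a) y` at intermediate points. -/
lemma alt_of_drops {y g : ℝ → ℝ} {J : Set ℝ} {a s : ℝ} {m : ℕ} (hJ : J.OrdConnected)
    (hy : ContinuousOn y J) (hy' : ∀ t ∈ interior J, HasDerivAt y (a * y t + g t) t)
    (x : ℕ → ℝ) (hx : ∀ i < m, x i < x (i + 1)) (hxJ : ∀ i ≤ m, x i ∈ J)
    (hd : ∀ i < m, 0 < s * (-1) ^ i *
      (exp (-a * x (i + 1)) * y (x (i + 1)) - exp (-a * x i) * y (x i))) :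
    Alt g (interior J) s m := by
  have h : ∀ i, ∃ c, i < m → c ∈ Set.Ioo (x i) (x (i + 1)) ∧ c ∈ interior J ∧
      0 < s * (-1) ^ i * g c := by
    intro i
    by_cases hi : i < m
    · have hsub : Set.Icc (x i) (x (i + 1)) ⊆ J := hJ.out (hxJ i hi.le) (hxJ (i + 1) hi)
      have hsub' : Set.Ioo (x i) (x (i + 1)) ⊆ interior J := by
        rw [← interior_Icc]; exact interior_mono hsub
      obtain ⟨c, hc, h⟩ := chain_mvt (hx i hi) (hy.mono hsub) (fun t ht => hy' t (hsub' ht))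
      refine ⟨c, fun _ => ⟨hc, hsub' hc, ?_⟩⟩
      have h1 := hd i hi
      rw [← h] at h1
      have h2 : 0 < exp (-a * c) * (x (i + 1) - x i) :=
        mul_pos (exp_pos _) (sub_pos.2 (hx i hi))
      have h3 : s * (-1) ^ i * (exp (-a * c) * g c * (x (i + 1) - x i)) =
        (s * (-1) ^ i * g c) * (exp (-a * c) * (x (i + 1) - x i)) := by ring
      rw [h3] at h1
      exact pos_of_mul_pos_left h1 h2.le
    · exact ⟨0, fun h => absurd h hi⟩
  choose c hc using h
  exact ⟨c, fun i hi => ((hc i (by omega)).1.2).trans ((hc (i + 1) hi).1.1),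
    fun i hi => (hc i hi).2⟩

/-- `e^{-a t} y` takes values of smaller size further to the right. -/
def GainR (y : ℝ → ℝ) (a : ℝ) (J : Set ℝ) : Prop :=
  ∀ x ∈ interior J, y x ≠ 0 → ∃ x' ∈ J, x < x' ∧ |exp (-a * x') * y x'| < |exp (-a * x) * y x|

/-- `e^{-a t} y` takes values of smaller size further to the left. -/
def GainL (y : ℝ → ℝ) (a : ℝ) (J : Set ℝ) : Prop :=
  ∀ x ∈ interior J, y x ≠ 0 → ∃ x' ∈ J, x' < x ∧ |exp (-a * x') * y x'| < |exp (-a * x) * y x|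

lemma sign_sub_pos {σ z z' : ℝ} (hσ : |σ| ≠ 0) (h : 0 < σ * z) (h' : |z'| < |z|) :
    0 < σ * (z - z') := by
  have h1 : |σ * z'| < σ * z := by
    rw [← abs_of_pos h, abs_mul, abs_mul]
    exact mul_lt_mul_of_pos_left h' (lt_of_le_of_ne (abs_nonneg _) hσ.symm)
  have := (abs_lt.1 h1).2
  linarith

section steps

variable {y g : ℝ → ℝ} {J : Set ℝ} {a s : ℝ} {m : ℕ}

/-- A gain on the right keeps the length of the alternation but flips its leading sign: each sign of
`y` is followed by a drop of `e^{-a t} |y|` or by a passage to the opposite sign. -/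
lemma alt_right (hJ : J.OrdConnected) (hy : ContinuousOn y J)
    (hy' : ∀ t ∈ interior J, HasDerivAt y (a * y t + g t) t) (hR : GainR y a J)
    (h : Alt y (interior J) s m) : Alt g (interior J) (-s) m := by
  rcases m with _ | m
  · exact ⟨fun _ => 0, by simp, by simp⟩
  obtain ⟨x, hx, hxI⟩ := h
  have hm := hxI m (by omega)
  obtain ⟨x', hx'J, hlt, hx'⟩ := hR (x m) hm.1 (fun h => by rw [h] at hm; simp at hm)
  refine alt_of_drops (y := y) (a := a) hJ hy hy' (fun i => if i ≤ m then x i else x') ?_ ?_ ?_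
  · intro i hi
    rcases Nat.lt_succ_iff_lt_or_eq.1 hi with h | rfl
    · simp [h.le, Nat.succ_le_of_lt h]; exact hx i (by omega)
    · simpa using hlt
  · intro i hi
    by_cases h : i ≤ m
    · simp [h]; exact interior_subset (hxI i (by omega)).1
    · simpa [h] using hx'J
  · intro i hi
    rcases Nat.lt_succ_iff_lt_or_eq.1 hi with h | rfl
    · simp only [h.le, Nat.succ_le_of_lt h, if_true]
      have h1 := mul_pos (hxI i (by omega)).2 (exp_pos (-a * x i))
      have h2 := mul_pos (hxI (i + 1) (by omega)).2 (exp_pos (-a * x (i + 1)))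
      rw [pow_succ] at h2
      nlinarith
    · simp only [le_refl, if_true, show ¬ (i + 1 ≤ i) by omega, if_false]
      have h1 := mul_pos hm.2 (exp_pos (-a * x i))
      have := sign_sub_pos (σ := s * (-1) ^ i) (z := exp (-a * x i) * y (x i)) (z' := exp (-a * x') * y x')
        (by intro h; rw [abs_eq_zero] at h; rw [h] at hm; simp at hm) (by linarith) hx'
      linarith

/-- A gain on the left keeps the leading sign; an additional sign change appears if there is also a
gain on the right. -/
lemma alt_left_aux (hL : GainL y a J) (hs : s ≠ 0)
    (h : Alt y (interior J) s (m + 1)) :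
    ∃ x : ℕ → ℝ, (∀ i < m + 1, x i < x (i + 1)) ∧ x 0 ∈ J ∧ (∀ i ≤ m, x (i + 1) ∈ interior J) ∧
      (0 < s * (-1) ^ m * y (x (m + 1))) ∧
      ∀ i < m + 1, 0 < s * (-1) ^ i *
        (exp (-a * x (i + 1)) * y (x (i + 1)) - exp (-a * x i) * y (x i)) := by
  obtain ⟨x, hx, hxI⟩ := h
  have h0 := hxI 0 (by omega)
  obtain ⟨x', hx'J, hlt, hx'⟩ := hL (x 0) h0.1 (fun h => by rw [h] at h0; simp at h0)
  refine ⟨fun i => if i = 0 then x' else x (i - 1), ?_, by simpa using hx'J, ?_, ?_, ?_⟩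
  · intro i hi
    rcases i with _ | i
    · simpa using hlt
    · simpa using hx i (by omega)
  · intro i hi
    simpa using (hxI i (by omega)).1
  · simpa using (hxI m (by omega)).2
  · intro i hi
    rcases i with _ | i
    · simp only [zero_add, one_ne_zero, if_false, if_true, Nat.sub_self, pow_zero, mul_one]
      exact sign_sub_pos (by simpa using hs) (by
        have := mul_pos h0.2 (exp_pos (-a * x 0)); rw [pow_zero, mul_one] at this; linarith) hx'
    · simp only [Nat.add_one_ne_zero, if_false, Nat.add_sub_cancel]
      have h1 := mul_pos (hxI i (by omega)).2 (exp_pos (-a * x i))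
      have h2 := mul_pos (hxI (i + 1) (by omega)).2 (exp_pos (-a * x (i + 1)))
      rw [pow_succ] at h2 ⊢
      nlinarith

/-- A gain on the left passes an alternation of `y` to `(∂ - a) y` with the same leading sign. -/
lemma alt_left (hJ : J.OrdConnected) (hy : ContinuousOn y J)
    (hy' : ∀ t ∈ interior J, HasDerivAt y (a * y t + g t) t) (hL : GainL y a J) (hs : s ≠ 0)
    (h : Alt y (interior J) s m) : Alt g (interior J) s m := by
  rcases m with _ | m
  · exact ⟨fun _ => 0, by simp, by simp⟩
  obtain ⟨x, hx, hx0, hxJ, _, hd⟩ := alt_left_aux hL hs h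
  refine alt_of_drops (y := y) (a := a) hJ hy hy' x hx ?_ hd
  intro i hi
  rcases i with _ | i
  · exact hx0
  · exact interior_subset (hxJ i (by omega))

/-- Gains on both sides lengthen the alternation by one. -/
lemma alt_both (hJ : J.OrdConnected) (hy : ContinuousOn y J)
    (hy' : ∀ t ∈ interior J, HasDerivAt y (a * y t + g t) t) (hL : GainL y a J) (hR : GainR y a J)
    (hs : s ≠ 0) (hm : 0 < m)
    (h : Alt y (interior J) s m) : Alt g (interior J) s (m + 1) := by
  obtain ⟨m, rfl⟩ : ∃ m', m = m' + 1 := ⟨m - 1, by omega⟩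
  obtain ⟨x, hx, hx0, hxJ, hlast, hd⟩ := alt_left_aux hL hs h
  obtain ⟨x', hx'J, hlt, hx'⟩ := hR (x (m + 1)) (hxJ m le_rfl) (fun h => by
    rw [h] at hlast; simp at hlast)
  refine alt_of_drops (y := y) (a := a) hJ hy hy' (fun i => if i ≤ m + 1 then x i else x') ?_ ?_ ?_
  · intro i hi
    rcases Nat.lt_succ_iff_lt_or_eq.1 hi with h | rfl
    · simpa [h.le, Nat.succ_le_of_lt h, Nat.le_of_lt_succ h] using hx i h
    · simpa using hlt
  · intro i hi
    by_cases h : i ≤ m + 1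
    · simp only [h, if_true]
      rcases i with _ | i
      · exact hx0
      · exact interior_subset (hxJ i (by omega))
    · simpa [h] using hx'J
  · intro i hi
    rcases Nat.lt_succ_iff_lt_or_eq.1 hi with h | rfl
    · simpa only [h.le, Nat.succ_le_of_lt h, if_true] using hd i h
    · simp only [le_refl, if_true, show ¬ (m + 1 + 1 ≤ m + 1) by omega, if_false]
      have h1 := mul_pos hlast (exp_pos (-a * x (m + 1)))
      have := sign_sub_pos (σ := s * (-1) ^ m) (z := exp (-a * x (m + 1)) * y (x (m + 1)))
        (z' := exp (-a * x') * y x')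
        (by intro h; rw [abs_eq_zero] at h; rw [h] at hlast; simp at hlast) (by linarith) hx'
      rw [pow_succ]
      linarith

end steps

/-- Two alternations of length `m` with opposite leading signs contain one of length `m + 1`:
compare their starting points and put the earlier one in front of the other alternation. -/
lemma Alt.combine {y : ℝ → ℝ} {I : Set ℝ} {s : ℝ} {m : ℕ} (hm : 0 < m) (h1 : Alt y I s m)
    (h2 : Alt y I (-s) m) : Alt y I s (m + 1) ∨ Alt y I (-s) (m + 1) := by
  have key : ∀ (s : ℝ) (x z : ℕ → ℝ), (∀ i, i + 1 < m → z i < z (i + 1)) →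
      x 0 ∈ I → 0 < s * y (x 0) →
      (∀ i < m, z i ∈ I ∧ 0 < (-s) * (-1) ^ i * y (z i)) → x 0 < z 0 → Alt y I s (m + 1) := by
    intro s x z hz hx hx' hz' hlt
    refine ⟨fun i => if i = 0 then x 0 else z (i - 1), ?_, ?_⟩
    · intro i hi
      rcases i with _ | i
      · simpa using hlt
      · simpa using hz i (by omega)
    · intro i hi
      rcases i with _ | i
      · simpa using ⟨hx, hx'⟩
      · have := hz' i (by omega)
        simp only [Nat.add_one_ne_zero, if_false, Nat.add_sub_cancel, pow_succ]
        exact ⟨this.1, by linarith [this.2]⟩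
  obtain ⟨x, hx, hxI⟩ := h1
  obtain ⟨z, hz, hzI⟩ := h2
  have hx0 := hxI 0 hm
  have hz0 := hzI 0 hm
  simp only [pow_zero, mul_one] at hx0 hz0
  rcases lt_trichotomy (x 0) (z 0) with h | h | h
  · exact Or.inl (key s x z hz hx0.1 hx0.2 hzI h)
  · rw [h] at hx0; linarith [hx0.2, hz0.2]
  · exact Or.inr (key (-s) z x hx hz0.1 hz0.2 (by simpa using hxI) h)

lemma Alt.pos_scale {y : ℝ → ℝ} {I : Set ℝ} {s : ℝ} {m : ℕ} (h : Alt y I s m) {y' : ℝ → ℝ}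
    (hy : ∀ σ : ℝ, ∀ t ∈ I, 0 < σ * y t → 0 < σ * y' t) : Alt y' I s m := by
  obtain ⟨x, hx, hxI⟩ := h
  exact ⟨x, hx, fun i hi => ⟨(hxI i hi).1, hy _ _ (hxI i hi).1 (hxI i hi).2⟩⟩

/-- Arbitrarily long alternations produce infinitely many zeros. -/
lemma zeros_infinite_of_alt {y : ℝ → ℝ} {I : Set ℝ} (hI : I.OrdConnected) (hy : ContinuousOn y I)
    (h : ∀ m, 0 < m → ∃ s : ℝ, s ≠ 0 ∧ Alt y I s m) : {t | t ∈ I ∧ y t = 0}.Infinite := by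
  intro hfin
  obtain ⟨s, hs, x, hx, hxI⟩ := h (hfin.toFinset.card + 2) (by omega)
  set M := hfin.toFinset.card with hM
  have hz : ∀ i, ∃ c, i < M + 1 → c ∈ Set.Ioo (x i) (x (i + 1)) ∧ c ∈ I ∧ y c = 0 := by
    intro i
    by_cases hi : i < M + 1
    · have hsub : Set.Icc (x i) (x (i + 1)) ⊆ I := hI.out (hxI i (by omega)).1 (hxI (i + 1) (by omega)).1
      have hlt := hx i (by omega)
      have h1 := (hxI i (by omega)).2
      have h2 := (hxI (i + 1) (by omega)).2
      rw [pow_succ] at h2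
      have hc : ContinuousOn (fun t => s * (-1) ^ i * y t) (Set.Icc (x i) (x (i + 1))) :=
        continuousOn_const.mul (hy.mono hsub)
      have := intermediate_value_Ioo' hlt.le hc (show (0 : ℝ) ∈ Set.Ioo _ _ from ⟨by linarith, h1⟩)
      obtain ⟨c, hc, hc0⟩ := this
      refine ⟨c, fun _ => ⟨hc, hsub (Set.Ioo_subset_Icc_self hc), ?_⟩⟩
      have : s * (-1) ^ i ≠ 0 := mul_ne_zero hs (pow_ne_zero _ (by norm_num))
      simpa [this] using hc0
    · exact ⟨0, fun h => absurd h hi⟩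
  choose c hc using hz
  have hmono : ∀ i j, i < j → j < M + 1 → c i < c j := by
    intro i j hij
    induction j, hij using Nat.le_induction with
    | base => exact fun hj => ((hc i (by omega)).1.2).trans ((hc (i + 1) hj).1.1)
    | succ j hij ih => 
      exact fun hj => (ih (by omega)).trans (((hc j (by omega)).1.2).trans ((hc (j + 1) hj).1.1))
  have hcard := Finset.card_le_card_of_injOn (s := Finset.range (M + 1)) (t := hfin.toFinset) c
    (fun i hi => by
      have := hc i (by simpa using hi)
      simpa using this.2) (fun i hi j hj hij => by
      simp at hi hj
      rcases lt_trichotomy i j with h | h | h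
      · exact absurd hij (hmono i j h (by omega)).ne
      · exact h
      · exact absurd hij (hmono j i h (by omega)).ne')
  rw [Finset.card_range] at hcard
  omega

/-- On a left half-line, a chain with exponentially small coefficient has finitely many zeros or
vanishes. -/
lemma chain_zero_Iic {a : ℕ → ℝ} {N : ℕ} {D : ℕ → ℝ → ℝ} {T0 C γ : ℝ} (hγ : 0 < γ)
    (hC : 0 < C) (hD : ChainOn a N D (Set.Iic T0)) (hN : 0 < N)
    (hb : ∀ t ≤ T0, |D 0 t| ≤ C)
    (hDN : ∀ t < T0, |D N t| ≤ C * exp (γ * t) * |D 0 t|)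
    (hinf : {t | t ∈ Set.Iic T0 ∧ D 0 t = 0}.Infinite) : ∀ t ≤ T0, D 0 t = 0 := by
  -- infinitely many zeros in a compact subinterval
  have hcpt : ∀ S, {t | t ∈ Set.Icc S T0 ∧ D 0 t = 0}.Infinite → ∀ t ∈ Set.Icc S T0, D 0 t = 0 := by
    intro S hS
    refine chain_zero_of_infinite (L := C * exp (γ * T0)) hN (hD.mono fun t ht => ht.2)
      (fun t ht => (hDN t ht.2).trans ?_) hS 0 hN
    gcongr
    exact ht.2.le
  by_cases hz : ∀ s, ∃ t < s, D 0 t = 0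
  · obtain ⟨T, hT, hT0⟩ := chain_zero_of_zeros_atBot hγ hC hD hN hz hb hDN
    intro t ht
    rcases le_or_gt t T with h | h
    · exact hT0 t h
    · refine hcpt (T - 1) ?_ t ⟨by linarith, ht⟩
      refine (Set.Icc_infinite (show T - 1 < T by linarith)).mono fun x hx => ?_
      exact ⟨⟨hx.1, hx.2.trans hT⟩, hT0 x hx.2⟩
  · push Not at hz
    obtain ⟨s, hs⟩ := hz
    have hS : ∀ S ≤ s, {t | t ∈ Set.Icc S T0 ∧ D 0 t = 0}.Infinite := by
      intro S hS
      refine hinf.mono fun t ht => ⟨⟨?_, ht.1⟩, ht.2⟩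
      by_contra h
      exact hs t (by linarith) ht.2
    intro t ht
    exact hcpt (min s t) (hS _ (min_le_left _ _)) t ⟨min_le_right _ _, ht⟩

/-- The whole-line version of `chain_zero_Iic`, obtained by applying it also to the reflected chain. -/
lemma chain_zero_univ {a : ℕ → ℝ} {N : ℕ} {D : ℕ → ℝ → ℝ} {C γ : ℝ} (hγ : 0 < γ)
    (hC : 0 < C) (hD : ChainOn a N D Set.univ) (hN : 0 < N)
    (hb : ∀ t, |D 0 t| ≤ C)
    (hDN : ∀ t, |D N t| ≤ C * exp (-γ * |t|) * |D 0 t|)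
    (hinf : {t | t ∈ Set.univ ∧ D 0 t = 0}.Infinite) : ∀ t, D 0 t = 0 := by
  have hcpt : ∀ S T, {t | t ∈ Set.Icc S T ∧ D 0 t = 0}.Infinite → ∀ t ∈ Set.Icc S T, D 0 t = 0 := by
    intro S T hS
    refine chain_zero_of_infinite (L := C) hN (hD.mono fun t ht => Set.mem_univ _)
      (fun t ht => (hDN t).trans ?_) hS 0 hN
    have : exp (-γ * |t|) ≤ 1 := exp_le_one_iff.2 (by nlinarith [abs_nonneg t])
    nlinarith [abs_nonneg (D 0 t), mul_nonneg hC.le (abs_nonneg (D 0 t))]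
  have hun : {t | t ∈ Set.univ ∧ D 0 t = 0} ⊆ {t | t ∈ Set.Iic 0 ∧ D 0 t = 0} ∪
      {t | t ∈ Set.Ici 0 ∧ D 0 t = 0} := by
    intro t ht
    rcases le_total t 0 with h | h
    · exact Or.inl ⟨h, ht.2⟩
    · exact Or.inr ⟨h, ht.2⟩
  rcases Set.infinite_union.1 (hinf.mono hun) with h | h
  · have h0 : ∀ t ≤ 0, D 0 t = 0 := chain_zero_Iic hγ hC (hD.mono (Set.subset_univ _)) hN
      (fun t _ => hb t) (fun t ht => by have := hDN t; rw [abs_of_neg ht] at this; simpa using this) h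
    intro t
    rcases le_total t 0 with h | h
    · exact h0 t h
    · refine hcpt (-1) t ?_ t ⟨by linarith, le_rfl⟩
      refine (Set.Icc_infinite (show (-1 : ℝ) < 0 by norm_num)).mono fun x hx => ?_
      exact ⟨⟨hx.1, hx.2.trans h⟩, h0 x hx.2⟩
  · have h0 : ∀ t ≤ 0, (-1) ^ 0 * D 0 (-t) = 0 :=
      chain_zero_Iic (a := fun j => -a j) (D := fun j t => (-1) ^ j * D j (-t)) hγ hC
      (hD.reflect.mono (Set.subset_univ _)) hN
      (fun t _ => by simpa using hb (-t)) (fun t ht => by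
        have := hDN (-t); rw [abs_neg, abs_of_neg ht] at this
        simpa [abs_mul] using this) (by
        have := h.image (f := fun t => -t) (fun x _ y _ hxy => by simpa using hxy)
        refine this.mono ?_
        rintro _ ⟨t, ht, rfl⟩
        refine ⟨by simpa using ht.1, by simpa using ht.2⟩)
    have h1 : ∀ t, 0 ≤ t → D 0 t = 0 := fun t ht => by simpa using h0 (-t) (by linarith)
    intro t
    rcases le_total 0 t with h | h
    · exact h1 t h
    · refine hcpt t 1 ?_ t ⟨le_rfl, by linarith⟩
      refine (Set.Icc_infinite (show (0 : ℝ) < 1 by norm_num)).mono fun x hx => ?_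
      exact ⟨⟨h.trans hx.1, hx.2⟩, h1 x hx.1⟩

/-! ### Vanishing theorems by sign counting -/

/-- A function whose weighted size tends to zero at `-∞` has a gain on the left. -/
lemma gainL_of_tendsto {y : ℝ → ℝ} {a : ℝ} {J : Set ℝ} (hJ : ∀ x ∈ J, ∀ x' < x, x' ∈ J)
    (h : Tendsto (fun t => exp (-a * t) * y t) atBot (𝓝 0)) : GainL y a J := by
  intro x hx hne
  have h1 : 0 < |exp (-a * x) * y x| := abs_pos.2 (mul_ne_zero (exp_pos _).ne' hne)
  have h2 := h.abs
  rw [abs_zero] at h2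
  obtain ⟨x', h3, h4⟩ := ((h2.eventually_lt_const h1).and (eventually_lt_atBot x)).exists
  exact ⟨x', hJ x (interior_subset hx) x' h4, h4, h3⟩

lemma gainR_of_tendsto {y : ℝ → ℝ} {a : ℝ}
    (h : Tendsto (fun t => exp (-a * t) * y t) atTop (𝓝 0)) : GainR y a Set.univ := by
  intro x hx hne
  have h1 : 0 < |exp (-a * x) * y x| := abs_pos.2 (mul_ne_zero (exp_pos _).ne' hne)
  have h2 := h.abs
  rw [abs_zero] at h2
  obtain ⟨x', h3, h4⟩ := ((h2.eventually_lt_const h1).and (eventually_gt_atTop x)).exists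
  exact ⟨x', Set.mem_univ _, h4, h3⟩

lemma gainR_of_zero {y : ℝ → ℝ} {a : ℝ} (h : y 0 = 0) : GainR y a (Set.Iic 0) := by
  intro x hx hne
  rw [interior_Iic] at hx
  exact ⟨0, Set.self_mem_Iic, hx, by
    rw [h, mul_zero, abs_zero]; exact abs_pos.2 (mul_ne_zero (exp_pos _).ne' hne)⟩

lemma tendsto_exp_mul_atBot {y : ℝ → ℝ} {a C : ℝ} (ha : a < 0) (hy : ∀ t ≤ 0, |y t| ≤ C) :
    Tendsto (fun t => exp (-a * t) * y t) atBot (𝓝 0) := by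
  have h1 : Tendsto (fun t => exp (-a * t) * C) atBot (𝓝 0) := by
    simpa using (tendsto_exp_atBot.comp
      (tendsto_id.const_mul_atBot (show 0 < -a by linarith))).mul_const C
  refine squeeze_zero_norm' ?_ h1
  filter_upwards [eventually_le_atBot 0] with t ht
  rw [norm_mul, norm_of_nonneg (exp_pos _).le]
  gcongr
  exact hy t ht

lemma tendsto_exp_mul_atTop {y : ℝ → ℝ} {a C : ℝ} (ha : 0 < a) (hy : ∀ t, |y t| ≤ C) :
    Tendsto (fun t => exp (-a * t) * y t) atTop (𝓝 0) := by
  have h1 : Tendsto (fun t => exp (-a * t) * C) atTop (𝓝 0) := by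
    simpa using (tendsto_exp_atBot.comp
      (tendsto_id.const_mul_atTop_of_neg (show -a < 0 by linarith))).mul_const C
  refine squeeze_zero_norm (fun t => ?_) h1
  rw [norm_mul, norm_of_nonneg (exp_pos _).le]
  gcongr
  exact hy t

/-- The Dirichlet problem on the half-line `(-∞, 0]` has only the trivial solution, under a sign
condition on `D (2k)`. Going once around the chain turns an alternation of length `m` into one
of length `m + 1`: directly if `k` is even (using `D k 0 = 0`), and after combining it with its
negative if `k` is odd. -/
lemma halfline_zero {a : ℕ → ℝ} {k : ℕ} {D : ℕ → ℝ → ℝ} {C γ : ℝ} (hk : 0 < k) (hγ : 0 < γ)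
    (hC : 0 < C) (hD : ChainOn a (2 * k) D (Set.Iic 0))
    (han : ∀ j, k ≤ j → j < 2 * k → a j < 0) (hb : ∀ j < 2 * k, ∀ t ≤ 0, |D j t| ≤ C)
    (hdir : ∀ j < k, D j 0 = 0) (hev : Even k → D k 0 = 0)
    (hsign : ∀ σ t : ℝ, t < 0 → 0 < σ * D (2 * k) t → 0 < σ * D 0 t)
    (hDN : ∀ t < 0, |D (2 * k) t| ≤ C * exp (γ * t) * |D 0 t|) : ∀ t ≤ 0, D 0 t = 0 := by
  by_contra hne
  push Not at hne
  obtain ⟨t0, ht0, hne⟩ := hne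
  have hJ : (Set.Iic (0 : ℝ)).OrdConnected := Set.ordConnected_Iic
  have hJl : ∀ x ∈ Set.Iic (0 : ℝ), ∀ x' < x, x' ∈ Set.Iic (0 : ℝ) := fun x hx x' h =>
    h.le.trans hx
  have hL : ∀ j, k ≤ j → j < 2 * k → GainL (D j) (a j) (Set.Iic 0) := fun j h1 h2 =>
    gainL_of_tendsto hJl (tendsto_exp_mul_atBot (han j h1 h2) (hb j h2))
  -- first half of the chain: gain on the right, from the boundary zero at `0`
  have hfirst : ∀ s m, Alt (D 0) (interior (Set.Iic 0)) s m → ∀ j ≤ k,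
      Alt (D j) (interior (Set.Iic 0)) ((-1) ^ j * s) m := by
    intro s m h j
    induction j with
    | zero => intro _; simpa using h
    | succ j ih =>
      intro hj
      have := alt_right hJ (hD.1 j (by omega)) (hD.2 j (by omega))
        (gainR_of_zero (hdir j (by omega))) (ih (by omega))
      rwa [show (-1) ^ (j + 1) * s = -((-1) ^ j * s) by rw [pow_succ]; ring]
  -- second half: gain on the left, since the weight `e^{-a j t}` tends to zero at `-∞`
  have hlast : ∀ s m j0, s ≠ 0 → k ≤ j0 → Alt (D j0) (interior (Set.Iic 0)) s m → ∀ j, j0 ≤ j →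
      j ≤ 2 * k → Alt (D j) (interior (Set.Iic 0)) s m := by
    intro s m j0 hs hj0 h j hj
    induction j, hj using Nat.le_induction with
    | base => exact fun _ => h
    | succ j hj ih =>
      intro hj'
      exact alt_left hJ (hD.1 j (by omega)) (hD.2 j (by omega)) (hL j (by omega) (by omega)) hs
        (ih (by omega))
  have hback : ∀ s m, Alt (D (2 * k)) (interior (Set.Iic 0)) s m →
      Alt (D 0) (interior (Set.Iic 0)) s m := fun s m h =>
    h.pos_scale (fun σ t ht => hsign σ t (by simpa using ht))
  have halt : ∀ m, 0 < m → ∃ s : ℝ, s ≠ 0 ∧ Alt (D 0) (interior (Set.Iic 0)) s m := by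
    intro m hm
    induction m, hm using Nat.le_induction with
    | base =>
      refine ⟨D 0 t0, hne, fun _ => t0, by intro i hi; omega, ?_⟩
      intro i hi
      have hi : i = 0 := by omega
      subst hi
      refine ⟨?_, by simpa using hne⟩
      rw [interior_Iic]
      refine lt_of_le_of_ne ht0 ?_
      rintro rfl
      exact hne (hdir 0 hk)
    | succ m hm ih =>
      obtain ⟨s, hs, h⟩ := ih
      have h1 := hfirst s m h k le_rfl
      -- Around the chain the leading sign is flipped `k` times. For even `k` the factor `k`, with its zero
      -- at `0`, supplies the extra sign change; for odd `k` two alternations of opposite sign combine.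
      rcases Nat.even_or_odd k with he | ho
      · rw [he.neg_one_pow, one_mul] at h1
        have h2 := alt_both hJ (hD.1 k (by omega)) (hD.2 k (by omega)) (hL k le_rfl (by omega))
          (gainR_of_zero (hev he)) hs hm h1
        exact ⟨s, hs, hback s _ (hlast s _ (k + 1) hs (by omega) h2 (2 * k) (by omega) le_rfl)⟩
      · rw [ho.neg_one_pow, neg_one_mul] at h1
        have h2 := hback _ _ (hlast (-s) m k (neg_ne_zero.2 hs) le_rfl h1 (2 * k) (by omega) le_rfl)
        rcases h.combine hm h2 with h3 | h3
        · exact ⟨s, hs, h3⟩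
        · exact ⟨-s, neg_ne_zero.2 hs, h3⟩
  have hinf := zeros_infinite_of_alt (by rw [interior_Iic]; exact Set.ordConnected_Iio)
    ((hD.1 0 (by omega)).mono interior_subset) halt
  exact hne (chain_zero_Iic hγ hC hD (by omega) (hb 0 (by omega)) hDN
    (hinf.mono fun t ht => ⟨interior_subset ht.1, ht.2⟩) t0 ht0)

/-- The whole-line counterpart: a bounded solution whose leading coefficient
`lim e^{-a 0 t} D 0 t` at `-∞` vanishes is zero. The extra sign change comes from the first factor. -/
lemma line_zero {a : ℕ → ℝ} {k : ℕ} {D : ℕ → ℝ → ℝ} {C γ : ℝ} (hk : 0 < k) (hγ : 0 < γ)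
    (hC : 0 < C) (hD : ChainOn a (2 * k) D Set.univ) (hap : ∀ j < k, 0 < a j)
    (han : ∀ j, k ≤ j → j < 2 * k → a j < 0) (hb : ∀ j < 2 * k, ∀ t, |D j t| ≤ C)
    (hlead : Tendsto (fun t => exp (-a 0 * t) * D 0 t) atBot (𝓝 0))
    (hsign : ∀ σ t : ℝ, 0 < σ * D (2 * k) t → 0 < σ * D 0 t)
    (hDN : ∀ t, |D (2 * k) t| ≤ C * exp (-γ * |t|) * |D 0 t|) : ∀ t, D 0 t = 0 := by
  by_contra hne
  push Not at hne
  obtain ⟨t0, hne⟩ := hne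
  have hJ : (Set.univ : Set ℝ).OrdConnected := Set.ordConnected_univ
  have hJl : ∀ x ∈ (Set.univ : Set ℝ), ∀ x' < x, x' ∈ (Set.univ : Set ℝ) := by simp
  have hL : ∀ j, k ≤ j → j < 2 * k → GainL (D j) (a j) Set.univ := fun j h1 h2 =>
    gainL_of_tendsto hJl (tendsto_exp_mul_atBot (han j h1 h2) (fun t _ => hb j h2 t))
  have hR : ∀ j < k, GainR (D j) (a j) Set.univ := fun j h1 =>
    gainR_of_tendsto (tendsto_exp_mul_atTop (hap j h1) (hb j (by omega)))
  have hfirst : ∀ s m, Alt (D 1) (interior Set.univ) s m → ∀ j, j + 1 ≤ k →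
      Alt (D (j + 1)) (interior Set.univ) ((-1) ^ j * s) m := by
    intro s m h j
    induction j with
    | zero => intro _; simpa using h
    | succ j ih =>
      intro hj
      have := alt_right hJ (hD.1 (j + 1) (by omega)) (hD.2 (j + 1) (by omega))
        (hR (j + 1) (by omega)) (ih (by omega))
      rwa [show (-1) ^ (j + 1) * s = -((-1) ^ j * s) by rw [pow_succ]; ring]
  have hlast : ∀ s m, s ≠ 0 → Alt (D k) (interior Set.univ) s m → ∀ j, k ≤ j →
      j ≤ 2 * k → Alt (D j) (interior Set.univ) s m := by
    intro s m hs h j hj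
    induction j, hj using Nat.le_induction with
    | base => exact fun _ => h
    | succ j hj ih =>
      intro hj'
      exact alt_left hJ (hD.1 j (by omega)) (hD.2 j (by omega)) (hL j (by omega) (by omega)) hs
        (ih (by omega))
  have halt : ∀ m, 0 < m → ∃ s : ℝ, s ≠ 0 ∧ Alt (D 0) (interior Set.univ) s m := by
    intro m hm
    induction m, hm using Nat.le_induction with
    | base =>
      refine ⟨D 0 t0, hne, fun _ => t0, by intro i hi; omega, ?_⟩
      intro i hi
      have hi : i = 0 := by omega
      subst hi
      exact ⟨by simp, by simpa using hne⟩
    | succ m hm ih =>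
      obtain ⟨s, hs, h⟩ := ih
      -- the vanishing leading coefficient gives the gain on the left for `D 0`
      have h1 := alt_both hJ (hD.1 0 (by omega)) (hD.2 0 (by omega)) (gainL_of_tendsto hJl hlead)
        (hR 0 hk) hs hm h
      have h2 := hfirst s _ h1 (k - 1) (by omega)
      rw [Nat.sub_add_cancel hk] at h2
      have hs' : (-1) ^ (k - 1) * s ≠ 0 := mul_ne_zero (pow_ne_zero _ (by norm_num)) hs
      exact ⟨_, hs', (hlast _ _ hs' h2 (2 * k) (by omega) le_rfl).pos_scale
        (fun σ t _ => hsign σ t)⟩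
  have hinf := zeros_infinite_of_alt (by rw [interior_univ]; exact Set.ordConnected_univ)
    ((hD.1 0 (by omega)).mono interior_subset) halt
  exact hne (chain_zero_univ hγ hC hD (by omega) (hb 0 (by omega)) hDN
    (hinf.mono fun t ht => ⟨interior_subset ht.1, ht.2⟩) t0)

/-! ### The exponents of the Emden–Fowler operator, and exponential decay -/

/-- The characteristic exponents of `t ↦ e^{(m+2k)t} (Δ^k u)(e^t)`: first `m, m + 2, …, m + 2(k-1)`,
then their negatives in reverse order. -/
def expo (m : ℝ) (k j : ℕ) : ℝ :=
  if j < k then m + 2 * j else -(m + 2 * ((2 * k - 1 - j : ℕ) : ℝ))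

lemma expo_lt {m : ℝ} {k j : ℕ} (h : j < k) : expo m k j = m + 2 * j := if_pos h

lemma expo_ge {m : ℝ} {k j : ℕ} (h : k ≤ j) : expo m k j = -(m + 2 * ((2 * k - 1 - j : ℕ) : ℝ)) :=
  if_neg (not_lt.2 h)

lemma expo_zero {m : ℝ} {k : ℕ} (h : 0 < k) : expo m k 0 = m := by rw [expo_lt h]; simp

lemma expo_pos {m : ℝ} {k j : ℕ} (h : j < k) : m ≤ expo m k j := by
  rw [expo_lt h]; have : (0 : ℝ) ≤ j := Nat.cast_nonneg j
  linarith

lemma expo_neg {m : ℝ} {k j : ℕ} (h : k ≤ j) : expo m k j ≤ -m := by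
  rw [expo_ge h]; have : (0 : ℝ) ≤ ((2 * k - 1 - j : ℕ) : ℝ) := Nat.cast_nonneg _
  linarith

lemma expo_symm {m : ℝ} {k j : ℕ} (h : j < k) : expo m k (2 * k - 1 - j) = -expo m k j := by
  rw [expo_lt h, expo_ge (by omega), show 2 * k - 1 - (2 * k - 1 - j) = j by omega]

/-- Exponential decay at `-∞` of a bounded chain with small coefficient. -/
lemma decay_atBot {a : ℕ → ℝ} {N : ℕ} {D : ℕ → ℝ → ℝ} {T0 β κ ε C CR : ℝ}
    (hN : 0 < N) (hκ : 0 < κ) (hκ1 : κ ≤ 1) (hε0 : 0 ≤ ε) (hε : ε * κ⁻¹ ^ N ≤ 1 / 2)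
    (hβ : 0 < β) (hC : 0 < C) (hCR : 0 < CR) (hD : ChainOn a N D (Set.Iic T0))
    (hb : ∀ j < N, ∀ t ≤ T0, |D j t| ≤ C)
    (ha : ∀ j < N, (β + κ ≤ a j ∧ |D j T0| ≤ CR) ∨ a j ≤ -(β + κ))
    (hDN : ∀ t < T0, |D N t| ≤ ε * |D 0 t|) :
    ∀ j < N, ∀ t ≤ T0, |D j t| ≤ 2 * N * κ⁻¹ ^ N * (CR * exp (β * (t - T0))) := by
  intro j hj t ht
  have h1 : Tendsto (fun S => 2 * N * κ⁻¹ ^ N * (CR * exp (β * (t - T0)) + C * exp (-β * (t - S))))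
      atBot (𝓝 (2 * N * κ⁻¹ ^ N * (CR * exp (β * (t - T0)) + C * 0))) := by
    refine ((Tendsto.const_mul _ ?_).const_add _).const_mul _
    refine tendsto_exp_atBot.comp ?_
    have : Tendsto (fun S => β * S + -β * t) atBot atBot :=
      tendsto_atBot_add_const_right _ _ (tendsto_id.const_mul_atBot hβ)
    refine this.congr fun S => by ring
  have h2 : ∀ᶠ S in atBot, |D j t| ≤ 2 * N * κ⁻¹ ^ N *
      (CR * exp (β * (t - T0)) + C * exp (-β * (t - S))) := by
    filter_upwards [eventually_le_atBot t] with S hS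
    refine chain_decay (hS.trans ht) hN hκ hκ1 hε0 hε hβ.le hC hCR (hD.mono fun x hx => hx.2) ?_
      (fun x hx => hDN x hx.2) j hj t ⟨hS, ht⟩
    intro j hj
    rcases ha j hj with h | h
    · exact Or.inl h
    · exact Or.inr ⟨h, hb j hj S (hS.trans ht)⟩
  have := ge_of_tendsto h1 h2
  simpa using this

/-- A small bounded solution of the Dirichlet problem on a half-line vanishes. -/
lemma halfline_small {a : ℕ → ℝ} {N : ℕ} {D : ℕ → ℝ → ℝ} {T0 β κ ε C : ℝ}
    (hN : 0 < N) (hκ : 0 < κ) (hκ1 : κ ≤ 1) (hε0 : 0 ≤ ε) (hε : ε * κ⁻¹ ^ N ≤ 1 / 2)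
    (hβ : 0 < β) (hC : 0 < C) (hD : ChainOn a N D (Set.Iic T0))
    (hb : ∀ j < N, ∀ t ≤ T0, |D j t| ≤ C)
    (ha : ∀ j < N, (β + κ ≤ a j ∧ D j T0 = 0) ∨ a j ≤ -(β + κ))
    (hDN : ∀ t < T0, |D N t| ≤ ε * |D 0 t|) :
    ∀ t ≤ T0, D 0 t = 0 := by
  intro t ht
  have h1 : ∀ CR : ℝ, 0 < CR → |D 0 t| ≤ 2 * N * κ⁻¹ ^ N * (CR * exp (β * (t - T0))) := by
    intro CR hCR
    refine decay_atBot hN hκ hκ1 hε0 hε hβ hC hCR hD hb (fun j hj => ?_) hDN 0 hN t ht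
    rcases ha j hj with h | h
    · exact Or.inl ⟨h.1, by rw [h.2, abs_zero]; exact hCR.le⟩
    · exact Or.inr h
  have h2 : Tendsto (fun CR : ℝ => 2 * N * κ⁻¹ ^ N * (CR * exp (β * (t - T0)))) (𝓝[>] 0)
      (𝓝 (2 * N * κ⁻¹ ^ N * (0 * exp (β * (t - T0))))) :=
    ((tendsto_id.mul_const _).const_mul _).mono_left nhdsWithin_le_nhds
  have h3 := ge_of_tendsto h2 (eventually_nhdsWithin_of_forall h1)
  simpa using h3

/-- The nonlinearity `|s|^q s`. -/
def fnl (q s : ℝ) : ℝ := |s| ^ q * s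

lemma abs_fnl {q s : ℝ} : |fnl q s| = |s| ^ q * |s| := by
  rw [fnl, abs_mul, abs_of_nonneg (rpow_nonneg (abs_nonneg _) _)]

lemma continuous_fnl {q : ℝ} (hq : 0 < q) : Continuous (fnl q) := by
  unfold fnl
  exact (continuous_abs.rpow_const fun _ => Or.inr hq.le).mul continuous_id

lemma hasDerivAt_fnl {q : ℝ} (hq : 0 < q) (s : ℝ) : HasDerivAt (fnl q) ((q + 1) * |s| ^ q) s := by
  rcases eq_or_ne s 0 with rfl | hs
  · rw [abs_zero, zero_rpow hq.ne', mul_zero, hasDerivAt_iff_tendsto_slope]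
    have h : Tendsto (fun s : ℝ => |s| ^ q) (𝓝[≠] 0) (𝓝 0) := by
      have h : Tendsto (fun s : ℝ => |s| ^ q) (𝓝 0) (𝓝 (|0| ^ q)) :=
        (continuous_abs.rpow_const fun _ => Or.inr hq.le).tendsto 0
      rw [abs_zero, zero_rpow hq.ne'] at h
      exact h.mono_left nhdsWithin_le_nhds
    refine h.congr' ?_
    filter_upwards [self_mem_nhdsWithin] with s hs
    have hs : s ≠ 0 := hs
    simp [slope_def_field, fnl, hs]
  · have h1 : HasDerivAt (fun s : ℝ => |s| ^ q) (q * |s| ^ (q - 1) * (SignType.sign s : ℝ)) s := by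
      have := (hasDerivAt_abs hs).rpow_const (p := q) (Or.inl (abs_ne_zero.2 hs))
      exact this.congr_deriv (by ring)
    refine (h1.mul (hasDerivAt_id s)).congr_deriv ?_
    have h2 : (SignType.sign s : ℝ) * s = |s| := sign_mul_self s
    have h3 : |s| ^ (q - 1) * |s| = |s| ^ q := by
      rw [← rpow_add_one (abs_ne_zero.2 hs)]; ring_nf
    simp only [id]
    calc q * |s| ^ (q - 1) * (SignType.sign s : ℝ) * s + |s| ^ q * 1
        = q * (|s| ^ (q - 1) * ((SignType.sign s : ℝ) * s)) + |s| ^ q := by ring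
      _ = _ := by rw [h2, h3]; ring

lemma fnl_strictMono {q : ℝ} (hq : 0 < q) : StrictMono (fnl q) := by
  have hm : Monotone (fnl q) := monotone_of_hasDerivAt_nonneg (fun s => hasDerivAt_fnl hq s)
    (fun s => mul_nonneg (by linarith) (rpow_nonneg (abs_nonneg _) _))
  refine hm.strictMono_of_injective ?_
  intro x y hxy
  have h1 : |fnl q x| = |fnl q y| := by rw [hxy]
  have h0 : ∀ s : ℝ, |fnl q s| = |s| ^ (q + 1) := fun s => by
    rw [abs_fnl, rpow_add_one' (abs_nonneg _) (by linarith)]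
  rw [h0, h0] at h1
  have h2 : |x| = |y| := by
    exact rpow_left_injOn (by linarith : q + 1 ≠ 0) (abs_nonneg x) (abs_nonneg y) h1
  unfold fnl at hxy
  rw [h2] at hxy
  rcases eq_or_ne |y| 0 with h | h
  · rw [h] at h2; rw [abs_eq_zero.1 h, abs_eq_zero.1 h2]
  · exact mul_left_cancel₀ (rpow_pos_of_pos (lt_of_le_of_ne (abs_nonneg _) h.symm) q).ne' hxy

lemma fnl_sign {q : ℝ} (hq : 0 < q) {σ x y : ℝ} (h : 0 < σ * (fnl q x - fnl q y)) :
    0 < σ * (x - y) := by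
  rcases lt_trichotomy x y with h1 | h1 | h1
  · have := fnl_strictMono hq h1
    have : σ < 0 := by by_contra h2; nlinarith
    nlinarith
  · subst h1; simp at h
  · have := fnl_strictMono hq h1
    have : 0 < σ := by by_contra h2; nlinarith
    nlinarith

lemma fnl_lip {q : ℝ} (hq : 0 < q) {x y R : ℝ} (hx : |x| ≤ R) (hy : |y| ≤ R) :
    |fnl q x - fnl q y| ≤ (q + 1) * R ^ q * |x - y| := by
  have := Convex.norm_image_sub_le_of_norm_hasDerivWithin_le (f := fnl q) (s := Set.Icc (-R) R)
    (C := (q + 1) * R ^ q) (fun s _ => (hasDerivAt_fnl hq s).hasDerivWithinAt) (fun s hs => by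
      rw [norm_mul, norm_of_nonneg (by linarith : 0 ≤ q + 1),
        norm_of_nonneg (rpow_nonneg (abs_nonneg _) _)]
      have : |s| ≤ R := abs_le.2 hs
      gcongr) (convex_Icc _ _) (abs_le.1 hy) (abs_le.1 hx)
  simpa using this

/-- The conserved quantity of the Emden–Fowler equation, evaluated at `0` and at `-∞`, yields the
missing boundary condition `D k 0 = 0` (the ODE form of Pohozaev's identity). -/
lemma pohozaev {a : ℕ → ℝ} {k : ℕ} {D : ℕ → ℝ → ℝ} {q : ℝ} (hk : 0 < k) (hq : 0 < q)
    (hD : ChainOn a (2 * k) D (Set.Iic 0)) (ha : ∀ j < k, a (2 * k - 1 - j) = -a j)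
    (heq : ∀ t < 0, D (2 * k) t = fnl q (D 0 t))
    (hlim : ∀ j < 2 * k, Tendsto (D j) atBot (𝓝 0)) (hdir : ∀ j < k, D j 0 = 0) : D k 0 = 0 := by
  -- `H` is a first integral that vanishes at `-∞`; all terms of `H 0` but that with `(D k 0)²` vanish
  set H : ℝ → ℝ := fun t => (∑ j ∈ Finset.range k,
    (-1) ^ j * (D (2 * k - 1 - j) t * (a j * D j t + D (j + 1) t))) +
    (-1) ^ k * (1 / 2 * D k t ^ 2) - 1 / (q + 2) * |D 0 t| ^ (q + 2) with hH
  have hc := hD.1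
  have hHc : ContinuousOn H (Set.Iic 0) := by
    refine ContinuousOn.sub (ContinuousOn.add (continuousOn_finsetSum _ fun j hj => ?_) ?_) ?_
    · have hj := Finset.mem_range.1 hj
      exact continuousOn_const.mul ((hc _ (by omega)).mul
        ((continuousOn_const.mul (hc j (by omega))).add (hc (j + 1) (by omega))))
    · exact continuousOn_const.mul (continuousOn_const.mul ((hc k (by omega)).pow 2))
    · exact continuousOn_const.mul ((hc 0 (by omega)).abs.rpow_const fun _ _ => Or.inr (by linarith))
  have hder : ∀ t < 0, HasDerivAt H 0 t := by
    intro t ht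
    have hd : ∀ j < 2 * k, HasDerivAt (D j) (a j * D j t + D (j + 1) t) t :=
      fun j hj => hD.2 j hj t (by rwa [interior_Iic])
    set G : ℕ → ℝ := fun j => D (2 * k - j) t * (a j * D j t + D (j + 1) t) with hG
    have h1 : ∀ j < k, HasDerivAt (fun t => (-1) ^ j *
        (D (2 * k - 1 - j) t * (a j * D j t + D (j + 1) t))) ((-1) ^ j * (G j + G (j + 1))) t := by
      intro j hj
      have e1 := hd (2 * k - 1 - j) (by omega)
      rw [ha j hj, show 2 * k - 1 - j + 1 = 2 * k - j by omega] at e1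
      refine ((e1.mul (((hd j (by omega)).const_mul (a j)).add (hd (j + 1) (by omega)))).const_mul
        ((-1 : ℝ) ^ j)).congr_deriv ?_
      simp only [hG, show 2 * k - (j + 1) = 2 * k - 1 - j by omega, Pi.add_apply]
      ring
    have h2 : HasDerivAt (fun t => (-1) ^ k * (1 / 2 * D k t ^ 2)) ((-1) ^ k * G k) t := by
      refine ((((hd k (by omega)).fun_pow 2).const_mul (1 / 2)).const_mul ((-1 : ℝ) ^ k)).congr_deriv ?_
      simp only [hG, show 2 * k - k = k by omega]
      push_cast
      ring
    have h3 : HasDerivAt (fun t => 1 / (q + 2) * |D 0 t| ^ (q + 2)) (G 0) t := by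
      have := (hasDerivAt_abs_rpow (D 0 t) (show 1 < q + 2 by linarith)).comp t (hd 0 (by omega))
      refine (this.const_mul (1 / (q + 2))).congr_deriv ?_
      simp only [hG, Nat.sub_zero, heq t ht, fnl]
      rw [show q + 2 - 2 = q by ring]
      have : q + 2 ≠ 0 := by linarith
      field_simp
    have hsum : ∀ K, ∑ j ∈ Finset.range K, (-1) ^ j * (G j + G (j + 1)) = G 0 - (-1) ^ K * G K := by
      intro K
      induction K with
      | zero => simp
      | succ K ih => rw [Finset.sum_range_succ, ih, pow_succ]; ring
    have h4 := ((HasDerivAt.fun_sum (u := Finset.range k)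
      (fun j hj => h1 j (Finset.mem_range.1 hj))).add h2).sub h3
    refine h4.congr_deriv ?_
    rw [hsum]; ring
  have hconst : ∀ t < 0, H t = H 0 := by
    intro t ht
    obtain ⟨c, hc, h⟩ := exists_hasDerivAt_eq_slope H (fun _ => 0) ht
      (hHc.mono fun x hx => hx.2) (fun x hx => hder x hx.2)
    have h1 : 0 - t ≠ 0 := by linarith
    field_simp at h
    linarith
  have hHlim : Tendsto H atBot (𝓝 0) := by
    have : Tendsto H atBot (𝓝 ((∑ j ∈ Finset.range k,
        (-1) ^ j * (0 * (a j * 0 + 0))) +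
        (-1) ^ k * (1 / 2 * (0 : ℝ) ^ 2) - 1 / (q + 2) * |0| ^ (q + 2))) := by
      refine Tendsto.sub (Tendsto.add (tendsto_finsetSum _ fun j hj => ?_) ?_) ?_
      · have hj := Finset.mem_range.1 hj
        exact ((hlim _ (by omega)).mul (((hlim j (by omega)).const_mul _).add
          (hlim (j + 1) (by omega)))).const_mul _
      · exact (((hlim k (by omega)).pow 2).const_mul _).const_mul _
      · exact ((hlim 0 (by omega)).abs.rpow_const (Or.inr (by linarith))).const_mul _
    simpa [zero_rpow (show q + 2 ≠ 0 by linarith)] using this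
  have hH0 : H 0 = 0 := by
    refine tendsto_nhds_unique (tendsto_const_nhds.congr' ?_) hHlim
    filter_upwards [eventually_lt_atBot 0] with t ht using (hconst t ht).symm
  simp only [hH] at hH0
  obtain ⟨l, rfl⟩ : ∃ l, k = l + 1 := ⟨k - 1, by omega⟩
  rw [Finset.sum_range_succ, Finset.sum_eq_zero (fun j hj => by
    have hj := Finset.mem_range.1 hj
    rw [hdir j (by omega), hdir (j + 1) (by omega)]; ring), hdir 0 (by omega),
    hdir l (by omega), show 2 * (l + 1) - 1 - l = l + 1 by omega, abs_zero,
    zero_rpow (show q + 2 ≠ 0 by linarith), pow_succ] at hH0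
  have h5 : (-1 : ℝ) ^ l * (D (l + 1) 0 ^ 2) = 0 := by linarith
  have h6 : (-1 : ℝ) ^ l ≠ 0 := pow_ne_zero _ (by norm_num)
  simpa [h6] using h5

/-! ### Bounded solutions of the limit equation on half-lines -/

lemma abs_fnl_le {q x c : ℝ} (hq : 0 < q) (h : |x| ≤ c) : |fnl q x| ≤ c ^ q * |x| := by
  rw [abs_fnl]
  gcongr

/-- Solutions of `D N = |D 0|^q D 0` tending to zero at `-∞` decay there at any rate below the smallest
exponent. -/
lemma nl_decay_atBot {a : ℕ → ℝ} {N : ℕ} {D : ℕ → ℝ → ℝ} {m q β T0 C : ℝ} (hN : 0 < N)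
    (hq : 0 < q) (hβ : 0 < β) (hβm : β < m) (hC : 0 < C) (ha : ∀ j < N, m ≤ a j ∨ a j ≤ -m)
    (hD : ChainOn a N D (Set.Iic T0)) (hb : ∀ j < N, ∀ t ≤ T0, |D j t| ≤ C)
    (heq : ∀ t < T0, D N t = fnl q (D 0 t)) (hlim : Tendsto (D 0) atBot (𝓝 0)) :
    ∃ C', 0 < C' ∧ ∀ j < N, ∀ t ≤ T0, |D j t| ≤ C' * exp (β * t) := by
  set κ := min (m - β) 1 with hκ
  have hκ0 : 0 < κ := lt_min (by linarith) one_pos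
  have hκ1 : κ ≤ 1 := min_le_right _ _
  have hκm : β + κ ≤ m := by have := min_le_left (m - β) 1; linarith
  set ε := κ ^ N / 2 with hε
  have hε0 : 0 < ε := by positivity
  have hεκ : ε * κ⁻¹ ^ N ≤ 1 / 2 := by
    rw [hε, inv_pow]
    field_simp
    rfl
  obtain ⟨T, hT⟩ : ∃ T ≤ T0, ∀ t ≤ T, |D 0 t| ^ q ≤ ε := by
    have h1 : Tendsto (fun t => |D 0 t| ^ q) atBot (𝓝 0) := by
      have := hlim.abs.rpow_const (p := q) (Or.inr hq.le)
      rwa [abs_zero, zero_rpow hq.ne'] at this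
    have h2 := h1.eventually_le_const hε0
    rw [eventually_atBot] at h2
    obtain ⟨T, hT⟩ := h2
    exact ⟨min T T0, min_le_right _ _, fun t ht => hT t (ht.trans (min_le_left _ _))⟩
  obtain ⟨hTT, hT⟩ := hT
  have hdec := decay_atBot (T0 := T) (β := β) (CR := C) hN hκ0 hκ1 hε0.le hεκ hβ hC hC
    (hD.mono fun x hx => le_trans hx hTT) (fun j hj t ht => hb j hj t (ht.trans hTT))
    (fun j hj => by
      rcases ha j hj with h | h
      · exact Or.inl ⟨by linarith, hb j hj T hTT⟩
      · exact Or.inr (by linarith))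
    (fun t ht => by
      rw [heq t (by linarith), abs_fnl]
      exact mul_le_mul_of_nonneg_right (hT t ht.le) (abs_nonneg _))
  set A : ℝ := 2 * N * κ⁻¹ ^ N with hA
  have hA0 : 0 < A := by
    have : (0 : ℝ) < N := Nat.cast_pos.2 hN
    positivity
  refine ⟨(A + 1) * (C * exp (-(β * T))), by positivity, ?_⟩
  intro j hj t ht
  have e1 : exp (β * (t - T)) = exp (-(β * T)) * exp (β * t) := by rw [← exp_add]; ring_nf
  have e2 : 0 < C * exp (-(β * T)) * exp (β * t) := by positivity
  rcases le_total t T with h | h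
  · have := hdec j hj t h
    rw [e1] at this
    linarith
  · have h1 := hb j hj t ht
    have h2 : 1 ≤ exp (β * (t - T)) := one_le_exp (by nlinarith)
    rw [e1] at h2
    have : 0 ≤ A * (C * exp (-(β * T)) * exp (β * t)) := by positivity
    nlinarith

lemma expo_or (m : ℝ) (k j : ℕ) : m ≤ expo m k j ∨ expo m k j ≤ -m := by
  rcases lt_or_ge j k with h | h
  · exact Or.inl (expo_pos h)
  · exact Or.inr (expo_neg h)

/-- No bounded nontrivial solution of the limit equation on a half-line with Dirichlet data. -/
lemma dirichlet_limit_zero {k : ℕ} {D : ℕ → ℝ → ℝ} {m q C : ℝ} (hk : 0 < k) (hm : 0 < m)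
    (hq : 0 < q) (hC : 0 < C) (hD : ChainOn (expo m k) (2 * k) D (Set.Iic 0))
    (hb : ∀ j < 2 * k, ∀ t ≤ 0, |D j t| ≤ C)
    (heq : ∀ t < 0, D (2 * k) t = fnl q (D 0 t)) (hlim : Tendsto (D 0) atBot (𝓝 0))
    (hdir : ∀ j < k, D j 0 = 0) : ∀ t ≤ 0, D 0 t = 0 := by
  obtain ⟨C', hC', hdec⟩ := nl_decay_atBot (β := m / 2) (by omega) hq (by linarith) (by linarith) hC
    (fun j _ => expo_or m k j) hD hb heq hlim
  have hlim' : ∀ j < 2 * k, Tendsto (D j) atBot (𝓝 0) := by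
    intro j hj
    refine squeeze_zero_norm' (a := fun t => C' * exp (m / 2 * t)) ?_ ?_
    · filter_upwards [eventually_le_atBot 0] with t ht using hdec j hj t ht
    · simpa using (tendsto_exp_atBot.comp
        (tendsto_id.const_mul_atBot (show 0 < m / 2 by linarith))).const_mul C'
  have hDk : D k 0 = 0 := pohozaev hk hq hD (fun j hj => expo_symm hj) heq hlim' hdir
  refine halfline_zero (γ := m / 2 * q) (C := max C (C' ^ q)) hk (by positivity)
    (lt_max_of_lt_left hC) hD (fun j h1 _ => by have := expo_neg (m := m) h1; linarith)
    (fun j hj t ht => (hb j hj t ht).trans (le_max_left _ _)) hdir (fun _ => hDk) ?_ ?_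
  · intro σ t ht h
    rw [heq t ht] at h
    have := fnl_sign hq (σ := σ) (x := D 0 t) (y := 0) (by simpa [fnl] using h)
    simpa using this
  · intro t ht
    rw [heq t ht]
    refine (abs_fnl_le hq (hdec 0 (by omega) t ht.le)).trans ?_
    rw [mul_rpow hC'.le (exp_pos _).le, ← exp_mul, show m / 2 * t * q = m / 2 * q * t by ring]
    gcongr
    exact le_max_right _ _

/-- Exponential bounds at `-∞` are inherited along `y' = a y + g` at every rate that is not blocked by
a smaller positive exponent. -/
lemma fo_atBot {y g : ℝ → ℝ} {a σ G T C : ℝ} (hσ : 0 < σ) (hG : 0 ≤ G)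
    (hy : ContinuousOn y (Set.Iic T)) (hy' : ∀ t < T, HasDerivAt y (a * y t + g t) t)
    (hb : ∀ t ≤ T, |y t| ≤ C) (ha : a < 0 ∨ σ < a) (hg : ∀ t < T, |g t| ≤ G * exp (σ * t)) :
    ∃ K, 0 ≤ K ∧ ∀ t ≤ T, |y t| ≤ K * exp (σ * t) := by
  rcases ha with ha | ha
  · refine ⟨G / (σ - a), div_nonneg hG (by linarith), fun t ht => ?_⟩
    have h1 : Tendsto (fun S => G / (σ - a) * exp (σ * t) + exp (a * (t - S)) * C) atBot
        (𝓝 (G / (σ - a) * exp (σ * t) + 0 * C)) := by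
      refine Tendsto.const_add _ (Tendsto.mul_const _ (tendsto_exp_atBot.comp ?_))
      have : Tendsto (fun S => -a * S + a * t) atBot atBot :=
        tendsto_atBot_add_const_right _ _ (tendsto_id.const_mul_atBot (by linarith))
      refine this.congr fun S => by ring
    have h2 : ∀ᶠ S in atBot, |y t| ≤ G / (σ - a) * exp (σ * t) + exp (a * (t - S)) * C := by
      filter_upwards [eventually_le_atBot t] with S hS
      have := fo_left (y := y) (g := g) (ρ := fun t => exp (σ * t)) (ρ' := fun t => σ * exp (σ * t))
        (S := S) (T := T) (a := a) (G := G) (κ := σ - a) (by linarith) (hy.mono fun x hx => hx.2)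
        (fun x hx => hy' x hx.2) (fun x => hasDerivAt_exp_mul σ x) (fun x => (exp_pos _).le)
        (fun x => by ring_nf; rfl) (fun x hx => hg x hx.2) hG t ⟨hS, ht⟩
      refine this.trans ?_
      gcongr
      exact hb S (hS.trans ht)
    simpa using ge_of_tendsto h1 h2
  · refine ⟨G / (a - σ) + exp (-σ * T) * |y T|, ?_, ?_⟩
    · have : 0 < a - σ := by linarith
      positivity
    intro t ht
    have := fo_right (y := y) (g := g) (ρ := fun t => exp (σ * t)) (ρ' := fun t => σ * exp (σ * t))
      (S := t) (T := T) (a := a) (G := G) (κ := a - σ) (by linarith) (hy.mono fun x hx => hx.2)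
      (fun x hx => hy' x hx.2) (fun x => hasDerivAt_exp_mul σ x) (fun x => (exp_pos _).le)
      (fun x => by ring_nf; rfl) (fun x hx => hg x hx.2) hG t ⟨le_rfl, ht⟩
    have h2 : exp (-(a * (T - t))) ≤ exp (-σ * T) * exp (σ * t) := by
      rw [← exp_add]
      apply exp_le_exp.2
      nlinarith
    nlinarith [abs_nonneg (y T)]

/-- The leading coefficient `lim e^{-m t} D 0 t` at `-∞` exists: `D 1` decays faster than `e^{m t}`. -/
lemma lead_exists {k : ℕ} {D : ℕ → ℝ → ℝ} {m q C : ℝ} (hk : 0 < k) (hm : 0 < m)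
    (hq : 0 < q) (hC : 0 < C) (hD : ChainOn (expo m k) (2 * k) D Set.univ)
    (hb : ∀ j < 2 * k, ∀ t, |D j t| ≤ C)
    (heq : ∀ t, D (2 * k) t = fnl q (D 0 t)) (hlim : Tendsto (D 0) atBot (𝓝 0)) :
    ∃ c, Tendsto (fun t => exp (-m * t) * D 0 t) atBot (𝓝 c) := by
  obtain ⟨σ, hσ1, hσ2⟩ := exists_between (show m < min (m + 2) ((q + 1) * m) from
    lt_min (by linarith) (by nlinarith))
  have hσ3 : σ < m + 2 := hσ2.trans_le (min_le_left _ _)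
  have hσ4 : σ < (q + 1) * m := hσ2.trans_le (min_le_right _ _)
  have hD0 : ChainOn (expo m k) (2 * k) D (Set.Iic 0) := hD.mono (Set.subset_univ _)
  have hβ : σ / (q + 1) < m := by rw [div_lt_iff₀ (by linarith)]; linarith
  obtain ⟨C', hC', hdec⟩ := nl_decay_atBot (β := σ / (q + 1)) (by omega) hq
    (div_pos (by linarith) (by linarith)) hβ hC
    (fun j _ => expo_or m k j) hD0 (fun j hj t _ => hb j hj t) (fun t _ => heq t) hlim
  have hlast : ∀ t ≤ 0, |D (2 * k) t| ≤ C' ^ (q + 1) * exp (σ * t) := by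
    intro t ht
    rw [heq, abs_fnl, ← rpow_add_one' (abs_nonneg _) (by linarith)]
    calc |D 0 t| ^ (q + 1) ≤ (C' * exp (σ / (q + 1) * t)) ^ (q + 1) := by
          gcongr; exact hdec 0 (by omega) t ht
      _ = C' ^ (q + 1) * exp (σ * t) := by
          rw [mul_rpow hC'.le (exp_pos _).le, ← exp_mul]
          congr 2
          have : q + 1 ≠ 0 := by linarith
          field_simp
  have hall : ∀ i < 2 * k, ∃ K, 0 ≤ K ∧ ∀ t ≤ 0, |D (2 * k - i) t| ≤ K * exp (σ * t) := by
    intro i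
    induction i with
    | zero => exact fun _ => ⟨C' ^ (q + 1), by positivity, hlast⟩
    | succ i ih =>
      intro hi
      obtain ⟨K, hK, h⟩ := ih (by omega)
      have hj : 2 * k - i = (2 * k - (i + 1)) + 1 := by omega
      rw [hj] at h
      refine fo_atBot (a := expo m k (2 * k - (i + 1))) (g := D (2 * k - (i + 1) + 1)) (C := C)
        (by linarith) hK (hD0.1 _ (by omega))
        (fun t ht => hD0.2 _ (by omega) t (by simpa using ht)) (fun t _ => hb _ (by omega) t) ?_
        (fun t ht => h t ht.le)
      rcases lt_or_ge (2 * k - (i + 1)) k with h1 | h1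
      · right
        rw [expo_lt h1]
        have : (1 : ℝ) ≤ ((2 * k - (i + 1) : ℕ) : ℝ) := by
          exact_mod_cast (show 1 ≤ 2 * k - (i + 1) by omega)
        linarith
      · left
        have := expo_neg (m := m) h1
        linarith
  obtain ⟨K, hK, h1⟩ := hall (2 * k - 1) (by omega)
  rw [show 2 * k - (2 * k - 1) = 1 by omega] at h1
  have hderiv : ∀ t, HasDerivAt (fun t => exp (-m * t) * D 0 t) (exp (-m * t) * D 1 t) t := by
    intro t
    have := hD.2 0 (by omega) t (by simp)
    rw [expo_zero hk] at this
    exact ((hasDerivAt_exp_mul (-m) t).mul this).congr_deriv (by ring)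
  refine ⟨_, tendsto_limUnder_of_hasDerivAt_of_integrableOn_Iic (a := 0)
    (f' := fun t => exp (-m * t) * D 1 t) (fun t _ => hderiv t) ?_⟩
  have hint : IntegrableOn (fun t => K * exp ((σ - m) * t)) (Set.Iic 0) :=
    (integrableOn_exp_mul_Iic (by linarith) 0).const_mul K
  refine Integrable.mono' hint ?_ ?_
  · have h2 : (fun t => exp (-m * t) * D 1 t) = deriv (fun t => exp (-m * t) * D 0 t) :=
      funext fun t => (hderiv t).deriv.symm
    rw [h2]
    exact (measurable_deriv _).aestronglyMeasurable
  · refine (ae_restrict_iff' measurableSet_Iic).2 (Eventually.of_forall fun t ht => ?_)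
    rw [norm_mul, norm_of_nonneg (exp_pos _).le]
    calc exp (-m * t) * ‖D 1 t‖ ≤ exp (-m * t) * (K * exp (σ * t)) := by
          gcongr; exact h1 t ht
      _ = K * (exp (-m * t) * exp (σ * t)) := by ring
      _ = _ := by rw [← exp_add]; ring_nf

/-! ### Constant-coefficient operators -/

/-- The constant-coefficient differential operator `Q(∂)` applied to `φ`. -/
def opP (Q : Polynomial ℝ) (φ : ℝ → ℝ) (t : ℝ) : ℝ :=
  Q.sum fun i c => c * iteratedDeriv i φ t

lemma opP_eq_sum {Q : Polynomial ℝ} {N : ℕ} (h : Q.natDegree < N) (φ : ℝ → ℝ) (t : ℝ) :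
    opP Q φ t = ∑ i ∈ Finset.range N, Q.coeff i * iteratedDeriv i φ t :=
  Polynomial.sum_over_range' Q (fun i => by simp) N h

lemma opP_one (φ : ℝ → ℝ) : opP 1 φ = φ := by
  funext t
  rw [opP_eq_sum (N := 1) (by simp)]
  simp

lemma natDegree_X_sub_C_mul {Q : Polynomial ℝ} {N : ℕ} (a : ℝ) (h : Q.natDegree < N) :
    ((Polynomial.X - Polynomial.C a) * Q).natDegree < N + 1 := by
  have := Polynomial.natDegree_mul_le (p := Polynomial.X - Polynomial.C a) (q := Q)
  rw [Polynomial.natDegree_X_sub_C] at this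
  omega

lemma hasDerivAt_opP {Q : Polynomial ℝ} {N : ℕ} {φ : ℝ → ℝ} (a : ℝ) (hφ : ContDiff ℝ N φ)
    (h : Q.natDegree < N) (t : ℝ) :
    HasDerivAt (opP Q φ) (a * opP Q φ t + opP ((Polynomial.X - Polynomial.C a) * Q) φ t) t := by
  have h1 : HasDerivAt (fun t => ∑ i ∈ Finset.range N, Q.coeff i * iteratedDeriv i φ t)
      (∑ i ∈ Finset.range N, Q.coeff i * iteratedDeriv (i + 1) φ t) t := by
    refine HasDerivAt.fun_sum fun i hi => HasDerivAt.const_mul _ ?_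
    have hi := Finset.mem_range.1 hi
    rw [iteratedDeriv_succ]
    exact ((hφ.differentiable_iteratedDeriv i (by exact_mod_cast hi)) t).hasDerivAt
  rw [show opP Q φ = fun t => ∑ i ∈ Finset.range N, Q.coeff i * iteratedDeriv i φ t from
    funext fun t => opP_eq_sum h φ t]
  refine h1.congr_deriv ?_
  rw [opP_eq_sum (natDegree_X_sub_C_mul a h)]
  simp only [sub_mul, Polynomial.coeff_sub, Polynomial.coeff_C_mul, Finset.sum_sub_distrib]
  have e1 := Finset.sum_range_succ' (fun i => (Polynomial.X * Q).coeff i * iteratedDeriv i φ t) N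
  have e2 := Finset.sum_range_succ (fun i => a * Q.coeff i * iteratedDeriv i φ t) N
  simp only [Polynomial.coeff_X_mul, Polynomial.coeff_X_mul_zero, zero_mul, add_zero] at e1
  simp only [Polynomial.coeff_eq_zero_of_natDegree_lt h, mul_zero, zero_mul, add_zero, mul_assoc,
    ← Finset.mul_sum] at e2
  simp only [mul_assoc, ← Finset.mul_sum]
  rw [e1, e2]
  ring

/-- The polynomial `∏_{i<j} (X - a i)`. -/
def chainPoly (a : ℕ → ℝ) (j : ℕ) : Polynomial ℝ :=
  ∏ i ∈ Finset.range j, (Polynomial.X - Polynomial.C (a i))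

lemma chainPoly_succ (a : ℕ → ℝ) (j : ℕ) :
    chainPoly a (j + 1) = (Polynomial.X - Polynomial.C (a j)) * chainPoly a j := by
  rw [chainPoly, Finset.prod_range_succ, mul_comm, chainPoly]

lemma natDegree_chainPoly (a : ℕ → ℝ) (j : ℕ) : (chainPoly a j).natDegree < j + 1 := by
  induction j with
  | zero => simp [chainPoly]
  | succ j ih => rw [chainPoly_succ]; exact natDegree_X_sub_C_mul _ ih

lemma opP_chainPoly_zero (a : ℕ → ℝ) (φ : ℝ → ℝ) : opP (chainPoly a 0) φ = φ := by
  simp [chainPoly, opP_one]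

/-- The quasi-derivatives of a smooth function, as constant-coefficient operators. -/
lemma chain_opP (a : ℕ → ℝ) {N : ℕ} {φ : ℝ → ℝ} (hφ : ContDiff ℝ N φ) :
    ChainOn a N (fun j => opP (chainPoly a j) φ) Set.univ := by
  have h : ∀ j < N, ∀ t, HasDerivAt (opP (chainPoly a j) φ)
      (a j * opP (chainPoly a j) φ t + opP (chainPoly a (j + 1)) φ t) t := by
    intro j hj t
    rw [chainPoly_succ]
    exact hasDerivAt_opP (a j) hφ ((natDegree_chainPoly a j).trans_le hj) t
  exact ⟨fun j hj => (continuous_iff_continuousAt.2 fun t => (h j hj t).continuousAt).continuousOn,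
    fun j hj t _ => h j hj t⟩

/-- Quasi-derivatives are determined by `D 0`. -/
lemma chain_unique {a : ℕ → ℝ} {N : ℕ} {D E : ℕ → ℝ → ℝ} {U : Set ℝ} (hU : IsOpen U)
    (hD : ChainOn a N D U) (hE : ChainOn a N E U) (h0 : ∀ t ∈ U, D 0 t = E 0 t) :
    ∀ j ≤ N, ∀ t ∈ U, D j t = E j t := by
  intro j
  induction j with
  | zero => exact fun _ => h0
  | succ j ih =>
    intro hj t ht
    have h1 := hD.2 j (by omega) t (by rwa [hU.interior_eq])
    have h2 := hE.2 j (by omega) t (by rwa [hU.interior_eq])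
    have h3 : D j =ᶠ[𝓝 t] E j := by
      filter_upwards [hU.mem_nhds ht] with x hx using ih (by omega) x hx
    have h4 := h1.unique (h2.congr_of_eventuallyEq h3)
    rw [ih (by omega) t ht] at h4
    linarith

/-- Derivatives are fixed linear combinations of quasi-derivatives. -/
lemma iteratedDeriv_of_chain (a : ℕ → ℝ) : ∃ b : ℕ → ℕ → ℝ, ∀ (N : ℕ) (D : ℕ → ℝ → ℝ),
    ChainOn a N D Set.univ → ∀ j ≤ N, ∀ t,
      iteratedDeriv j (D 0) t = ∑ l ∈ Finset.range (j + 1), b j l * D l t := by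
  have key : ∀ j, ∃ b : ℕ → ℝ, ∀ (N : ℕ) (D : ℕ → ℝ → ℝ), ChainOn a N D Set.univ → j ≤ N → ∀ t,
      iteratedDeriv j (D 0) t = ∑ l ∈ Finset.range (j + 1), b l * D l t := by
    intro j
    induction j with
    | zero => exact ⟨fun _ => 1, fun N D _ _ t => by simp⟩
    | succ j ih =>
      obtain ⟨b, hb⟩ := ih
      refine ⟨fun l => (if l ≤ j then b l * a l else 0) + (if l = 0 then 0 else b (l - 1)), ?_⟩
      intro N D hD hj t
      have h1 : iteratedDeriv j (D 0) = fun t => ∑ l ∈ Finset.range (j + 1), b l * D l t :=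
        funext fun t => hb N D hD (by omega) t
      have h2 : HasDerivAt (fun t => ∑ l ∈ Finset.range (j + 1), b l * D l t)
          (∑ l ∈ Finset.range (j + 1), b l * (a l * D l t + D (l + 1) t)) t := by
        refine HasDerivAt.fun_sum fun l hl => HasDerivAt.const_mul _ ?_
        have hl := Finset.mem_range.1 hl
        exact hD.2 l (by omega) t (by simp)
      rw [iteratedDeriv_succ, h1, h2.deriv]
      simp only [add_mul, Finset.sum_add_distrib, mul_add]
      congr 1
      · rw [Finset.sum_range_succ _ (j + 1)]
        simp only [show ¬ (j + 1 ≤ j) by omega, if_false, zero_mul, add_zero]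
        refine Finset.sum_congr rfl fun l hl => ?_
        rw [if_pos (by have := Finset.mem_range.1 hl; omega)]
        ring
      · rw [Finset.sum_range_succ' _ (j + 1)]
        simp
  choose b hb using key
  exact ⟨b, fun N D hD j hj t => hb j N D hD hj t⟩

lemma chainPoly_expo (m : ℝ) (k : ℕ) : chainPoly (expo m k) (2 * k) =
    (∏ j ∈ Finset.range k, (Polynomial.X - Polynomial.C (m + 2 * (j : ℝ)))) *
    ∏ j ∈ Finset.range k, (Polynomial.X + Polynomial.C (m + 2 * (j : ℝ))) := by
  rw [chainPoly, two_mul, Finset.prod_range_add]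
  congr 1
  · refine Finset.prod_congr rfl fun j hj => ?_
    rw [expo_lt (Finset.mem_range.1 hj)]
  · rw [← Finset.prod_range_reflect]
    refine Finset.prod_congr rfl fun j hj => ?_
    have hj := Finset.mem_range.1 hj
    rw [expo_ge (by omega), show 2 * k - 1 - (k + (k - 1 - j)) = j by omega]
    rw [map_neg, sub_neg_eq_add]

/-! ### The bubble in logarithmic variables -/

/-- `Bub A s i = g^{-s-i} (g')^i` with `g = e^{-t} + A e^t`. The span of the functions `Bub A s i` for
fixed `A`, `s` is closed under differentiation, and `Bub A m 0` is the bubble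
`e^{mt} (1 + A e^{2t})^{-m}`. -/
def Bub (A s : ℝ) (i : ℕ) (t : ℝ) : ℝ :=
  (exp (-t) + A * exp t) ^ (-s - i) * (-exp (-t) + A * exp t) ^ i

lemma bub_g_pos {A : ℝ} (hA : 0 < A) (t : ℝ) : 0 < exp (-t) + A * exp t := by positivity

lemma hasDerivAt_bub {A : ℝ} (hA : 0 < A) (s : ℝ) (i : ℕ) (t : ℝ) :
    HasDerivAt (Bub A s i) (-(s + i) * Bub A s (i + 1) t + i * Bub A s (i - 1) t) t := by
  have h1 : HasDerivAt (fun t => exp (-t)) (-exp (-t)) t := by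
    simpa using (hasDerivAt_neg t).exp
  have hg : HasDerivAt (fun t => exp (-t) + A * exp t) (-exp (-t) + A * exp t) t :=
    h1.add ((Real.hasDerivAt_exp t).const_mul A)
  have hg' : HasDerivAt (fun t => -exp (-t) + A * exp t) (exp (-t) + A * exp t) t := by
    exact (h1.fun_neg.fun_add ((Real.hasDerivAt_exp t).const_mul A)).congr_deriv (by ring)
  have hp := bub_g_pos hA t
  have h2 := (hg.rpow_const (p := -s - i) (Or.inl hp.ne')).mul (hg'.fun_pow i)
  refine h2.congr_deriv ?_
  unfold Bub
  have e1 : (-s - (i + 1 : ℕ) : ℝ) = -s - i - 1 := by push_cast; ring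
  rw [e1, pow_succ]
  rcases i with _ | i
  · simp; ring
  · have e2 : (-s - ((i + 1 - 1 : ℕ) : ℝ)) = -s - (i + 1 : ℕ) + 1 := by
      rw [Nat.add_sub_cancel]; push_cast; ring
    rw [e2, rpow_add_one hp.ne', Nat.add_sub_cancel]
    ring

lemma abs_bub_le {A : ℝ} (hA : 0 < A) (s : ℝ) (i : ℕ) (t : ℝ) :
    |Bub A s i t| ≤ (exp (-t) + A * exp t) ^ (-s) := by
  have hp := bub_g_pos hA t
  unfold Bub
  rw [abs_mul, abs_of_nonneg (rpow_nonneg hp.le _), abs_pow, rpow_sub hp, rpow_natCast,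
    div_mul_eq_mul_div, mul_div_assoc]
  refine mul_le_of_le_one_right (rpow_nonneg hp.le _) (div_le_one_of_le₀ ?_ (by positivity))
  refine pow_le_pow_left₀ (abs_nonneg _) ?_ i
  have h1 := exp_pos (-t)
  have h2 : 0 < A * exp t := by positivity
  rw [abs_le]
  constructor <;> linarith

lemma bub_le_exp {A s : ℝ} (hA : 0 < A) (hs : 0 < s) (t : ℝ) :
    (exp (-t) + A * exp t) ^ (-s) ≤ max 1 (A ^ (-s)) * exp (-s * |t|) := by
  have h2 : 0 < A * exp t := by positivity
  rcases le_total 0 t with h | h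
  · rw [abs_of_nonneg h]
    calc (exp (-t) + A * exp t) ^ (-s) ≤ (A * exp t) ^ (-s) :=
          rpow_le_rpow_of_nonpos h2 (by linarith [exp_pos (-t)]) (by linarith)
      _ = A ^ (-s) * exp (-s * t) := by rw [mul_rpow hA.le (exp_pos _).le, ← exp_mul]; ring_nf
      _ ≤ _ := by gcongr; exact le_max_right _ _
  · rw [abs_of_nonpos h]
    calc (exp (-t) + A * exp t) ^ (-s) ≤ (exp (-t)) ^ (-s) :=
          rpow_le_rpow_of_nonpos (exp_pos _) (by linarith) (by linarith)
      _ = 1 * exp (-s * -t) := by rw [← exp_mul]; ring_nf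
      _ ≤ _ := by gcongr; exact le_max_left _ _

lemma contDiff_bub {A : ℝ} (hA : 0 < A) (s : ℝ) (i : ℕ) {N : ℕ} : ContDiff ℝ N (Bub A s i) := by
  unfold Bub
  have h : ContDiff ℝ N (fun t => exp (-t) + A * exp t) := by fun_prop
  refine ContDiff.mul (h.rpow_const_of_ne fun t => (bub_g_pos hA t).ne') (by fun_prop)

lemma iteratedDeriv_bub_bdd {A : ℝ} (hA : 0 < A) {s : ℝ} (hs : 0 < s) (j : ℕ) :
    ∀ i, ∃ C, ∀ t, |iteratedDeriv j (Bub A s i) t| ≤ C := by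
  induction j with
  | zero =>
    intro i
    refine ⟨max 1 (A ^ (-s)), fun t => ?_⟩
    rw [iteratedDeriv_zero]
    refine ((abs_bub_le hA s i t).trans (bub_le_exp hA hs t)).trans
      (mul_le_of_le_one_right (le_max_of_le_left zero_le_one) ?_)
    exact exp_le_one_iff.2 (by nlinarith [abs_nonneg t])
  | succ j ih =>
    intro i
    obtain ⟨C1, h1⟩ := ih (i + 1)
    obtain ⟨C2, h2⟩ := ih (i - 1)
    refine ⟨|-(s + i)| * C1 + |(i : ℝ)| * C2, fun t => ?_⟩
    rw [iteratedDeriv_succ', show deriv (Bub A s i) = fun t => -(s + i) * Bub A s (i + 1) t +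
      i * Bub A s (i - 1) t from funext fun t => (hasDerivAt_bub hA s i t).deriv]
    rw [iteratedDeriv_fun_add (contDiff_const.mul (contDiff_bub hA s _)).contDiffAt
      (contDiff_const.mul (contDiff_bub hA s _)).contDiffAt,
      iteratedDeriv_const_mul_field, iteratedDeriv_const_mul_field]
    refine (abs_add_le _ _).trans ?_
    rw [abs_mul, abs_mul]
    gcongr
    · exact h1 t
    · exact h2 t

lemma opP_bub_bdd {A : ℝ} (hA : 0 < A) {s : ℝ} (hs : 0 < s) (Q : Polynomial ℝ) :
    ∃ C, ∀ t, |opP Q (Bub A s 0) t| ≤ C := by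
  choose C hC using fun j => iteratedDeriv_bub_bdd hA hs j 0
  refine ⟨∑ i ∈ Finset.range (Q.natDegree + 1), |Q.coeff i| * C i, fun t => ?_⟩
  rw [opP_eq_sum (Nat.lt_succ_self _)]
  refine (Finset.abs_sum_le_sum_abs _ _).trans (Finset.sum_le_sum fun i _ => ?_)
  rw [abs_mul]
  exact mul_le_mul_of_nonneg_left (hC i t) (abs_nonneg _)

/-- `(∂² - s²) g^{-s} = -4 A s (s+1) g^{-s-2}`, since `g'' = g` and `g'^2 = g^2 - 4A`. -/
lemma opP_bub_step {A : ℝ} (hA : 0 < A) {Q : Polynomial ℝ} {φ : ℝ → ℝ} {N : ℕ} (s c : ℝ)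
    (hφ : ContDiff ℝ (N + 1 : ℕ) φ) (hQ : Q.natDegree < N) (h : ∀ t, opP Q φ t = c * Bub A s 0 t) (t : ℝ) :
    opP ((Polynomial.X - Polynomial.C (-s)) * ((Polynomial.X - Polynomial.C s) * Q)) φ t =
      c * (-(4 * A * s * (s + 1))) * Bub A (s + 2) 0 t := by
  have h1 : ∀ t, opP ((Polynomial.X - Polynomial.C s) * Q) φ t =
      c * (-s * Bub A s 1 t) - s * (c * Bub A s 0 t) := by
    intro t
    have e1 := hasDerivAt_opP s hφ (hQ.trans (Nat.lt_succ_self N)) t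
    have e2 := (hasDerivAt_bub hA s 0 t).const_mul c
    rw [show opP Q φ = fun t => c * Bub A s 0 t from funext h] at e1
    have := e1.unique e2
    simp at this
    linarith
  have e1 := hasDerivAt_opP (-s) hφ (natDegree_X_sub_C_mul s hQ) t
  rw [show opP ((Polynomial.X - Polynomial.C s) * Q) φ = fun t =>
      c * (-s * Bub A s 1 t) - s * (c * Bub A s 0 t) from funext h1] at e1
  have e2 := (((hasDerivAt_bub hA s 1 t).const_mul (-s)).const_mul c).sub
    (((hasDerivAt_bub hA s 0 t).const_mul c).const_mul s)
  have e3 := e1.unique e2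
  have hp := bub_g_pos hA t
  have e4 : Bub A s 2 t = Bub A s 0 t - 4 * A * Bub A (s + 2) 0 t := by
    unfold Bub
    have : (-exp (-t) + A * exp t) ^ 2 = (exp (-t) + A * exp t) ^ 2 - 4 * A := by
      have : exp (-t) * exp t = 1 := by rw [← exp_add]; simp
      linear_combination (-4 * A) * this
    rw [this, mul_sub]
    have e5 : (exp (-t) + A * exp t) ^ (-s - (2 : ℕ)) * (exp (-t) + A * exp t) ^ 2 =
        (exp (-t) + A * exp t) ^ (-s - (0 : ℕ)) := by
      rw [← rpow_natCast (exp (-t) + A * exp t) 2, ← rpow_add hp]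
      push_cast; ring_nf
    rw [e5, show (-(s + 2) - ((0 : ℕ) : ℝ)) = -s - (2 : ℕ) by push_cast; ring]
    ring
  simp only [Nat.cast_one, Nat.cast_zero, zero_mul, add_zero, Nat.sub_self, one_mul, zero_add,
    Nat.reduceAdd] at e3
  rw [e4] at e3
  linear_combination e3

/-- The bubble satisfies the limit equation up to a constant factor, by iterating `opP_bub_step`. -/
lemma opP_bub {A m : ℝ} (hA : 0 < A) (k : ℕ) (t : ℝ) :
    opP (chainPoly (expo m k) (2 * k)) (Bub A m 0) t =
      (∏ j ∈ Finset.range k, (-(4 * A * (m + 2 * j) * (m + 2 * j + 1)))) * Bub A (m + 2 * k) 0 t := by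
  have key : ∀ k : ℕ, ((∏ j ∈ Finset.range k, (Polynomial.X - Polynomial.C (m + 2 * (j : ℝ)))) *
    ∏ j ∈ Finset.range k, (Polynomial.X + Polynomial.C (m + 2 * (j : ℝ)))).natDegree < 2 * k + 1 ∧
    ∀ t, opP ((∏ j ∈ Finset.range k, (Polynomial.X - Polynomial.C (m + 2 * (j : ℝ)))) *
      ∏ j ∈ Finset.range k, (Polynomial.X + Polynomial.C (m + 2 * (j : ℝ)))) (Bub A m 0) t =
      (∏ j ∈ Finset.range k, (-(4 * A * (m + 2 * j) * (m + 2 * j + 1)))) * Bub A (m + 2 * k) 0 t := by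
    intro k
    induction k with
    | zero => simp [opP_one]
    | succ k ih =>
      obtain ⟨h1, h2⟩ := ih
      rw [show (∏ j ∈ Finset.range (k + 1), (Polynomial.X - Polynomial.C (m + 2 * (j : ℝ)))) *
        ∏ j ∈ Finset.range (k + 1), (Polynomial.X + Polynomial.C (m + 2 * (j : ℝ))) =
        (Polynomial.X - Polynomial.C (-(m + 2 * (k : ℝ)))) *
        ((Polynomial.X - Polynomial.C (m + 2 * (k : ℝ))) *
          ((∏ j ∈ Finset.range k, (Polynomial.X - Polynomial.C (m + 2 * (j : ℝ)))) *
          ∏ j ∈ Finset.range k, (Polynomial.X + Polynomial.C (m + 2 * (j : ℝ))))) by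
        rw [Finset.prod_range_succ, Finset.prod_range_succ, map_neg]; ring]
      refine ⟨natDegree_X_sub_C_mul _ (natDegree_X_sub_C_mul _ h1), fun t => ?_⟩
      rw [opP_bub_step hA _ _ (contDiff_bub hA m 0) h1 h2, Finset.prod_range_succ]
      push_cast
      ring_nf
  rw [chainPoly_expo]
  exact (key k).2 t

lemma tendsto_bub {A m : ℝ} (hA : 0 < A) :
    Tendsto (fun t => exp (-m * t) * Bub A m 0 t) atBot (𝓝 1) := by
  have h1 : ∀ t, exp (-m * t) * Bub A m 0 t = (1 + A * exp (2 * t)) ^ (-m) := by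
    intro t
    unfold Bub
    rw [pow_zero, mul_one, Nat.cast_zero, sub_zero,
      show exp (-t) + A * exp t = exp (-t) * (1 + A * exp (2 * t)) by
        rw [mul_add, mul_one, mul_left_comm, ← exp_add]; ring_nf,
      mul_rpow (exp_pos _).le (by positivity), ← exp_mul, ← mul_assoc, ← exp_add]
    ring_nf
    simp
  simp only [h1]
  have h2 : Tendsto (fun t : ℝ => 1 + A * exp (2 * t)) atBot (𝓝 (1 + A * 0)) :=
    ((tendsto_exp_atBot.comp (tendsto_id.const_mul_atBot (two_pos))).const_mul A).const_add 1
  have h3 := h2.rpow_const (p := -m) (Or.inl (by simp))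
  simpa using h3

/-! ### Classification of entire solutions -/

/-- Two solutions on the line, decaying exponentially at both ends and with the same leading
coefficient at `-∞`, agree: their difference solves a linear equation with a nonnegative, exponentially
decaying coefficient, so `line_zero` applies. -/
lemma line_unique {k : ℕ} {D E : ℕ → ℝ → ℝ} {m q C β : ℝ} (hk : 0 < k) (hm : 0 < m) (hq : 0 < q)
    (hC : 0 < C) (hβ : 0 < β) (hD : ChainOn (expo m k) (2 * k) D Set.univ)
    (hE : ChainOn (expo m k) (2 * k) E Set.univ)
    (hDb : ∀ j < 2 * k, ∀ t, |D j t| ≤ C) (hEb : ∀ j < 2 * k, ∀ t, |E j t| ≤ C)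
    (hDe : ∀ t, |D 0 t| ≤ C * exp (-β * |t|)) (hEe : ∀ t, |E 0 t| ≤ C * exp (-β * |t|))
    (hDeq : ∀ t, D (2 * k) t = fnl q (D 0 t)) (hEeq : ∀ t, E (2 * k) t = fnl q (E 0 t))
    (hlead : Tendsto (fun t => exp (-m * t) * (D 0 t - E 0 t)) atBot (𝓝 0)) :
    ∀ t, D 0 t = E 0 t := by
  have h := line_zero (a := expo m k) (k := k) (D := fun j t => D j t - E j t)
    (C := max (2 * C) ((q + 1) * C ^ q)) (γ := β * q) hk (by positivity)
    (lt_max_of_lt_left (by linarith)) (hD.sub hE)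
    (fun j hj => hm.trans_le (expo_pos hj)) (fun j hj _ => (expo_neg hj).trans_lt (by linarith))
    (fun j hj t => ?_) (by rwa [expo_zero hk]) (fun σ t h => ?_) (fun t => ?_)
  · exact fun t => sub_eq_zero.1 (h t)
  · refine le_max_of_le_left ((abs_sub _ _).trans ?_)
    linarith [hDb j hj t, hEb j hj t]
  · simp only [hDeq, hEeq] at h
    exact fnl_sign hq h
  · simp only [hDeq, hEeq]
    refine (fnl_lip hq (hDe t) (hEe t)).trans ?_
    refine mul_le_mul_of_nonneg_right ?_ (abs_nonneg _)
    rw [mul_rpow hC.le (exp_pos _).le, ← exp_mul, ← mul_assoc]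
    rw [show -β * |t| * q = -(β * q) * |t| by ring]
    gcongr
    exact le_max_right _ _

/-- Exponential decay at both ends of an entire solution that tends to zero there. -/
lemma nl_decay_line {k : ℕ} {D : ℕ → ℝ → ℝ} {m q C : ℝ} (hk : 0 < k) (hm : 0 < m)
    (hq : 0 < q) (hC : 0 < C)
    (hD : ChainOn (expo m k) (2 * k) D Set.univ) (hb : ∀ j < 2 * k, ∀ t, |D j t| ≤ C)
    (heq : ∀ t, D (2 * k) t = fnl q (D 0 t)) (hlim : Tendsto (D 0) atBot (𝓝 0))
    (hlim' : Tendsto (D 0) atTop (𝓝 0)) :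
    ∃ C', 0 < C' ∧ ∀ t, |D 0 t| ≤ C' * exp (-(m / 2) * |t|) := by
  obtain ⟨C1, hC1, h1⟩ := nl_decay_atBot (T0 := 0) (a := expo m k) (N := 2 * k) (D := D)
    (β := m / 2) (by omega) hq (by linarith) (by linarith) hC
    (fun j _ => expo_or m k j) (hD.mono (Set.subset_univ _)) (fun j hj t _ => hb j hj t)
    (fun t _ => heq t) hlim
  obtain ⟨C2, hC2, h2⟩ := nl_decay_atBot (T0 := 0) (a := fun j => -expo m k j) (N := 2 * k)
    (D := fun j t => (-1) ^ j * D j (-t))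
    (m := m) (β := m / 2) (by omega) hq (by linarith) (by linarith) hC
    (fun j _ => (expo_or m k j).symm.imp (fun h => by linarith) (fun h => by linarith))
    (hD.reflect.mono (Set.subset_univ _))
    (fun j hj t _ => by rw [abs_mul, abs_pow]; simpa using hb j hj (-t))
    (fun t _ => by simp [heq]) (by simpa using hlim')
  refine ⟨max C1 C2, lt_max_of_lt_left hC1, fun t => ?_⟩
  rcases le_total t 0 with h | h
  · rw [abs_of_nonpos h, neg_mul_neg]
    exact (h1 0 (by omega) t h).trans (by gcongr; exact le_max_left _ _)
  · have := h2 0 (by omega) (-t) (by linarith)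
    simp only [pow_zero, one_mul, neg_neg] at this
    rw [abs_of_nonneg h, neg_mul, ← mul_neg]
    exact this.trans (by gcongr; exact le_max_right _ _)

/-- Entire solutions tending to zero at both ends are zero or a translate of the bubble, up to sign. -/
lemma line_classify {k : ℕ} {D : ℕ → ℝ → ℝ} {m q A C : ℝ} (hk : 0 < k) (hm : 0 < m)
    (hq : 0 < q) (hmq : m * q = 2 * k) (hA : 0 < A)
    (hA1 : ∏ j ∈ Finset.range k, (-(4 * A * (m + 2 * j) * (m + 2 * j + 1))) = 1) (hC : 0 < C)
    (hD : ChainOn (expo m k) (2 * k) D Set.univ) (hb : ∀ j < 2 * k, ∀ t, |D j t| ≤ C)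
    (heq : ∀ t, D (2 * k) t = fnl q (D 0 t)) (hlim : Tendsto (D 0) atBot (𝓝 0))
    (hlim' : Tendsto (D 0) atTop (𝓝 0)) :
    (∀ t, D 0 t = 0) ∨
      ∃ ε : ℝ, (ε = 1 ∨ ε = -1) ∧ ∃ c, ∀ t, D 0 t = ε * Bub A m 0 (t - c) := by
  obtain ⟨C1, hC1, hd⟩ := nl_decay_line hk hm hq hC hD hb heq hlim hlim'
  obtain ⟨c0, hc0⟩ := lead_exists hk hm hq hC hD hb heq hlim
  rcases eq_or_ne c0 0 with h0 | h0
  · left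
    subst h0
    refine line_unique (E := fun _ _ => 0) (C := max C C1) (β := m / 2) hk hm hq
      (lt_max_of_lt_left hC) (by linarith) hD ⟨fun _ _ => continuousOn_const, fun _ _ t _ => by
        simpa using hasDerivAt_const t (0 : ℝ)⟩ (fun j hj t => le_max_of_le_left (hb j hj t))
      (fun j hj t => by simp [hC.le]) (fun t => (hd t).trans (by gcongr; exact le_max_right _ _))
      (fun t => by rw [abs_zero]; positivity) heq (fun t => by simp [fnl]) (by simpa using hc0)
  · right
    -- `c` is chosen so that `ε` times the bubble translated by `c` has leading coefficient `c0`
    set c := -Real.log |c0| / m with hc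
    have hε : ∃ ε : ℝ, (ε = 1 ∨ ε = -1) ∧ c0 = ε * |c0| := by
      rcases abs_choice c0 with h | h
      · exact ⟨1, Or.inl rfl, by rw [h]; ring⟩
      · exact ⟨-1, Or.inr rfl, by rw [h]; ring⟩
    obtain ⟨ε, hε, hεc⟩ := hε
    have hεa : |ε| = 1 := by rcases hε with rfl | rfl <;> simp
    refine ⟨ε, hε, c, ?_⟩
    have hch := ((chain_opP (expo m k) (contDiff_bub (N := 2 * k) hA m 0)).shift (-c)).const_mul ε
    have hB : ∀ t, |Bub A m 0 t| ≤ max 1 (A ^ (-m)) * exp (-m * |t|) := fun t =>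
      (abs_bub_le hA m 0 t).trans (bub_le_exp hA hm t)
    choose C2 hC2 using fun j => opP_bub_bdd hA hm (chainPoly (expo m k) j)
    set K := max (max C C1) (max (∑ j ∈ Finset.range (2 * k), |C2 j|)
      (max 1 (A ^ (-m)) * exp (m / 2 * |c|))) with hK
    have key := line_unique (E := fun j t => ε * opP (chainPoly (expo m k) j) (Bub A m 0) (t + -c))
      (C := K) (β := m / 2) hk hm hq
      (lt_max_of_lt_left (lt_max_of_lt_left hC)) (by linarith) hD hch
      (fun j hj t => le_max_of_le_left (le_max_of_le_left (hb j hj t)))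
      (fun j hj t => ?_) (fun t => (hd t).trans
        (by gcongr; exact le_max_of_le_left (le_max_right _ _))) (fun t => ?_) heq (fun t => ?_) ?_
    · intro t
      rw [key t]; simp only [opP_chainPoly_zero]
      rfl
    · rw [abs_mul, hεa, one_mul]
      refine le_max_of_le_right (le_max_of_le_left ?_)
      refine (hC2 j _).trans ((le_abs_self _).trans ?_)
      exact Finset.single_le_sum (f := fun j => |C2 j|) (fun i _ => abs_nonneg _)
        (Finset.mem_range.2 hj)
    · simp only [opP_chainPoly_zero]
      rw [abs_mul, hεa, one_mul]
      calc |Bub A m 0 (t + -c)| ≤ max 1 (A ^ (-m)) * exp (-m * |t + -c|) := hB _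
        _ ≤ max 1 (A ^ (-m)) * (exp (m / 2 * |c|) * exp (-(m / 2) * |t|)) := by
          rw [← exp_add]
          gcongr
          have e1 : |t| ≤ |t + -c| + |c| := by
            calc |t| = |(t + -c) + c| := by ring_nf
              _ ≤ _ := abs_add_le _ _
          nlinarith [abs_nonneg (t + -c)]
        _ ≤ _ := by
          rw [← mul_assoc]
          gcongr
          exact le_max_of_le_right (le_max_right _ _)
    · simp only [opP_chainPoly_zero, opP_bub hA, hA1, one_mul]
      have hp : 0 < exp (-(t + -c)) + A * exp (t + -c) := bub_g_pos hA _
      unfold fnl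
      rw [abs_mul, hεa, one_mul]
      have e1 : Bub A (m + 2 * k) 0 (t + -c) = |Bub A m 0 (t + -c)| ^ q * Bub A m 0 (t + -c) := by
        unfold Bub
        simp only [pow_zero, mul_one, Nat.cast_zero, sub_zero]
        rw [abs_of_nonneg (rpow_nonneg hp.le _), ← rpow_mul hp.le, ← rpow_add hp]
        congr 1
        linarith
      rw [e1]; ring
    · simp only [opP_chainPoly_zero]
      have e1 : Tendsto (fun t => t + -c) atBot atBot := tendsto_atBot_add_const_right _ _ tendsto_id
      have e2 := ((tendsto_bub (m := m) hA).comp e1).const_mul (ε * exp (-m * c))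
      have e3 := hc0.sub e2
      have e4 : exp (-m * c) = |c0| := by
        rw [hc, show -m * (-Real.log |c0| / m) = Real.log |c0| by field_simp,
          Real.exp_log (abs_pos.2 h0)]
      rw [mul_one, e4, ← hεc, sub_self] at e3
      refine e3.congr fun t => ?_
      simp only [Function.comp]
      rw [← e4] at hεc
      rw [mul_sub, show exp (-m * t) = exp (-m * c) * exp (-m * (t + -c)) by
        rw [← exp_add]; ring_nf, hεc]
      ring

/-! ### The iterated Laplacian of a radial function -/

section Radial

variable {n : ℕ}

lemma hasFDerivAt_comp_log_norm {h h1 : ℝ → ℝ} (hh : ∀ t, HasDerivAt h (h1 t) t)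
    {x : EuclideanSpace ℝ (Fin n)} (hx : x ≠ 0) :
    HasFDerivAt (fun y : EuclideanSpace ℝ (Fin n) => h (Real.log ‖y‖))
      ((h1 (Real.log ‖x‖) * (‖x‖ ^ 2)⁻¹) • innerSL ℝ x) x := by
  have hn : ‖x‖ ^ 2 ≠ 0 := by simpa using hx
  have e1 : HasFDerivAt (fun y : EuclideanSpace ℝ (Fin n) => ‖y‖ ^ 2) (2 • innerSL ℝ x) x :=
    (hasStrictFDerivAt_norm_sq x).hasFDerivAt
  have e2 := (e1.log hn).const_mul (1 / 2 : ℝ)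
  have e3 : (fun y : EuclideanSpace ℝ (Fin n) => (1 / 2 : ℝ) * Real.log (‖y‖ ^ 2)) =
      fun y => Real.log ‖y‖ := by
    funext y; rw [Real.log_pow]; push_cast; ring
  rw [e3] at e2
  have e4 := (hh (Real.log ‖x‖)).comp_hasFDerivAt x e2
  refine e4.congr_fderiv ?_
  ext v
  simp
  ring

/-- The Laplacian in the variable `t = log ‖x‖`. -/
lemma lap_comp_log_norm {h h1 h2 : ℝ → ℝ} (hh : ∀ t, HasDerivAt h (h1 t) t)
    (hh1 : ∀ t, HasDerivAt h1 (h2 t) t) {x : EuclideanSpace ℝ (Fin n)} (hx : x ≠ 0) :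
    lap (fun y : EuclideanSpace ℝ (Fin n) => h (Real.log ‖y‖)) x =
      (‖x‖ ^ 2)⁻¹ * (h2 (Real.log ‖x‖) + (n - 2) * h1 (Real.log ‖x‖)) := by
  have hn : ‖x‖ ^ 2 ≠ 0 := by simpa using hx
  set f := fun y : EuclideanSpace ℝ (Fin n) => h (Real.log ‖y‖) with hf
  have e1 : HasFDerivAt (fun y : EuclideanSpace ℝ (Fin n) => ‖y‖ ^ 2) (2 • innerSL ℝ x) x :=
    (hasStrictFDerivAt_norm_sq x).hasFDerivAt
  have hev : fderiv ℝ f =ᶠ[𝓝 x] fun y => (h1 (Real.log ‖y‖) * (‖y‖ ^ 2)⁻¹) • innerSL ℝ y := by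
    filter_upwards [isOpen_ne.mem_nhds hx] with y hy using (hasFDerivAt_comp_log_norm hh hy).fderiv
  have e2 := (hasFDerivAt_comp_log_norm hh1 hx).mul ((hasDerivAt_inv hn).comp_hasFDerivAt x e1)
  have e3 := e2.smul (innerSL ℝ (E := EuclideanSpace ℝ (Fin n))).hasFDerivAt
  have e4 := (e3.congr_of_eventuallyEq hev).fderiv
  unfold lap
  simp only [iteratedFDeriv_two_apply, e4]
  have e5 : ∀ i : Fin n, innerSL ℝ (EuclideanSpace.single i (1 : ℝ)) (EuclideanSpace.single i (1 : ℝ)) = 1 := by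
    intro i; rw [innerSL_apply_apply]; simp
  have e6 : ∀ i : Fin n, innerSL ℝ x (EuclideanSpace.single i (1 : ℝ)) = x i := by
    intro i; rw [innerSL_apply_apply]; simp [EuclideanSpace.inner_single_right]
  have e7 : ∑ i : Fin n, x i * x i = ‖x‖ ^ 2 := by
    rw [EuclideanSpace.real_norm_sq_eq]; exact Finset.sum_congr rfl fun i _ => by ring
  simp [e5, e6]
  rw [Finset.sum_add_distrib]
  simp only [add_mul, Finset.sum_add_distrib]
  have e8 : ∀ c d : ℝ, ∑ i : Fin n, -(c * (d * (2 * x i))) * x i = -(c * d * 2) * ‖x‖ ^ 2 := by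
    intro c d; rw [← e7, Finset.mul_sum]; exact Finset.sum_congr rfl fun i _ => by ring
  have e9 : ∀ c d : ℝ, ∑ i : Fin n, c * (d * x i) * x i = (c * d) * ‖x‖ ^ 2 := by
    intro c d; rw [← e7, Finset.mul_sum]; exact Finset.sum_congr rfl fun i _ => by ring
  rw [e8, e9]
  simp
  field_simp
  ring

/-- On radial functions, in the variable `t = log ‖x‖`, the `k`-th power of the Laplacian is a product
of `2k` first-order factors. -/
lemma iterLap_radial_aux {k : ℕ} {m : ℝ} {φ : ℝ → ℝ} {u : EuclideanSpace ℝ (Fin n) → ℝ}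
    (hmn : (n : ℝ) - 2 = 2 * m + 2 * k - 2) (hφ : ContDiff ℝ (2 * k : ℕ) φ)
    (hu : ∀ x, x ≠ 0 → u x = exp (-m * Real.log ‖x‖) * φ (Real.log ‖x‖)) :
    ∀ j ≤ k, (∏ i ∈ Finset.range j, ((Polynomial.X - Polynomial.C (-(m + 2 * ((k - 1 - i : ℕ) : ℝ)))) *
        (Polynomial.X - Polynomial.C (m + 2 * (i : ℝ))))).natDegree < 2 * j + 1 ∧
      ∀ x, x ≠ 0 → iterLap j u x = exp (-(m + 2 * j) * Real.log ‖x‖) *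
      opP (∏ i ∈ Finset.range j, ((Polynomial.X - Polynomial.C (-(m + 2 * ((k - 1 - i : ℕ) : ℝ)))) *
        (Polynomial.X - Polynomial.C (m + 2 * (i : ℝ))))) φ (Real.log ‖x‖) := by
  intro j
  induction j with
  | zero =>
    intro _
    refine ⟨by simp, fun x hx => ?_⟩
    simp only [Finset.range_zero, Finset.prod_empty, opP_one]
    simpa [iterLap] using hu x hx
  | succ j ih =>
    intro hj
    obtain ⟨h1, h2⟩ := ih (by omega)
    rw [Finset.prod_range_succ, mul_comm, mul_assoc]
    set Q := ∏ i ∈ Finset.range j, ((Polynomial.X - Polynomial.C (-(m + 2 * ((k - 1 - i : ℕ) : ℝ)))) *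
        (Polynomial.X - Polynomial.C (m + 2 * (i : ℝ)))) with hQ
    set α := m + 2 * (j : ℝ) with hα
    have hβ : m + 2 * ((k - 1 - j : ℕ) : ℝ) = n - 2 - α := by
      have : ((k - 1 - j : ℕ) : ℝ) = k - 1 - j := by
        rw [Nat.sub_sub, Nat.cast_sub (by omega)]; push_cast; ring
      rw [this]; linarith
    rw [hβ]
    set P1 := (Polynomial.X - Polynomial.C α) * Q with hP1
    have h3 : P1.natDegree < 2 * j + 1 + 1 := natDegree_X_sub_C_mul _ h1
    refine ⟨natDegree_X_sub_C_mul _ h3, fun x hx => ?_⟩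
    have hφ1 : ContDiff ℝ (2 * j + 1 : ℕ) φ := hφ.of_le (by exact_mod_cast (by omega))
    have hφ2 : ContDiff ℝ (2 * j + 1 + 1 : ℕ) φ := hφ.of_le (by exact_mod_cast (by omega))
    have hE : ∀ t, HasDerivAt (fun t => exp (-α * t)) (-α * exp (-α * t)) t := fun t => by
      simpa [mul_comm] using ((hasDerivAt_id t).const_mul (-α)).exp
    have d1 : ∀ t, HasDerivAt (fun t => exp (-α * t) * opP Q φ t) (exp (-α * t) * opP P1 φ t) t :=
      fun t => ((hE t).mul (hasDerivAt_opP α hφ1 h1 t)).congr_deriv (by ring)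
    have d2 : ∀ t, HasDerivAt (fun t => exp (-α * t) * opP P1 φ t)
        (exp (-α * t) * (opP ((Polynomial.X - Polynomial.C (-(n - 2 - α))) * P1) φ t
          - (n - 2) * opP P1 φ t)) t :=
      fun t => ((hE t).mul (hasDerivAt_opP (-(n - 2 - α)) hφ2 h3 t)).congr_deriv (by ring)
    have hev : iterLap j u =ᶠ[𝓝 x] fun y => (fun t => exp (-α * t) * opP Q φ t) (Real.log ‖y‖) := by
      filter_upwards [isOpen_ne.mem_nhds hx] with y hy using h2 y hy
    have hl : iterLap (j + 1) u x = lap (fun y : EuclideanSpace ℝ (Fin n) =>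
        (fun t => exp (-α * t) * opP Q φ t) (Real.log ‖y‖)) x := by
      rw [iterLap, Function.iterate_succ_apply']
      change lap (iterLap j u) x = _
      unfold lap
      rw [hev.iteratedFDeriv ℝ 2 |>.eq_of_nhds]
    rw [hl, lap_comp_log_norm d1 d2 hx]
    have hn : 0 < ‖x‖ := by simpa using hx
    have e1 : exp (-(m + 2 * ((j + 1 : ℕ) : ℝ)) * Real.log ‖x‖) =
        (‖x‖ ^ 2)⁻¹ * exp (-α * Real.log ‖x‖) := by
      rw [show (‖x‖ ^ 2)⁻¹ = exp (-2 * Real.log ‖x‖) by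
        rw [show -2 * Real.log ‖x‖ = -Real.log (‖x‖ ^ 2) by rw [Real.log_pow]; push_cast; ring,
          Real.exp_neg, Real.exp_log (by positivity)], ← exp_add]
      push_cast
      rw [hα]; ring_nf
    rw [e1]
    ring

lemma iterLap_radial {k : ℕ} {m : ℝ} {φ : ℝ → ℝ} {u : EuclideanSpace ℝ (Fin n) → ℝ}
    (hmn : (n : ℝ) - 2 = 2 * m + 2 * k - 2) (hφ : ContDiff ℝ (2 * k : ℕ) φ)
    (hu : ∀ x, x ≠ 0 → u x = exp (-m * Real.log ‖x‖) * φ (Real.log ‖x‖))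
    {x : EuclideanSpace ℝ (Fin n)} (hx : x ≠ 0) :
    iterLap k u x = exp (-(m + 2 * k) * Real.log ‖x‖) *
      opP (chainPoly (expo m k) (2 * k)) φ (Real.log ‖x‖) := by
  rw [(iterLap_radial_aux hmn hφ hu k le_rfl).2 x hx, chainPoly_expo, Finset.prod_mul_distrib,
    mul_comm (∏ i ∈ Finset.range k, _)]
  congr 3
  rw [← Finset.prod_range_reflect]
  refine Finset.prod_congr rfl fun j hj => ?_
  have hj := Finset.mem_range.1 hj
  rw [map_neg, sub_neg_eq_add, show k - 1 - (k - 1 - j) = j by omega]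

end Radial

/-! ### The equation in logarithmic variables -/

/-- The data which a radial solution induces in the variable `t = log |x|`: the chain `D` generated by
`D 0 t = e^{mt} u(e^t)`, the equation, the Dirichlet conditions at `t = 0`, regularity at the origin
(decay at `-∞`), the bound of the critical norm and nontriviality. -/
structure RadSol (m q : ℝ) (k : ℕ) (lam M' : ℝ) (D : ℕ → ℝ → ℝ) : Prop where
  chain : ChainOn (expo m k) (2 * k) D Set.univ
  eqn : ∀ t ≤ 0, D (2 * k) t = fnl q (D 0 t) + lam * exp (2 * k * t) * D 0 t
  dir : ∀ j < k, D j 0 = 0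
  decay : ∃ C, 0 < C ∧ ∀ j < 2 * k, ∀ t ≤ 0, |D j t| ≤ C * exp (m * t)
  int : ∀ S T, S ≤ T → T ≤ 0 → ∫ t in S..T, |D 0 t| ^ (q + 2) ≤ M'
  nontriv : ∃ t ≤ 0, D 0 t ≠ 0

/-- The profile `e^{mt} u(e^t e)`. -/
def prof {E : Type*} [NormedAddCommGroup E] [NormedSpace ℝ E] (m : ℝ) (u : E → ℝ) (e : E) (t : ℝ) : ℝ :=
  exp (m * t) * u (exp t • e)

lemma contDiff_prof {E : Type*} [NormedAddCommGroup E] [NormedSpace ℝ E] {m : ℝ} {u : E → ℝ} {e : E}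
    {N : ℕ} (hu : ContDiff ℝ N u) : ContDiff ℝ N (prof m u e) := by
  unfold prof
  refine ContDiff.mul (by fun_prop) (hu.comp (by fun_prop))

lemma continuous_opP {Q : Polynomial ℝ} {N : ℕ} {φ : ℝ → ℝ} (hφ : ContDiff ℝ N φ)
    (h : Q.natDegree ≤ N) : Continuous (opP Q φ) := by
  rw [show opP Q φ = fun t => ∑ i ∈ Finset.range (N + 1), Q.coeff i * iteratedDeriv i φ t from
    funext fun t => opP_eq_sum (Nat.lt_succ_of_le h) φ t]
  refine continuous_finsetSum _ fun i hi => continuous_const.mul ?_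
  exact hφ.continuous_iteratedDeriv i (by exact_mod_cast Nat.lt_succ_iff.1 (Finset.mem_range.1 hi))

/-- The functions `e^{(m+j)t} g^{(j)}(e^t)`, `g(s) = u(se)`, form a chain with exponents `m + j`. -/
lemma chain_prof {E : Type*} [NormedAddCommGroup E] [NormedSpace ℝ E] {m : ℝ} {u : E → ℝ} {e : E}
    {N : ℕ} (hu : ContDiff ℝ N u) :
    ChainOn (fun j => m + j) N
      (fun j t => exp ((m + j) * t) * iteratedDeriv j (fun s : ℝ => u (s • e)) (exp t)) Set.univ := by
  have hg : ContDiff ℝ N (fun s : ℝ => u (s • e)) := hu.comp (by fun_prop)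
  have h : ∀ j < N, ∀ t, HasDerivAt
      (fun t => exp ((m + j) * t) * iteratedDeriv j (fun s : ℝ => u (s • e)) (exp t))
      ((m + j) * (exp ((m + j) * t) * iteratedDeriv j (fun s : ℝ => u (s • e)) (exp t)) +
        exp ((m + (j + 1 : ℕ)) * t) * iteratedDeriv (j + 1) (fun s : ℝ => u (s • e)) (exp t)) t := by
    intro j hj t
    have h1 : HasDerivAt (iteratedDeriv j (fun s : ℝ => u (s • e)))
        (iteratedDeriv (j + 1) (fun s : ℝ => u (s • e)) (exp t)) (exp t) := by
      rw [iteratedDeriv_succ]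
      exact ((hg.differentiable_iteratedDeriv j (by exact_mod_cast hj)) _).hasDerivAt
    refine ((hasDerivAt_exp_mul (m + j) t).mul (h1.comp t (Real.hasDerivAt_exp t))).congr_deriv ?_
    push_cast
    simp only [Function.comp]
    rw [show (m + (j + 1)) * t = (m + j) * t + t by ring, exp_add]
    ring
  exact ⟨fun j hj => (continuous_iff_continuousAt.2 fun t => (h j hj t).continuousAt).continuousOn,
    fun j hj t _ => h j hj t⟩

section Extract

variable {n : ℕ}

/-- The critical norm in polar coordinates: `m p = n` makes the Jacobian `e^{nt}` cancel the weight of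
the profile. -/
lemma prof_int {m p M' : ℝ} (hn : 0 < n) (hmp : m * p = n) (hp : 0 < p)
    {u : EuclideanSpace ℝ (Fin n) → ℝ} (hu : Continuous u)
    (hrad : ∀ x y : EuclideanSpace ℝ (Fin n), ‖x‖ = ‖y‖ → u x = u y)
    {e : EuclideanSpace ℝ (Fin n)} (he : ‖e‖ = 1)
    (hM : ∫ x in ball (0 : EuclideanSpace ℝ (Fin n)) 1, |u x| ^ p ≤ M') {S T : ℝ} (hST : S ≤ T)
    (hT : T ≤ 0) :
    ∫ t in S..T, |prof m u e t| ^ p ≤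
      M' / (n * volume.real (ball (0 : EuclideanSpace ℝ (Fin n)) 1)) := by
  have : Nonempty (Fin n) := ⟨⟨0, hn⟩⟩
  have : Nontrivial (EuclideanSpace ℝ (Fin n)) := by
    refine ⟨e, 0, fun h => ?_⟩
    rw [h, norm_zero] at he; exact zero_ne_one he
  have hV : 0 < volume.real (ball (0 : EuclideanSpace ℝ (Fin n)) 1) :=
    ENNReal.toReal_pos (measure_ball_pos _ _ one_pos).ne' measure_ball_lt_top.ne
  set g : ℝ → ℝ := (Set.Iio 1).indicator fun r => |u (r • e)| ^ p with hg
  have h1 : ∫ x in ball (0 : EuclideanSpace ℝ (Fin n)) 1, |u x| ^ p =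
      ∫ x : EuclideanSpace ℝ (Fin n), g ‖x‖ := by
    rw [← integral_indicator measurableSet_ball]
    congr 1
    funext x
    by_cases hx : ‖x‖ < 1
    · rw [Set.indicator_of_mem (by simpa using hx), hg, Set.indicator_of_mem (by simpa using hx),
        hrad x (‖x‖ • e) (by rw [norm_smul, he]; simp)]
    · rw [Set.indicator_of_notMem (by simpa using hx), hg, Set.indicator_of_notMem (by simpa using hx)]
  have h2 := integral_fun_norm_addHaar (volume : Measure (EuclideanSpace ℝ (Fin n))) g
  rw [← h1, finrank_euclideanSpace_fin, nsmul_eq_mul, smul_eq_mul, ← mul_assoc] at h2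
  rw [h2] at hM
  rw [le_div_iff₀ (by positivity), mul_comm]
  refine le_trans ?_ hM
  refine mul_le_mul_of_nonneg_left ?_ (by positivity)
  set G : ℝ → ℝ := fun y => y ^ (n - 1) * |u (y • e)| ^ p with hG
  have hGc : Continuous G := by
    refine (continuous_pow _).mul (Continuous.rpow_const ?_ fun _ => Or.inr hp.le)
    exact (hu.comp (by fun_prop)).abs
  have h3 : ∫ y in Set.Ioi (0 : ℝ), y ^ (n - 1) • g y = ∫ y in Set.Ioc (0 : ℝ) 1, G y := by
    rw [integral_Ioc_eq_integral_Ioo, ← Set.Ioi_inter_Iio, ← setIntegral_indicator measurableSet_Iio]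
    congr 1
    funext y
    by_cases hy : y ∈ Set.Iio (1 : ℝ)
    · rw [Set.indicator_of_mem hy, hg, Set.indicator_of_mem hy, smul_eq_mul]
    · rw [Set.indicator_of_notMem hy, hg, Set.indicator_of_notMem hy, smul_zero]
  have h4 := intervalIntegral.integral_comp_mul_deriv (a := S) (b := T) (f := exp) (f' := exp)
    (fun x _ => Real.hasDerivAt_exp x) Real.continuous_exp.continuousOn hGc
  have h5 : ∀ t, |prof m u e t| ^ p = (G ∘ exp) t * exp t := by
    intro t
    simp only [prof, hG, Function.comp]
    rw [abs_mul, abs_of_pos (exp_pos _), mul_rpow (exp_pos _).le (abs_nonneg _), ← exp_mul,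
      mul_right_comm (exp t ^ (n - 1)), ← exp_nat_mul, ← exp_add]
    congr 2
    rw [Nat.cast_sub hn, Nat.cast_one, mul_right_comm, hmp]; ring
  simp only [h5]
  rw [h4, h3, intervalIntegral.integral_of_le (exp_le_exp.2 hST)]
  refine setIntegral_mono_set (hGc.integrableOn_Icc.mono_set Set.Ioc_subset_Icc_self) ?_ ?_
  · filter_upwards [ae_restrict_mem measurableSet_Ioc] with y hy
    have := hy.1
    simp only [hG, Pi.zero_apply]; positivity
  · exact (Set.Ioc_subset_Ioc (exp_pos _).le (exp_le_one_iff.2 hT)).eventuallyLE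

/-- A radial solution induces the data `RadSol`. -/
lemma radSol_of_radial {k : ℕ} {m q lam M' : ℝ} (hk : 0 < k) (hkn : 2 * k < n)
    (hm : m = ((n : ℝ) - 2 * k) / 2) (hq : m * q = 2 * k)
    {u : EuclideanSpace ℝ (Fin n) → ℝ} (hu : ContDiff ℝ (2 * k : ℕ) u)
    (hrad : ∀ x y : EuclideanSpace ℝ (Fin n), ‖x‖ = ‖y‖ → u x = u y)
    {e : EuclideanSpace ℝ (Fin n)} (he : ‖e‖ = 1)
    (heq : ∀ x ∈ ball (0 : EuclideanSpace ℝ (Fin n)) 1, iterLap k u x - lam * u x = |u x| ^ q * u x)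
    (hdir : ∀ x : EuclideanSpace ℝ (Fin n), ‖x‖ = 1 → ∀ j < k, iteratedFDeriv ℝ j u x (fun _ => x) = 0)
    (hnt : ∃ x ∈ closedBall (0 : EuclideanSpace ℝ (Fin n)) 1, u x ≠ 0)
    (hM : ∫ x in ball (0 : EuclideanSpace ℝ (Fin n)) 1, |u x| ^ (q + 2) ≤ M') :
    RadSol m q k lam (M' / (n * volume.real (ball (0 : EuclideanSpace ℝ (Fin n)) 1)))
      (fun j => opP (chainPoly (expo m k) j) (prof m u e)) := by
  have hnk : (2 * k : ℝ) < n := by exact_mod_cast hkn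
  have hm0 : 0 < m := by rw [hm]; linarith
  have hk0 : (0 : ℝ) < k := by exact_mod_cast hk
  have hq0 : 0 < q := by by_contra h; nlinarith
  have hφ : ContDiff ℝ (2 * k : ℕ) (prof m u e) := contDiff_prof hu
  have hch := chain_opP (expo m k) hφ
  have hux : ∀ x, x ≠ 0 → u x = exp (-m * Real.log ‖x‖) * prof m u e (Real.log ‖x‖) := by
    intro x hx
    have hx' : 0 < ‖x‖ := by simpa using hx
    rw [prof, ← mul_assoc, ← exp_add, Real.exp_log hx', neg_mul, neg_add_cancel, exp_zero, one_mul]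
    exact hrad _ _ (by rw [norm_smul, he]; simp)
  have hD0 : opP (chainPoly (expo m k) 0) (prof m u e) = prof m u e := opP_chainPoly_zero _ _
  have hlt : ∀ t < 0, opP (chainPoly (expo m k) (2 * k)) (prof m u e) t =
      fnl q (prof m u e t) + lam * exp (2 * k * t) * prof m u e t := by
    intro t ht
    have hx : ‖exp t • e‖ = exp t := by rw [norm_smul, he]; simp
    have hx0 : exp t • e ≠ 0 := by rw [← norm_pos_iff, hx]; exact exp_pos t
    have h1 := heq (exp t • e) (by rw [mem_ball_zero_iff, hx]; simpa using ht)
    rw [iterLap_radial (by rw [hm]; ring) hφ hux hx0, hx, Real.log_exp] at h1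
    have h2 : opP (chainPoly (expo m k) (2 * k)) (prof m u e) t = exp ((m + 2 * k) * t) *
        (|u (exp t • e)| ^ q * u (exp t • e) + lam * u (exp t • e)) := by
      rw [← h1, sub_add_cancel, ← mul_assoc, ← exp_add, neg_mul, add_neg_cancel, exp_zero, one_mul]
    rw [h2, fnl, prof, abs_mul, abs_of_pos (exp_pos _), mul_rpow (exp_pos _).le (abs_nonneg _),
      ← exp_mul, show m * t * q = 2 * k * t by rw [mul_right_comm, hq], add_mul, exp_add]
    ring
  have hcE := chain_prof (m := m) (e := e) hu
  obtain ⟨b, hb⟩ := iteratedDeriv_of_chain (fun j => m + j)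
  have hbE := hb _ _ hcE
  have hE0 : (fun t => exp ((m + (0 : ℕ)) * t) * iteratedDeriv 0 (fun s : ℝ => u (s • e)) (exp t)) =
      prof m u e := by funext t; simp [prof]
  simp only [hE0] at hbE
  have hg : ContDiff ℝ (2 * k : ℕ) (fun s : ℝ => u (s • e)) := hu.comp (by fun_prop)
  have hg1 : ∀ j < k, iteratedDeriv j (fun s : ℝ => u (s • e)) 1 = 0 := by
    intro j hj
    have h1 := ContinuousLinearMap.iteratedFDeriv_comp_right
      (ContinuousLinearMap.toSpanSingleton ℝ e) hu 1 (i := j) (by exact_mod_cast (by omega))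
    have h2 : u ∘ (ContinuousLinearMap.toSpanSingleton ℝ e) = fun s : ℝ => u (s • e) := by
      funext s; simp
    rw [h2] at h1
    rw [iteratedDeriv_eq_iteratedFDeriv, h1]
    simpa using hdir e he j hj
  refine ⟨hch, ?_, ?_, ?_, ?_, ?_⟩
  · intro t ht
    rw [hD0]
    have hc1 : Continuous (opP (chainPoly (expo m k) (2 * k)) (prof m u e)) :=
      continuous_opP hφ (Nat.lt_succ_iff.1 (natDegree_chainPoly _ _))
    have hc2 : Continuous fun t => fnl q (prof m u e t) + lam * exp (2 * k * t) * prof m u e t := by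
      have := (continuous_fnl hq0).comp hφ.continuous
      exact this.add ((by fun_prop : Continuous fun t => lam * exp (2 * k * t)).mul hφ.continuous)
    have hcl : IsClosed {t | opP (chainPoly (expo m k) (2 * k)) (prof m u e) t =
        fnl q (prof m u e t) + lam * exp (2 * k * t) * prof m u e t} := isClosed_eq hc1 hc2
    have hsub : closure (Set.Iio (0 : ℝ)) ⊆ _ := hcl.closure_subset_iff.2 hlt
    rw [closure_Iio] at hsub
    exact hsub ht
  · intro j hj
    have hj' := natDegree_chainPoly (expo m k) j
    rw [opP_eq_sum hj']
    refine Finset.sum_eq_zero fun i hi => ?_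
    have hi := Finset.mem_range.1 hi
    rw [hbE i (by omega)]
    refine mul_eq_zero_of_right _ (Finset.sum_eq_zero fun l hl => ?_)
    have hl := Finset.mem_range.1 hl
    rw [exp_zero, hg1 l (by omega)]
    simp
  · have hC : ∀ l, ∃ C, l ≤ 2 * k → ∀ s ∈ Set.Icc (0 : ℝ) 1,
        ‖iteratedDeriv l (fun s : ℝ => u (s • e)) s‖ ≤ C := by
      intro l
      by_cases hl : l ≤ 2 * k
      · obtain ⟨C, hC⟩ := isCompact_Icc.exists_bound_of_continuousOn (s := Set.Icc (0 : ℝ) 1)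
          (hg.continuous_iteratedDeriv l (by exact_mod_cast hl)).continuousOn
        exact ⟨C, fun _ => hC⟩
      · exact ⟨0, fun h => absurd h hl⟩
    choose C hC using hC
    have h1 : ∀ i ≤ 2 * k, ∀ t ≤ 0, |iteratedDeriv i (prof m u e) t| ≤
        (∑ l ∈ Finset.range (i + 1), |b i l| * |C l|) * exp (m * t) := by
      intro i hi t ht
      rw [hbE i hi, Finset.sum_mul]
      refine (Finset.abs_sum_le_sum_abs _ _).trans (Finset.sum_le_sum fun l hl => ?_)
      have hl := Finset.mem_range.1 hl
      have h2 := hC l (by omega) (exp t) ⟨(exp_pos t).le, exp_le_one_iff.2 ht⟩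
      rw [abs_mul, abs_mul, abs_of_pos (exp_pos _), mul_assoc, mul_comm |C l|]
      rw [Real.norm_eq_abs] at h2
      refine mul_le_mul_of_nonneg_left ?_ (abs_nonneg _)
      refine mul_le_mul (exp_le_exp.2 ?_) (h2.trans (le_abs_self _)) (abs_nonneg _) (exp_pos _).le
      have : (0 : ℝ) ≤ l := Nat.cast_nonneg l
      nlinarith
    set B : ℕ → ℝ := fun j => ∑ i ∈ Finset.range (j + 1), |(chainPoly (expo m k) j).coeff i| *
      ∑ l ∈ Finset.range (i + 1), |b i l| * |C l| with hB
    have hB0 : ∀ j, 0 ≤ B j := fun j => by simp only [hB]; positivity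
    refine ⟨∑ j ∈ Finset.range (2 * k), B j + 1, by
      have := Finset.sum_nonneg fun j (_ : j ∈ Finset.range (2 * k)) => hB0 j
      linarith, fun j hj t ht => ?_⟩
    have h3 : |opP (chainPoly (expo m k) j) (prof m u e) t| ≤ B j * exp (m * t) := by
      rw [opP_eq_sum (natDegree_chainPoly (expo m k) j), hB, Finset.sum_mul]
      refine (Finset.abs_sum_le_sum_abs _ _).trans (Finset.sum_le_sum fun i hi => ?_)
      have hi := Finset.mem_range.1 hi
      rw [abs_mul, mul_assoc]
      exact mul_le_mul_of_nonneg_left (h1 i (by omega) t ht) (abs_nonneg _)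
    refine h3.trans ?_
    gcongr
    have := Finset.single_le_sum (f := B) (fun i _ => hB0 i) (Finset.mem_range.2 hj)
    linarith
  · intro S T hST hT
    simp only [hD0]
    refine prof_int (by omega) ?_ (by linarith) hu.continuous hrad he hM hST hT
    rw [mul_add, hq, hm]; ring
  · simp only [hD0]
    by_contra! hall
    have hz : ∀ x ∈ closedBall (0 : EuclideanSpace ℝ (Fin n)) 1, x ≠ 0 → u x = 0 := by
      intro x hx hx0
      have hx' : 0 < ‖x‖ := by simpa using hx0
      rw [hux x hx0, hall _ (Real.log_nonpos hx'.le (by simpa using hx)), mul_zero]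
    obtain ⟨x, hx, hxu⟩ := hnt
    rcases eq_or_ne x 0 with rfl | hx0
    · have h1 : Tendsto (fun s : ℝ => u (s • e)) (𝓝[>] 0) (𝓝 (u ((0 : ℝ) • e))) :=
        (hg.continuous.tendsto 0).mono_left nhdsWithin_le_nhds
      have h2 : Tendsto (fun s : ℝ => u (s • e)) (𝓝[>] 0) (𝓝 0) := by
        refine tendsto_const_nhds.congr' ?_
        filter_upwards [Ioo_mem_nhdsGT (zero_lt_one' ℝ)] with s hs
        refine (hz _ ?_ ?_).symm
        · rw [mem_closedBall_zero_iff, norm_smul, he, mul_one, Real.norm_eq_abs, abs_of_pos hs.1]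
          exact hs.2.le
        · rw [← norm_pos_iff, norm_smul, he, mul_one, Real.norm_eq_abs, abs_of_pos hs.1]
          exact hs.1
      rw [zero_smul] at h1
      exact hxu (tendsto_nhds_unique h1 h2)
    · exact hxu (hz x hx hx0)

end Extract

/-! ### A priori estimates for radial solutions -/

namespace RadSol

variable {m q lam M' : ℝ} {k : ℕ} {D : ℕ → ℝ → ℝ}

lemma hasDerivAt (h : RadSol m q k lam M' D) {j : ℕ} (hj : j < 2 * k) (t : ℝ) :
    HasDerivAt (D j) (expo m k j * D j t + D (j + 1) t) t := h.chain.2 j hj t (by simp)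

lemma continuous (h : RadSol m q k lam M' D) {j : ℕ} (hj : j < 2 * k) : Continuous (D j) :=
  continuousOn_univ.1 (h.chain.1 j hj)

lemma bound_nonneg (h : RadSol m q k lam M' D) : 0 ≤ M' := by
  simpa using h.int 0 0 le_rfl le_rfl

/-- For odd `k` the Dirichlet problem has no nontrivial radial solution: with the sign convention
`Δ^k u = λ u + |u|^q u` the equation is then repulsive, and `halfline_zero` needs no condition on `D k 0`. -/
lemma even (hk : 0 < k) (hm : 0 < m) (hq : 0 < q) (hmq : m * q = 2 * k) (hlam : 0 < lam)
    (h : RadSol m q k lam M' D) : Even k := by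
  by_contra hodd
  obtain ⟨C, hC, hdec⟩ := h.decay
  obtain ⟨t0, ht0, hne⟩ := h.nontriv
  have hk' : (0 : ℝ) < k := by exact_mod_cast hk
  refine hne (halfline_zero (γ := 2 * k) (C := max C (C ^ q + lam)) hk (by positivity)
    (lt_max_of_lt_left hC) (h.chain.mono (Set.subset_univ _))
    (fun j h1 _ => by have := expo_neg (m := m) h1; linarith) ?_ h.dir
    (fun he => absurd he hodd) ?_ ?_ t0 ht0)
  · intro j hj t ht
    refine (hdec j hj t ht).trans (le_trans ?_ (le_max_left _ _))
    have : exp (m * t) ≤ 1 := exp_le_one_iff.2 (mul_nonpos_of_nonneg_of_nonpos hm.le ht)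
    nlinarith
  · intro σ t ht hs
    rw [h.eqn t ht.le, fnl, ← add_mul] at hs
    have hp : 0 < |D 0 t| ^ q + lam * exp (2 * k * t) := by positivity
    have : 0 < (|D 0 t| ^ q + lam * exp (2 * k * t)) * (σ * D 0 t) := by
      rw [show (|D 0 t| ^ q + lam * exp (2 * k * t)) * (σ * D 0 t) =
        σ * ((|D 0 t| ^ q + lam * exp (2 * k * t)) * D 0 t) by ring]
      exact hs
    exact (mul_pos_iff_of_pos_left hp).1 this
  · intro t ht
    rw [h.eqn t ht.le]
    have h1 := abs_fnl_le hq (hdec 0 (by omega) t ht.le)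
    rw [mul_rpow hC.le (exp_pos _).le, ← exp_mul, show m * t * q = 2 * k * t by
      rw [← hmq]; ring] at h1
    have h2 : |lam * exp (2 * k * t) * D 0 t| = lam * exp (2 * k * t) * |D 0 t| := by
      rw [abs_mul, abs_of_pos (by positivity)]
    refine (abs_add_le _ _).trans ?_
    rw [h2]
    have h3 : (C ^ q + lam) * exp (2 * k * t) * |D 0 t| ≤
        max C (C ^ q + lam) * exp (2 * k * t) * |D 0 t| := by
      gcongr
      exact le_max_right _ _
    linarith

/-- Regularity at the origin gives arbitrarily early times at which all quasi-derivatives are small. -/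
lemma exists_small (hm : 0 < m) (h : RadSol m q k lam M' D) {ε : ℝ} (hε : 0 < ε) (T : ℝ) :
    ∃ S, S ≤ T ∧ S ≤ 0 ∧ ∀ j < 2 * k, |D j S| ≤ ε := by
  obtain ⟨C, hC, hdec⟩ := h.decay
  have h1 : Tendsto (fun t => C * exp (m * t)) atBot (𝓝 0) := by
    simpa using (tendsto_exp_atBot.comp (tendsto_id.const_mul_atBot hm)).const_mul C
  obtain ⟨S, hS, hS1, hS2⟩ := ((h1.eventually (gt_mem_nhds hε)).and
    ((eventually_le_atBot T).and (eventually_le_atBot 0))).exists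
  exact ⟨S, hS1, hS2, fun j hj => (hdec j hj S hS2).trans hS.le⟩

/-- The last quasi-derivative is bounded in terms of the critical norm alone. -/
lemma bound_last (hk : 0 < k) (hm : 0 < m) (hq : 0 < q) (hlam : 0 < lam) (hlam1 : lam ≤ 1)
    (h : RadSol m q k lam M' D) {t : ℝ} (ht : t ≤ 0) :
    |D (2 * k - 1) t| ≤ 1 + 2 / m + 2 * M' := by
  obtain ⟨S, hSt, hS0, hS⟩ := h.exists_small hm one_pos t
  have hexpo : expo m k (2 * k - 1) = -m := by
    rw [expo_ge (by omega), show 2 * k - 1 - (2 * k - 1) = 0 by omega]; simp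
  have hφ : Continuous (D 0) := h.continuous (by omega)
  have hφp : Continuous fun s => |D 0 s| ^ (q + 2) :=
    (hφ.abs).rpow_const fun _ => Or.inr (by linarith)
  have hz : ∀ s, HasDerivAt (fun s => exp (m * s) * D (2 * k - 1) s)
      (exp (m * s) * D (2 * k) s) s := by
    intro s
    have h1 := h.hasDerivAt (j := 2 * k - 1) (by omega) s
    rw [hexpo, show 2 * k - 1 + 1 = 2 * k by omega] at h1
    exact ((hasDerivAt_exp_mul m s).mul h1).congr_deriv (by ring)
  have hB : ∀ s, HasDerivAt (fun s => exp (m * S) + exp (m * s) * (2 / m + 2 * ∫ r in S..s, |D 0 r| ^ (q + 2)))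
      (m * exp (m * s) * (2 / m + 2 * ∫ r in S..s, |D 0 r| ^ (q + 2)) +
        exp (m * s) * (2 * |D 0 s| ^ (q + 2))) s := by
    intro s
    exact (((hasDerivAt_exp_mul m s).mul
      (((hφp.integral_hasStrictDerivAt S s).hasDerivAt.const_mul 2).const_add (2 / m))).const_add _)
  -- `|D (2k)| ≤ 2 + 2 |D 0|^{q+2}` is integrated against the weight `e^{m s}` of the last factor
  have key := image_norm_le_of_norm_deriv_right_le_deriv_boundary (a := S) (b := t)
    (f := fun s => exp (m * s) * D (2 * k - 1) s) (f' := fun s => exp (m * s) * D (2 * k) s)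
    (fun s _ => (hz s).continuousAt.continuousWithinAt)
    (fun s _ => (hz s).hasDerivWithinAt) (B := _) (B' := _) ?_ hB ?_ ⟨hSt, le_rfl⟩
  · have h1 : exp (m * S) ≤ exp (m * t) := exp_le_exp.2 (by nlinarith)
    have h2 := h.int S t hSt ht
    rw [Real.norm_eq_abs, abs_mul, abs_of_pos (exp_pos _)] at key
    have h3 : exp (m * t) * |D (2 * k - 1) t| ≤ exp (m * t) * (1 + 2 / m + 2 * M') := by
      refine key.trans ?_
      nlinarith [exp_pos (m * t)]
    exact le_of_mul_le_mul_left h3 (exp_pos _)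
  · rw [Real.norm_eq_abs, abs_mul, abs_of_pos (exp_pos _)]
    have h1 := hS (2 * k - 1) (by omega)
    simp only [intervalIntegral.integral_same]
    have : 0 < exp (m * S) * (2 / m + 2 * 0) := by positivity
    nlinarith [exp_pos (m * S)]
  · intro s hs
    have hs0 : s ≤ 0 := hs.2.le.trans ht
    rw [Real.norm_eq_abs, abs_mul, abs_of_pos (exp_pos _), h.eqn s hs0]
    have hi : 0 ≤ ∫ r in S..s, |D 0 r| ^ (q + 2) :=
      intervalIntegral.integral_nonneg hs.1 fun r _ => by positivity
    have h1 : |fnl q (D 0 s) + lam * exp (2 * k * s) * D 0 s| ≤ 2 + 2 * |D 0 s| ^ (q + 2) := by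
      refine (abs_add_le _ _).trans ?_
      rw [abs_fnl, abs_mul]
      have h2 : |lam * exp (2 * k * s)| ≤ 1 := by
        rw [abs_of_pos (by positivity)]
        have : exp (2 * k * s) ≤ 1 := exp_le_one_iff.2 (mul_nonpos_of_nonneg_of_nonpos (by positivity) hs0)
        nlinarith [exp_pos (2 * k * s)]
      have h0 := abs_nonneg (D 0 s)
      have h3 : |lam * exp (2 * k * s)| * |D 0 s| ≤ |D 0 s| := by nlinarith
      have hp : 0 ≤ |D 0 s| ^ (q + 2) := by positivity
      rcases le_total |D 0 s| 1 with h4 | h4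
      · have : |D 0 s| ^ q ≤ 1 := rpow_le_one h0 h4 hq.le
        nlinarith [rpow_nonneg h0 q]
      · have h5 : |D 0 s| ^ (q + 2) = |D 0 s| ^ q * |D 0 s| * |D 0 s| := by
          rw [rpow_add (by linarith), rpow_two]; ring
        have h6 : 1 ≤ |D 0 s| ^ q := one_le_rpow h4 hq.le
        have h7 : |D 0 s| ^ q * |D 0 s| ≤ |D 0 s| ^ (q + 2) := by
          rw [h5]; exact le_mul_of_one_le_right (by positivity) h4
        have h8 : |D 0 s| ≤ |D 0 s| ^ q * |D 0 s| := le_mul_of_one_le_left h0 h6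
        linarith
    have h2 : m * exp (m * s) * (2 / m + 2 * ∫ r in S..s, |D 0 r| ^ (q + 2)) =
        exp (m * s) * 2 + m * exp (m * s) * (2 * ∫ r in S..s, |D 0 r| ^ (q + 2)) := by
      field_simp
    rw [h2]
    have h3 : 0 ≤ m * exp (m * s) * (2 * ∫ r in S..s, |D 0 r| ^ (q + 2)) := by positivity
    nlinarith [exp_pos (m * s)]

/-- A bound of `D (j + 1)` passes to `D j`: factors with positive exponent are integrated from `t = 0`
if the data vanish there, factors with negative exponent from a time given by `exists_small`. -/
lemma bound_step (hm : 0 < m) (h : RadSol m q k lam M' D) {j : ℕ} (hj : j < 2 * k) {G : ℝ}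
    (hG : 0 ≤ G) (hb : ∀ t ≤ 0, |D (j + 1) t| ≤ G) {t : ℝ} (ht : t ≤ 0) :
    |D j t| ≤ G / m + 1 := by
  have hc := h.continuous hj
  rcases lt_or_ge j k with hjk | hjk
  · have h1 := fo_right (S := t) (T := 0) (ρ := fun _ => 1) (ρ' := fun _ => 0) (G := G) hm
      hc.continuousOn (fun s _ => h.hasDerivAt hj s) (fun s => hasDerivAt_const _ _)
      (fun _ => zero_le_one) (fun _ => by have := expo_pos (m := m) hjk; linarith)
      (fun s hs => by simpa using hb s hs.2.le) hG t ⟨le_rfl, ht⟩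
    rw [h.dir j hjk] at h1
    simp only [abs_zero, mul_zero, mul_one, add_zero] at h1
    linarith
  · obtain ⟨S, hSt, hS0, hS⟩ := h.exists_small hm one_pos t
    have ha := expo_neg (m := m) hjk
    have h1 := fo_left (S := S) (T := t) (ρ := fun _ => 1) (ρ' := fun _ => 0) (G := G) hm
      hc.continuousOn (fun s _ => h.hasDerivAt hj s) (fun s => hasDerivAt_const _ _)
      (fun _ => zero_le_one) (fun _ => by linarith)
      (fun s hs => by simpa using hb s (hs.2.le.trans ht)) hG t ⟨hSt, le_rfl⟩
    have h2 : exp (expo m k j * (t - S)) ≤ 1 := exp_le_one_iff.2 (by nlinarith)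
    have h3 := hS j hj
    have h4 := abs_nonneg (D j S)
    nlinarith [exp_pos (expo m k j * (t - S))]

end RadSol

/-- Uniform bound for all quasi-derivatives, depending only on the bound of the critical norm. -/
lemma radSol_bound {m q M' : ℝ} {k : ℕ} (hk : 0 < k) (hm : 0 < m) (hq : 0 < q) :
    ∃ C, 0 < C ∧ ∀ (lam : ℝ) (D : ℕ → ℝ → ℝ), 0 < lam → lam ≤ 1 → RadSol m q k lam M' D →
      ∀ j < 2 * k, ∀ t ≤ 0, |D j t| ≤ C := by
  rcases lt_or_ge M' 0 with hM | hM
  · exact ⟨1, one_pos, fun lam D _ _ h => absurd h.bound_nonneg (not_le.2 hM)⟩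
  have key : ∀ i : ℕ, ∃ C, 0 < C ∧ ∀ (lam : ℝ) (D : ℕ → ℝ → ℝ), 0 < lam → lam ≤ 1 →
      RadSol m q k lam M' D → ∀ j < 2 * k, 2 * k - 1 - i ≤ j → ∀ t ≤ 0, |D j t| ≤ C := by
    intro i
    induction i with
    | zero =>
      refine ⟨1 + 2 / m + 2 * M', by positivity, fun lam D h1 h2 h j hj hj' t ht => ?_⟩
      obtain rfl : j = 2 * k - 1 := by omega
      exact h.bound_last hk hm hq h1 h2 ht
    | succ i ih =>
      obtain ⟨C, hC, ih⟩ := ih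
      refine ⟨max C (C / m + 1), lt_max_of_lt_left hC, fun lam D h1 h2 h j hj hj' t ht => ?_⟩
      rcases le_or_gt (2 * k - 1 - i) j with h3 | h3
      · exact (ih lam D h1 h2 h j hj h3 t ht).trans (le_max_left _ _)
      · exact (h.bound_step hm hj hC.le (ih lam D h1 h2 h (j + 1) (by omega) (by omega)) ht).trans
          (le_max_right _ _)
  obtain ⟨C, hC, h⟩ := key (2 * k)
  exact ⟨C, hC, fun lam D h1 h2 hD j hj => h lam D h1 h2 hD j hj (by omega)⟩

/-! ### Compactness of bounded families of solutions -/

lemma continuousOn_of_Icc {f : ℝ → ℝ} {J : Set ℝ}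
    (h : ∀ S T, T ∈ J → ContinuousOn f (Set.Icc S T)) : ContinuousOn f J := by
  intro t ht
  by_cases hT : ∃ T ∈ J, t < T
  · obtain ⟨T, hT, htT⟩ := hT
    exact ((h (t - 1) T hT).continuousAt (Icc_mem_nhds (by linarith) htT)).continuousWithinAt
  · push Not at hT
    refine (h (t - 1) t ht t ⟨by linarith, le_rfl⟩).mono_of_mem_nhdsWithin ?_
    have h1 : Set.Ioi (t - 1) ∈ 𝓝[J] t := mem_nhdsWithin_of_mem_nhds (Ioi_mem_nhds (by linarith))
    filter_upwards [h1, self_mem_nhdsWithin] with x hx hxJ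
    exact ⟨le_of_lt hx, hT x hxJ⟩

/-- A uniform limit of chains is a chain. -/
lemma chainOn_of_limit {a : ℕ → ℝ} {N : ℕ} {E : ℕ → ℕ → ℝ → ℝ} {F : ℕ → ℝ → ℝ} {J : Set ℝ}
    (hE : ∀ i, ChainOn a N (E i) Set.univ)
    (hF : ∀ S T, T ∈ J → ∀ j ≤ N, TendstoUniformlyOn (fun i => E i j) (F j) atTop (Set.Icc S T)) :
    ChainOn a N F J := by
  refine ⟨fun j hj => continuousOn_of_Icc fun S T hT => ?_, fun j hj t ht => ?_⟩
  · exact (hF S T hT j hj.le).continuousOn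
      (Frequently.of_forall fun i => ((hE i).1 j hj).mono (Set.subset_univ _))
  · obtain ⟨δ, hδ, hball⟩ := Metric.isOpen_iff.1 isOpen_interior t ht
    have hT : t + δ / 2 ∈ J := interior_subset (hball (by
      rw [Metric.mem_ball, Real.dist_eq]; rw [show t + δ / 2 - t = δ / 2 by ring, abs_of_pos] <;> linarith))
    have hsub : Set.Ioo (t - δ / 2) (t + δ / 2) ⊆ Set.Icc (t - δ / 2) (t + δ / 2) :=
      Set.Ioo_subset_Icc_self
    have h0 := (hF (t - δ / 2) _ hT j hj.le).mono hsub
    have h1 := (hF (t - δ / 2) _ hT (j + 1) hj).mono hsub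
    refine hasDerivAt_of_tendstoUniformlyOn (l := atTop) (f := fun i => E i j)
      (f' := fun i s => a j * E i j s + E i (j + 1) s)
      (g' := fun s => a j * F j s + F (j + 1) s) isOpen_Ioo ?_
      (Eventually.of_forall fun i s _ => (hE i).2 j hj s (by simp))
      (fun s hs => h0.tendsto_at hs) (show t ∈ Set.Ioo (t - δ / 2) (t + δ / 2) from
        ⟨by linarith, by linarith⟩)
    exact ((uniformContinuous_const_smul (a j)).comp_tendstoUniformlyOn h0).add h1

/-- Bounded families of approximate solutions of the limit equation are precompact, locally uniformly
together with all quasi-derivatives. -/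
lemma chain_compact {a : ℕ → ℝ} {N : ℕ} {q C : ℝ} {η : ℕ → ℝ} {E : ℕ → ℕ → ℝ → ℝ} {J : Set ℝ}
    (hN : 0 < N) (hq : 0 < q) (hC : 0 < C)
    (hJ : ∀ x ∈ J, ∀ x' ≤ x, x' ∈ J) (hJ0 : (0 : ℝ) ∈ J) (hE : ∀ i, ChainOn a N (E i) Set.univ)
    (hη : Tendsto η atTop (𝓝 0))
    (hb : ∀ T ∈ J, ∀ᶠ i in atTop, ∀ t ≤ T, (∀ j < N, |E i j t| ≤ C) ∧
      |E i N t - fnl q (E i 0 t)| ≤ η i) :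
    ∃ φ : ℕ → ℕ, StrictMono φ ∧ ∃ F : ℕ → ℝ → ℝ, ChainOn a N F J ∧
      (∀ j < N, ∀ t ∈ J, |F j t| ≤ C) ∧ (∀ t, F N t = fnl q (F 0 t)) ∧
      ∀ S T, T ∈ J → ∀ j ≤ N, TendstoUniformlyOn (fun i => E (φ i) j) (F j) atTop (Set.Icc S T) := by
  -- a subsequence along which the jets at `0` converge
  obtain ⟨x, -, φ, hφ, hx⟩ := (isCompact_closedBall (0 : Fin N → ℝ) C).tendsto_subseq'
    (x := fun i (j : Fin N) => E i j 0) (by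
      refine Eventually.frequently ?_
      filter_upwards [hb 0 hJ0] with i hi
      rw [mem_closedBall_zero_iff, pi_norm_le_iff_of_nonneg hC.le]
      intro j
      simpa using (hi 0 le_rfl).1 j j.2)
  have hφt := hφ.tendsto_atTop
  have hη' : Tendsto (fun i => η (φ i)) atTop (𝓝 0) := hη.comp hφt
  have hb' : ∀ T ∈ J, ∀ᶠ i in atTop, ∀ t ≤ T, (∀ j < N, |E (φ i) j t| ≤ C) ∧
      |E (φ i) N t - fnl q (E (φ i) 0 t)| ≤ η (φ i) := fun T hT => hφt.eventually (hb T hT)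
  obtain ⟨K, hK, hgron⟩ := chain_gronwall a N ((q + 1) * C ^ q)
  -- the differences are small, by Gronwall from the jets at `0`
  have hcauchy : ∀ S T, T ∈ J → ∀ j < N,
      UniformCauchySeqOn (fun i => E (φ i) j) atTop (Set.Icc S T) := by
    intro S T hT j hj
    rw [Metric.uniformCauchySeqOn_iff]
    intro ε hε
    set B := |S| + |T| with hB
    have hQ : Tendsto (fun p : ℕ × ℕ => ((∑ j ∈ Finset.range N, (E (φ p.1) j 0 - E (φ p.2) j 0) ^ 2) +
        (η (φ p.1) + η (φ p.2)) ^ 2) * exp (K * B)) (atTop ×ˢ atTop) (𝓝 0) := by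
      have h1 : ∀ j ∈ Finset.range N, Tendsto (fun p : ℕ × ℕ => (E (φ p.1) j 0 - E (φ p.2) j 0) ^ 2)
          (atTop ×ˢ atTop) (𝓝 0) := by
        intro j hj
        have h2 := (tendsto_pi_nhds.1 hx) ⟨j, Finset.mem_range.1 hj⟩
        simpa using ((h2.comp tendsto_fst).sub (h2.comp tendsto_snd)).pow 2
      have h3 := tendsto_finsetSum _ h1
      have h4 := (((hη'.comp tendsto_fst).add (hη'.comp tendsto_snd)).pow 2 :
        Tendsto _ (atTop ×ˢ atTop) _)
      simpa using (h3.add h4).mul_const (exp (K * B))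
    have hev := hQ.eventually (gt_mem_nhds (show 0 < ε ^ 2 by positivity))
    have hT0 : max T 0 ∈ J := by rcases max_choice T 0 with h | h <;> rw [h] <;> assumption
    have hbT := hb' _ hT0
    rw [prod_atTop_atTop_eq] at hev
    obtain ⟨n1, hn1⟩ := eventually_atTop.1 hev
    obtain ⟨n2, hn2⟩ := eventually_atTop.1 hbT
    refine ⟨max (max n1.1 n1.2) n2, fun i hi l hl t ht => ?_⟩
    have hil := hn1 (i, l) ⟨by simp at hi ⊢; omega, by simp at hl ⊢; omega⟩
    have hi2 := hn2 i (by simp at hi; omega)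
    have hl2 := hn2 l (by simp at hl; omega)
    have hg := hgron (fun j t => E (φ i) j t - E (φ l) j t) (min S 0) (max T 0)
      (η (φ i) + η (φ l)) hN (((hE _).sub (hE _)).mono (Set.subset_univ _)) (by
        intro s hs
        obtain ⟨h1, h2⟩ := hi2 s hs.2.le
        obtain ⟨h3, h4⟩ := hl2 s hs.2.le
        have h5 := fnl_lip hq (h1 0 hN) (h3 0 hN)
        rw [show E (φ i) N s - E (φ l) N s = (E (φ i) N s - fnl q (E (φ i) 0 s)) -
          (E (φ l) N s - fnl q (E (φ l) 0 s)) + (fnl q (E (φ i) 0 s) - fnl q (E (φ l) 0 s)) by ring]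
        have h6 := abs_add_le ((E (φ i) N s - fnl q (E (φ i) 0 s)) -
          (E (φ l) N s - fnl q (E (φ l) 0 s))) (fnl q (E (φ i) 0 s) - fnl q (E (φ l) 0 s))
        have h7 := abs_sub (E (φ i) N s - fnl q (E (φ i) 0 s)) (E (φ l) N s - fnl q (E (φ l) 0 s))
        linarith)
      0 ⟨min_le_right _ _, le_max_right _ _⟩ t
      ⟨(min_le_left _ _).trans ht.1, ht.2.trans (le_max_left _ _)⟩
    rw [Real.dist_eq]
    refine abs_lt_of_sq_lt_sq ?_ hε.le
    have h1 : (E (φ i) j t - E (φ l) j t) ^ 2 ≤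
        ∑ j ∈ Finset.range N, (E (φ i) j t - E (φ l) j t) ^ 2 :=
      Finset.single_le_sum (f := fun j => (E (φ i) j t - E (φ l) j t) ^ 2)
        (fun _ _ => sq_nonneg _) (Finset.mem_range.2 hj)
    have h2 : |t - 0| ≤ B := by
      rw [sub_zero, abs_le, hB]
      constructor
      · linarith [neg_abs_le S, abs_nonneg T, ht.1]
      · linarith [le_abs_self T, abs_nonneg S, ht.2]
    have h3 : exp (K * |t - 0|) ≤ exp (K * B) := exp_le_exp.2 (mul_le_mul_of_nonneg_left h2 hK)
    have h4 : ((∑ j ∈ Finset.range N, (E (φ i) j 0 - E (φ l) j 0) ^ 2) +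
        (η (φ i) + η (φ l)) ^ 2) * exp (K * |t - 0|) ≤
        ((∑ j ∈ Finset.range N, (E (φ i) j 0 - E (φ l) j 0) ^ 2) +
        (η (φ i) + η (φ l)) ^ 2) * exp (K * B) :=
      mul_le_mul_of_nonneg_left h3
        (add_nonneg (Finset.sum_nonneg fun _ _ => sq_nonneg _) (sq_nonneg _))
    have h5 := sq_nonneg (η (φ i) + η (φ l))
    simp only at hg hil
    linarith
  set F : ℕ → ℝ → ℝ := fun j t => if j < N then limUnder atTop (fun i => E (φ i) j t)
    else fnl q (limUnder atTop (fun i => E (φ i) 0 t)) with hFdef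
  have hpt : ∀ j < N, ∀ t ∈ J, Tendsto (fun i => E (φ i) j t) atTop (𝓝 (F j t)) := by
    intro j hj t ht
    simp only [hFdef, if_pos hj]
    exact ((hcauchy t t ht j hj).cauchySeq ⟨le_rfl, le_rfl⟩).tendsto_limUnder
  have hbF : ∀ j < N, ∀ t ∈ J, |F j t| ≤ C := by
    intro j hj t ht
    refine le_of_tendsto (hpt j hj t ht).abs ?_
    filter_upwards [hb' t ht] with i hi using (hi t le_rfl).1 j hj
  have hFN : ∀ t, F N t = fnl q (F 0 t) := fun t => by simp [hFdef, hN]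
  have huni : ∀ S T, T ∈ J → ∀ j < N,
      TendstoUniformlyOn (fun i => E (φ i) j) (F j) atTop (Set.Icc S T) := fun S T hT j hj =>
    (hcauchy S T hT j hj).tendstoUniformlyOn_of_tendsto fun t ht => hpt j hj t (hJ T hT t ht.2)
  have huni' : ∀ S T, T ∈ J → ∀ j ≤ N,
      TendstoUniformlyOn (fun i => E (φ i) j) (F j) atTop (Set.Icc S T) := by
    intro S T hT j hj
    rcases hj.lt_or_eq with hj | rfl
    · exact huni S T hT j hj
    rw [Metric.tendstoUniformlyOn_iff]
    intro ε hε
    set L := (q + 1) * C ^ q with hL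
    have hL0 : 0 < L := by positivity
    have h1 := Metric.tendstoUniformlyOn_iff.1 (huni S T hT 0 hN) (ε / (2 * L)) (by positivity)
    filter_upwards [h1, hb' T hT, hη'.eventually (gt_mem_nhds (half_pos hε))] with i h1 h2 h3 t ht
    obtain ⟨h4, h5⟩ := h2 t ht.2
    have h6 := fnl_lip hq (h4 0 hN) (hbF 0 hN t (hJ T hT t ht.2))
    have h7 := h1 t ht
    rw [dist_comm, Real.dist_eq] at h7 ⊢
    rw [hFN]
    have h8 : L * |E (φ i) 0 t - F 0 t| < ε / 2 := by
      calc _ < L * (ε / (2 * L)) := mul_lt_mul_of_pos_left h7 hL0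
        _ = ε / 2 := by field_simp
    have h9 := abs_add_le (E (φ i) j t - fnl q (E (φ i) 0 t)) (fnl q (E (φ i) 0 t) - fnl q (F 0 t))
    rw [sub_add_sub_cancel] at h9
    linarith
  exact ⟨φ, hφ, F, chainOn_of_limit (fun i => hE _) huni', hbF, hFN, huni'⟩

/-! ### Decay of finite-energy limits -/

/-- A function on `(-∞, 0]` with bounded derivative and finite `L^p` norm tends to zero. -/
lemma tendsto_zero_of_int {y y' : ℝ → ℝ} {p B M' : ℝ} (hp : 0 < p)
    (hy : ContinuousOn y (Set.Iic 0)) (hy'c : ContinuousOn y' (Set.Iic 0))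
    (hy' : ∀ t < 0, HasDerivAt y (y' t) t) (hb : ∀ t ≤ 0, |y t| ≤ B) (hb' : ∀ t ≤ 0, |y' t| ≤ B)
    (hint : ∀ S T, S ≤ T → T ≤ 0 → ∫ t in S..T, |y t| ^ p ≤ M') : Tendsto y atBot (𝓝 0) := by
  have hsub : Set.Iic (-1 : ℝ) ⊆ Set.Iic 0 := Set.Iic_subset_Iic.2 (by norm_num)
  have hyp : ContinuousOn (fun t => |y t| ^ p) (Set.Iic 0) :=
    hy.abs.rpow_const fun _ _ => Or.inr hp.le
  have hI : IntegrableOn (fun t => |y t| ^ p) (Set.Iic (-1)) := by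
    refine integrableOn_Iic_of_intervalIntegral_norm_bounded (l := atBot) (a := id) M' (-1)
      (fun i => ?_) tendsto_id ?_
    · exact ((hyp.mono fun x hx => by have := hx.2; simp only [Set.mem_Iic]; linarith).integrableOn_Icc
        (a := i) (b := -1)).mono_set Set.Ioc_subset_Icc_self
    · filter_upwards [eventually_le_atBot (-1)] with S hS
      simp only [Real.norm_eq_abs, abs_of_nonneg (rpow_nonneg (abs_nonneg _) p)]
      exact hint S (-1) hS (by norm_num)
  have hf : ∀ t ∈ Set.Iic (-1 : ℝ), HasDerivAt (fun t => fnl p (y t)) ((p + 1) * |y t| ^ p * y' t) t := by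
    intro t ht
    exact (hasDerivAt_fnl hp (y t)).comp t (hy' t (lt_of_le_of_lt ht (by norm_num)))
  have h1 : IntegrableOn (fun t => (p + 1) * |y t| ^ p * y' t) (Set.Iic (-1)) := by
    refine Integrable.mono' (g := fun t => (p + 1) * B * |y t| ^ p) (hI.const_mul _) ?_ ?_
    · exact (((continuousOn_const.mul hyp).mul hy'c).mono hsub).aestronglyMeasurable measurableSet_Iic
    · refine (ae_restrict_iff' measurableSet_Iic).2 (Eventually.of_forall fun t ht => ?_)
      rw [Real.norm_eq_abs, abs_mul, abs_of_nonneg (by positivity)]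
      calc (p + 1) * |y t| ^ p * |y' t| ≤ (p + 1) * |y t| ^ p * B := by
            gcongr; exact hb' t (hsub ht)
        _ = _ := by ring
  have h2 : IntegrableOn (fun t => fnl p (y t)) (Set.Iic (-1)) := by
    refine Integrable.mono' (g := fun t => B * |y t| ^ p) (hI.const_mul _) ?_ ?_
    · exact (((continuous_fnl hp).comp_continuousOn hy).mono hsub).aestronglyMeasurable measurableSet_Iic
    · refine (ae_restrict_iff' measurableSet_Iic).2 (Eventually.of_forall fun t ht => ?_)
      rw [Real.norm_eq_abs, abs_fnl, mul_comm]
      gcongr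
      exact hb t (hsub ht)
  -- `|y|^p y` is integrable together with its derivative, hence tends to zero
  have h3 := (tendsto_zero_of_hasDerivAt_of_integrableOn_Iic hf h1 h2).abs
  have h4 := (h3.rpow_const (p := 1 / (p + 1)) (Or.inr (by positivity)))
  rw [abs_zero, zero_rpow (by positivity)] at h4
  refine (tendsto_zero_iff_abs_tendsto_zero _).2 (h4.congr fun t => ?_)
  simp only [Function.comp]
  rw [abs_fnl]
  rcases eq_or_ne (y t) 0 with h | h
  · rw [h]; simp [zero_rpow (show p ≠ 0 by positivity), zero_rpow (show (p + 1)⁻¹ ≠ 0 by positivity)]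
  · have h5 : 0 < |y t| := abs_pos.2 h
    rw [← rpow_add_one h5.ne', ← rpow_mul h5.le, mul_one_div_cancel (by positivity), rpow_one]

/-- The `L^p` bound survives locally uniform limits. -/
lemma int_limit {y : ℝ → ℝ} {Y : ℕ → ℝ → ℝ} {p C M' S T : ℝ} (hp : 0 < p) (hST : S ≤ T)
    (hY : ∀ i, Continuous (Y i)) (hb : ∀ᶠ i in atTop, ∀ t ≤ T, |Y i t| ≤ C)
    (hlim : ∀ t ∈ Set.Icc S T, Tendsto (fun i => Y i t) atTop (𝓝 (y t)))
    (hint : ∀ᶠ i in atTop, ∫ t in S..T, |Y i t| ^ p ≤ M') : ∫ t in S..T, |y t| ^ p ≤ M' := by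
  refine le_of_tendsto (intervalIntegral.tendsto_integral_filter_of_dominated_convergence
    (F := fun i t => |Y i t| ^ p) (fun _ => C ^ p) ?_ ?_ ?_ ?_) hint
  · exact Eventually.of_forall fun i =>
      ((hY i).abs.rpow_const fun _ => Or.inr hp.le).aestronglyMeasurable
  · filter_upwards [hb] with i hi
    refine Eventually.of_forall fun t ht => ?_
    rw [Set.uIoc_of_le hST] at ht
    rw [Real.norm_eq_abs, abs_of_nonneg (by positivity)]
    exact rpow_le_rpow (abs_nonneg _) (hi t ht.2) hp.le
  · exact intervalIntegrable_const
  · refine Eventually.of_forall fun t ht => ?_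
    rw [Set.uIoc_of_le hST] at ht
    exact (hlim t ⟨ht.1.le, ht.2⟩).abs.rpow_const (Or.inr hp.le)

/-- Finite-energy chains on `(-∞, 0]` tend to zero at `-∞`. -/
lemma chain_tendsto_zero {a : ℕ → ℝ} {N : ℕ} {F : ℕ → ℝ → ℝ} {p C M' : ℝ} (hN : 1 < N) (hp : 0 < p)
    (hC : 0 < C) (hF : ChainOn a N F (Set.Iic 0)) (hb : ∀ j < N, ∀ t ≤ 0, |F j t| ≤ C)
    (hint : ∀ S T, S ≤ T → T ≤ 0 → ∫ t in S..T, |F 0 t| ^ p ≤ M') : Tendsto (F 0) atBot (𝓝 0) := by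
  have h0 : 0 < N := by omega
  refine tendsto_zero_of_int (y' := fun t => a 0 * F 0 t + F 1 t) (B := (|a 0| + 1) * C) hp
    (hF.1 0 h0) ((continuousOn_const.mul (hF.1 0 h0)).add (hF.1 1 hN))
    (fun t ht => hF.2 0 h0 t (by simpa using ht)) (fun t ht => ?_) (fun t ht => ?_) hint
  · have := hb 0 h0 t ht
    nlinarith [abs_nonneg (a 0)]
  · refine (abs_add_le _ _).trans ?_
    rw [abs_mul]
    have h1 := hb 0 h0 t ht
    have h2 := hb 1 hN t ht
    nlinarith [abs_nonneg (a 0)]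

/-! ### Concentration in logarithmic variables -/

section Concentrate

variable {m q A M' ε₁ C δ : ℝ} {k : ℕ} {lam : ℕ → ℝ} {D : ℕ → ℕ → ℝ → ℝ}

/-- Approximate limit equation along a shifted sequence. -/
lemma shift_approx (hk : 0 < k) (hlam : ∀ i, 0 < lam i) (hD : ∀ i, RadSol m q k (lam i) M' (D i))
    (hC : ∀ i, ∀ j < 2 * k, ∀ t ≤ 0, |D i j t| ≤ C) (i : ℕ) {s : ℝ} (hs : s ≤ 0) :
    |D i (2 * k) s - fnl q (D i 0 s)| ≤ lam i * C := by
  rw [(hD i).eqn s hs, add_sub_cancel_left, abs_mul, abs_of_pos (by have := hlam i; positivity), mul_assoc]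
  refine mul_le_mul_of_nonneg_left ?_ (hlam i).le
  have h1 : exp (2 * k * s) ≤ 1 := exp_le_one_iff.2 (mul_nonpos_of_nonneg_of_nonpos (by positivity) hs)
  have h2 := hC i 0 (by omega) s hs
  nlinarith [exp_pos (2 * k * s), abs_nonneg (D i 0 s)]

/-- Where the solution is small, so is the coefficient of the equation. -/
lemma small_coeff (hq : 0 < q) {l : ℝ} (hl : 0 < l) {M' : ℝ} {D : ℕ → ℝ → ℝ}
    (hD : RadSol m q k l M' D) {ε : ℝ} (hδ : δ ^ q + l ≤ ε)
    {t : ℝ} (ht : t ≤ 0) (h : |D 0 t| ≤ δ) : |D (2 * k) t| ≤ ε * |D 0 t| := by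
  rw [hD.eqn t ht]
  refine (abs_add_le _ _).trans ?_
  have h1 := abs_fnl_le hq h
  rw [abs_mul, abs_of_pos (show 0 < l * exp (2 * k * t) by positivity)]
  have h2 : exp (2 * k * t) ≤ 1 := exp_le_one_iff.2 (mul_nonpos_of_nonneg_of_nonpos (by positivity) ht)
  have h3 : l * exp (2 * k * t) ≤ l := by nlinarith
  have h4 := abs_nonneg (D 0 t)
  nlinarith

/-- The last time at which a nontrivial solution reaches the threshold `δ`. -/
lemma exists_last (hk : 0 < k) (hq : 0 < q) {l : ℝ} (hl : 0 < l) {D : ℕ → ℝ → ℝ}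
    (hD : RadSol m q k l M' D) (hC0 : 0 < C) (hC : ∀ j < 2 * k, ∀ t ≤ 0, |D j t| ≤ C)
    {κ ε : ℝ} (hκ : 0 < κ) (hκ1 : κ ≤ 1) (hκm : κ ≤ m / 2) (hε0 : 0 ≤ ε)
    (hε : ε * κ⁻¹ ^ (2 * k) ≤ 1 / 2) (hδ : δ ^ q + l ≤ ε) :
    ∃ s ≤ 0, δ ≤ |D 0 s| ∧ ∀ t, s < t → t ≤ 0 → |D 0 t| < δ := by
  set Z := {t : ℝ | t ≤ 0 ∧ δ ≤ |D 0 t|} with hZ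
  have hcl : IsClosed Z := isClosed_Iic.inter
    (isClosed_le continuous_const (hD.continuous (by omega)).abs)
  have hbdd : BddAbove Z := ⟨0, fun t ht => ht.1⟩
  have hne : Z.Nonempty := by
    by_contra hemp
    rw [Set.not_nonempty_iff_eq_empty, Set.eq_empty_iff_forall_notMem] at hemp
    obtain ⟨t0, ht0, hne⟩ := hD.nontriv
    refine hne (halfline_small (T0 := 0) (β := m / 2) (κ := κ) (ε := ε) (by omega) hκ hκ1 hε0 hε
      (by linarith) hC0 (hD.chain.mono (Set.subset_univ _)) hC (fun j hj => ?_) (fun t ht => ?_) t0 ht0)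
    · rcases lt_or_ge j k with h | h
      · exact Or.inl ⟨by linarith [expo_pos (m := m) h], hD.dir j h⟩
      · exact Or.inr (by linarith [expo_neg (m := m) h])
    · refine small_coeff hq hl hD hδ ht.le ?_
      by_contra h
      exact hemp t ⟨ht.le, (not_le.1 h).le⟩
  have hmem := hcl.csSup_mem hne hbdd
  refine ⟨sSup Z, hmem.1, hmem.2, fun t ht ht0 => ?_⟩
  by_contra h
  exact absurd (le_csSup hbdd (show t ∈ Z from ⟨ht0, not_lt.1 h⟩)) (not_le.2 ht)

/-- Solutions that reach the threshold must do so at times tending to `-∞`: otherwise a nontrivial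
solution of the limit Dirichlet problem on the half-line would arise. -/
lemma last_tendsto (hk : 0 < k) (hm : 0 < m) (hq : 0 < q) (hlam : ∀ i, 0 < lam i)
    (hlam0 : Tendsto lam atTop (𝓝 0)) (hD : ∀ i, RadSol m q k (lam i) M' (D i)) (hC0 : 0 < C)
    (hC : ∀ i, ∀ j < 2 * k, ∀ t ≤ 0, |D i j t| ≤ C) (hδ0 : 0 < δ) {s : ℕ → ℝ} (hs : ∀ i, s i ≤ 0)
    (hsδ : ∀ i, δ ≤ |D i 0 (s i)|) : Tendsto s atTop atBot := by
  by_contra hnot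
  rw [tendsto_atBot] at hnot
  push Not at hnot
  obtain ⟨R, hR⟩ := hnot
  obtain ⟨ψ, hψ, hψR⟩ := extraction_of_frequently_atTop hR
  have hη : Tendsto (fun i => lam (ψ i) * C) atTop (𝓝 0) := by
    simpa using (hlam0.comp hψ.tendsto_atTop).mul_const C
  -- a limit on the closed half-line, with the Dirichlet conditions at `0`
  obtain ⟨φ, hφ, F, hF, hFb, hFN, hFu⟩ := chain_compact (a := expo m k) (N := 2 * k)
    (E := fun i => D (ψ i)) (J := Set.Iic 0) (by omega) hq hC0
    (fun x hx x' h => le_trans h hx) (Set.mem_Iic.2 le_rfl) (fun i => (hD _).chain) hη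
    (fun T hT => Eventually.of_forall fun i t ht =>
      ⟨fun j hj => hC _ j hj t (ht.trans hT), shift_approx hk hlam hD hC _ (ht.trans hT)⟩)
  have hpt : ∀ j ≤ 2 * k, ∀ t ≤ 0, Tendsto (fun i => D (ψ (φ i)) j t) atTop (𝓝 (F j t)) :=
    fun j hj t ht => (hFu t t ht j hj).tendsto_at ⟨le_rfl, le_rfl⟩
  have hint : ∀ S T, S ≤ T → T ≤ 0 → ∫ t in S..T, |F 0 t| ^ (q + 2) ≤ M' := by
    intro S T hST hT
    exact int_limit (Y := fun i => D (ψ (φ i)) 0) (C := C) (by linarith) hST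
      (fun i => (hD _).continuous (by omega))
      (Eventually.of_forall fun i t ht => hC _ 0 (by omega) t (ht.trans hT))
      (fun t ht => hpt 0 (by omega) t (ht.2.trans hT))
      (Eventually.of_forall fun i => (hD _).int S T hST hT)
  have hlim := chain_tendsto_zero (by omega) (by linarith) hC0 hF (fun j hj t ht => hFb j hj t ht) hint
  have hzero := dirichlet_limit_zero hk hm hq hC0 hF (fun j hj t ht => hFb j hj t ht)
    (fun t _ => hFN t) hlim (fun j hj => by
      refine tendsto_nhds_unique (hpt j (by omega) 0 le_rfl) ?_
      simp only [(hD _).dir j hj]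
      exact tendsto_const_nhds)
  have hu := Metric.tendstoUniformlyOn_iff.1 (hFu R 0 (Set.mem_Iic.2 le_rfl) 0 (by omega)) δ hδ0
  obtain ⟨i, hi⟩ := hu.exists
  have h1 := hi (s (ψ (φ i))) ⟨(hψR _).le, hs _⟩
  rw [hzero _ (hs _), dist_comm, Real.dist_eq, sub_zero] at h1
  exact absurd h1 (not_lt.2 (hsδ _))

/-- The concentration statement in logarithmic variables, for sequences with uniformly small `lam`. -/
lemma log_concentration_aux (hk : 0 < k) (hm : 0 < m) (hq : 0 < q) (hmq : m * q = 2 * k)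
    (hA : 0 < A) (hA1 : Even k → ∏ j ∈ Finset.range k, (-(4 * A * (m + 2 * j) * (m + 2 * j + 1))) = 1)
    (hlam : ∀ i, 0 < lam i) (hlam0 : Tendsto lam atTop (𝓝 0)) {κ : ℝ} (hκ : 0 < κ) (hκ1 : κ ≤ 1)
    (hκm : κ ≤ m / 2) (hlam1 : ∀ i, lam i ≤ 1) (hlamκ : ∀ i, lam i ≤ κ ^ (2 * k) / 4)
    (hD : ∀ i, RadSol m q k (lam i) M' (D i)) :
    ∃ φ : ℕ → ℕ, StrictMono φ ∧ ∃ (τ : ℕ → ℝ) (ε₀ : ℝ), (ε₀ = 1 ∨ ε₀ = -1) ∧ Tendsto τ atTop atBot ∧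
      (∀ j ≤ 2 * k, ∀ S T, TendstoUniformlyOn (fun i => iteratedDeriv j (fun t => D (φ i) 0 (t + τ i)))
        (iteratedDeriv j (fun t => ε₀ * Bub A m 0 t)) atTop (Set.Icc S T)) ∧
      ∃ c K β : ℝ, 0 < K ∧ 0 < β ∧ ∀ i, ∀ t ≤ 0, τ i + c ≤ t →
        |D (φ i) 0 t| ≤ K * exp (-β * (t - τ i)) := by
  obtain ⟨C, hC0, hCall⟩ := radSol_bound (M' := M') hk hm hq
  have hC : ∀ i, ∀ j < 2 * k, ∀ t ≤ 0, |D i j t| ≤ C := fun i => hCall _ _ (hlam i) (hlam1 i) (hD i)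
  set ε := κ ^ (2 * k) / 2 with hε
  have hε0 : 0 < ε := by positivity
  have hεκ : ε * κ⁻¹ ^ (2 * k) ≤ 1 / 2 := by
    rw [hε, inv_pow, div_mul_eq_mul_div, mul_inv_cancel₀ (by positivity)]
  -- the threshold: below it, `|D (2k)| ≤ ε |D 0|` with `ε` admissible in `chain_decay`
  set δ := (ε / 2) ^ (1 / q) with hδdef
  have hδ0 : 0 < δ := by positivity
  have hδq : δ ^ q = ε / 2 := by
    rw [hδdef, ← rpow_mul (by positivity), one_div_mul_cancel hq.ne', rpow_one]
  have hδ : ∀ i, δ ^ q + lam i ≤ ε := fun i => by rw [hδq]; have := hlamκ i; rw [hε]; linarith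
  choose s hs0 hsδ hslast using fun i => exists_last hk hq (hlam i) (hD i) hC0 (hC i) hκ hκ1 hκm
    hε0.le hεκ (hδ i)
  have hst := last_tendsto hk hm hq hlam hlam0 hD hC0 hC hδ0 hs0 hsδ
  have hη : Tendsto (fun i => lam i * C) atTop (𝓝 0) := by simpa using hlam0.mul_const C
  have hev : ∀ T : ℝ, ∀ᶠ i in atTop, ∀ t ≤ T, t + s i ≤ 0 := by
    intro T
    filter_upwards [hst.eventually (eventually_le_atBot (-T))] with i hi t ht
    linarith
  -- the limit of the translates, an entire solution with `|F 0 0| ≥ δ`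
  obtain ⟨φ, hφ, F, hF, hFb, hFN, hFu⟩ := chain_compact (a := expo m k) (N := 2 * k)
    (E := fun i j t => D i j (t + s i)) (J := Set.univ) (by omega) hq hC0
    (fun x hx x' h => Set.mem_univ _) (Set.mem_univ _) (fun i => (hD _).chain.shift _) hη
    (fun T _ => by
      filter_upwards [hev T] with i hi t ht
      exact ⟨fun j hj => hC _ j hj _ (hi t ht), shift_approx hk hlam hD hC _ (hi t ht)⟩)
  have hpt : ∀ j ≤ 2 * k, ∀ t, Tendsto (fun i => D (φ i) j (t + s (φ i))) atTop (𝓝 (F j t)) :=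
    fun j hj t => (hFu t t (Set.mem_univ _) j hj).tendsto_at ⟨le_rfl, le_rfl⟩
  have hint : ∀ S T, S ≤ T → ∫ t in S..T, |F 0 t| ^ (q + 2) ≤ M' := by
    intro S T hST
    have hevT := hφ.tendsto_atTop.eventually (hev T)
    refine int_limit (Y := fun i t => D (φ i) 0 (t + s (φ i))) (C := C) (by linarith) hST
      (fun i => ((hD _).continuous (by omega)).comp (by fun_prop)) ?_ (fun t _ => hpt 0 (by omega) t) ?_
    · filter_upwards [hevT] with i hi t ht using hC _ 0 (by omega) _ (hi t ht)
    · filter_upwards [hevT] with i hi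
      rw [intervalIntegral.integral_comp_add_right (fun t => |D (φ i) 0 t| ^ (q + 2))]
      exact (hD _).int _ _ (by linarith) (hi T le_rfl)
  have hlim : Tendsto (F 0) atBot (𝓝 0) := chain_tendsto_zero (by omega) (by linarith) hC0
    (hF.mono (Set.subset_univ _)) (fun j hj t _ => hFb j hj t (Set.mem_univ _))
    (fun S T h _ => hint S T h)
  have hlim' : Tendsto (F 0) atTop (𝓝 0) := by
    have h1 := chain_tendsto_zero (a := fun j => -expo m k j) (F := fun j t => (-1) ^ j * F j (-t))
      (p := q + 2) (M' := M') (by omega) (by linarith) hC0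
      (hF.reflect.mono (Set.subset_univ _)) (fun j hj t _ => by
        rw [abs_mul, abs_pow, abs_neg, abs_one, one_pow, one_mul]
        exact hFb j hj _ (Set.mem_univ _)) (fun S T h _ => by
        simp only [pow_zero, one_mul]
        rw [intervalIntegral.integral_comp_neg (fun t => |F 0 t| ^ (q + 2))]
        exact hint _ _ (by linarith))
    have h2 := h1.comp tendsto_neg_atTop_atBot
    simpa [Function.comp_def] using h2
  have hF0 : δ ≤ |F 0 0| := by
    refine ge_of_tendsto (hpt 0 (by omega) 0).abs (Eventually.of_forall fun i => ?_)
    simpa using hsδ (φ i)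
  have heven : Even k := (hD 0).even hk hm hq hmq (hlam 0)
  rcases line_classify hk hm hq hmq hA (hA1 heven) hC0 hF (fun j hj t => hFb j hj t (Set.mem_univ _))
    hFN hlim hlim' with h0 | ⟨ε₀, hε₀, c, hc⟩
  · rw [h0, abs_zero] at hF0; exact absurd hF0 (not_le.2 hδ0)
  -- the shift by `c` centres the limiting bubble at `t = 0`
  refine ⟨φ, hφ, fun i => s (φ i) + c, ε₀, hε₀, ?_, ?_, -c, 2 * (2 * k : ℕ) * κ⁻¹ ^ (2 * k) * (C * exp (-(m / 2) * c)),
    m / 2, by positivity, by linarith, ?_⟩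
  · exact tendsto_atBot_add_const_right _ _ (hst.comp hφ.tendsto_atTop)
  · obtain ⟨b, hb⟩ := iteratedDeriv_of_chain (expo m k)
    intro j hj S T
    have hG : (fun t => ε₀ * Bub A m 0 t) = fun t => F 0 (t + c) := by
      funext t; rw [hc]; ring_nf
    rw [hG]
    have e1 : ∀ i, iteratedDeriv j (fun t => D (φ i) 0 (t + (s (φ i) + c))) = fun t =>
        ∑ l ∈ Finset.range (j + 1), b j l * D (φ i) l (t + (s (φ i) + c)) := fun i =>
      funext fun t => hb (2 * k) _ ((hD (φ i)).chain.shift _) j hj t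
    have e2 : iteratedDeriv j (fun t => F 0 (t + c)) = fun t =>
        ∑ l ∈ Finset.range (j + 1), b j l * F l (t + c) :=
      funext fun t => hb (2 * k) _ (hF.shift c) j hj t
    simp only [e1, e2]
    have h1 : ∀ l ∈ Finset.range (j + 1), TendstoUniformlyOn
        (fun i t => b j l * D (φ i) l (t + (s (φ i) + c))) (fun t => b j l * F l (t + c)) atTop
        (Set.Icc S T) := by
      intro l hl
      have h2 := hFu (S + c) (T + c) (Set.mem_univ _) l (by have := Finset.mem_range.1 hl; omega)
      have h3 := (h2.comp (fun t => t + c)).mono (s' := Set.Icc S T)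
        (fun t ht => ⟨by linarith [ht.1], by linarith [ht.2]⟩)
      refine (((uniformContinuous_const_smul (b j l)).comp_tendstoUniformlyOn h3).congr
        (Eventually.of_forall fun i t _ => ?_))
      simp [Function.comp, add_assoc, add_comm c]
    clear e1 e2 hG
    revert h1
    generalize Finset.range (j + 1) = Y
    intro h1
    induction Y using Finset.induction_on with
    | empty =>
      simp only [Finset.sum_empty]
      exact fun v hv => Eventually.of_forall fun _ _ _ => refl_mem_uniformity hv
    | insert l Z hl ih =>
      simp only [Finset.sum_insert hl]
      exact (h1 l (Finset.mem_insert_self _ _)).add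
        (ih fun l hl => h1 l (Finset.mem_insert_of_mem hl))
  · intro i t ht0 ht
    have ht' : s (φ i) ≤ t := by linarith
    have h1 : ∀ CR : ℝ, 0 < CR → |D (φ i) 0 t| ≤ 2 * (2 * k : ℕ) * κ⁻¹ ^ (2 * k) *
        (CR * exp (m / 2 * (t - 0)) + C * exp (-(m / 2) * (t - s (φ i)))) := by
      intro CR hCR
      refine chain_decay (a := expo m k) (hs0 _) (by omega) hκ hκ1 hε0.le hεκ (by linarith) hC0 hCR
        ((hD (φ i)).chain.mono (Set.subset_univ _)) (fun j hj => ?_) (fun r hr => ?_) 0 (by omega) t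
        ⟨ht', ht0⟩
      · rcases lt_or_ge j k with h | h
        · refine Or.inl ⟨by linarith [expo_pos (m := m) h], ?_⟩
          rw [(hD _).dir j h, abs_zero]; exact hCR.le
        · exact Or.inr ⟨by linarith [expo_neg (m := m) h], hC _ j hj _ (hs0 _)⟩
      · exact small_coeff hq (hlam _) (hD _) (hδ _) hr.2.le (hslast _ r hr.1 hr.2.le).le
    have h2 : Tendsto (fun CR : ℝ => 2 * (2 * k : ℕ) * κ⁻¹ ^ (2 * k) *
        (CR * exp (m / 2 * (t - 0)) + C * exp (-(m / 2) * (t - s (φ i))))) (𝓝[>] 0)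
        (𝓝 (2 * (2 * k : ℕ) * κ⁻¹ ^ (2 * k) *
        (0 * exp (m / 2 * (t - 0)) + C * exp (-(m / 2) * (t - s (φ i)))))) :=
      (((tendsto_id.mul_const _).add_const _).const_mul _).mono_left nhdsWithin_le_nhds
    refine (ge_of_tendsto h2 (eventually_nhdsWithin_of_forall h1)).trans (le_of_eq ?_)
    rw [zero_mul, zero_add, mul_assoc (2 * ((2 * k : ℕ) : ℝ) * κ⁻¹ ^ (2 * k)) (C * _) _, mul_assoc C,
      ← exp_add]
    congr 3
    ring

end Concentrate

/-! ### Return to the space variable -/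

/-- `log_concentration_aux` without smallness of `lam`, by discarding finitely many terms. -/
lemma log_concentration {m q A M' : ℝ} {k : ℕ} {lam : ℕ → ℝ} {D : ℕ → ℕ → ℝ → ℝ}
    (hk : 0 < k) (hm : 0 < m) (hq : 0 < q) (hmq : m * q = 2 * k)
    (hA : 0 < A) (hA1 : Even k → ∏ j ∈ Finset.range k, (-(4 * A * (m + 2 * j) * (m + 2 * j + 1))) = 1)
    (hlam : ∀ i, 0 < lam i) (hlam0 : Tendsto lam atTop (𝓝 0))
    (hD : ∀ i, RadSol m q k (lam i) M' (D i)) :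
    ∃ φ : ℕ → ℕ, StrictMono φ ∧ ∃ (τ : ℕ → ℝ) (ε₀ : ℝ), (ε₀ = 1 ∨ ε₀ = -1) ∧ Tendsto τ atTop atBot ∧
      (∀ j ≤ 2 * k, ∀ S T, TendstoUniformlyOn (fun i => iteratedDeriv j (fun t => D (φ i) 0 (t + τ i)))
        (iteratedDeriv j (fun t => ε₀ * Bub A m 0 t)) atTop (Set.Icc S T)) ∧
      ∃ c K β : ℝ, 0 < K ∧ 0 < β ∧ ∀ i, ∀ t ≤ 0, τ i + c ≤ t →
        |D (φ i) 0 t| ≤ K * exp (-β * (t - τ i)) := by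
  set κ := min 1 (m / 2) with hκ
  have hκ0 : 0 < κ := lt_min one_pos (by linarith)
  obtain ⟨N, hN⟩ := eventually_atTop.1 (hlam0.eventually (ge_mem_nhds
    (show 0 < min 1 (κ ^ (2 * k) / 4) from lt_min one_pos (by positivity))))
  obtain ⟨φ, hφ, τ, ε₀, h⟩ := log_concentration_aux (lam := fun i => lam (i + N))
    (D := fun i => D (i + N)) hk hm hq hmq hA hA1 (fun i => hlam _)
    ((tendsto_add_atTop_iff_nat N).2 hlam0) hκ0 (min_le_left _ _) (min_le_right _ _)
    (fun i => (hN _ (by omega)).trans (min_le_left _ _))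
    (fun i => (hN _ (by omega)).trans (min_le_right _ _)) (fun i => hD _)
  exact ⟨fun i => φ i + N, fun i j hij => Nat.add_lt_add_right (hφ hij) N, τ, ε₀, h⟩

/-- Multiplication by the weight `e^{-mt}` is bounded in `C^j` on compact intervals. -/
lemma weight_bound (m S T : ℝ) (j : ℕ) : ∃ K, 0 ≤ K ∧ ∀ d : ℝ → ℝ, ContDiff ℝ j d → ∀ η : ℝ,
    (∀ i ≤ j, ∀ t ∈ Set.Icc S T, |iteratedDeriv i d t| ≤ η) → ∀ t ∈ Set.Icc S T,
      ‖iteratedFDeriv ℝ j (fun t => exp (-m * t) * d t) t‖ ≤ K * η := by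
  have hexp : ContDiff ℝ j (fun t => exp (-m * t)) := by fun_prop
  have hB : ∀ i : ℕ, ∃ B, i ≤ j → ∀ t ∈ Set.Icc S T, ‖iteratedFDeriv ℝ i (fun t => exp (-m * t)) t‖ ≤ B := by
    intro i
    by_cases hi : i ≤ j
    · obtain ⟨B, hB⟩ := isCompact_Icc.exists_bound_of_continuousOn (s := Set.Icc S T)
        (hexp.continuous_iteratedFDeriv (m := i) (by exact_mod_cast hi)).continuousOn
      exact ⟨B, fun _ => hB⟩
    · exact ⟨0, fun h => absurd h hi⟩
  choose B hB using hB
  refine ⟨∑ i ∈ Finset.range (j + 1), (j.choose i : ℝ) * |B i|, by positivity, fun d hd η hη t ht => ?_⟩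
  have hη0 : 0 ≤ η := (abs_nonneg _).trans (hη 0 (Nat.zero_le _) t ht)
  refine (norm_iteratedFDeriv_mul_le hexp hd t le_rfl).trans ?_
  rw [Finset.sum_mul]
  refine Finset.sum_le_sum fun i hi => ?_
  have hi' := Nat.lt_succ_iff.1 (Finset.mem_range.1 hi)
  have h1 := (hB i hi' t ht).trans (le_abs_self _)
  have h2 := hη (j - i) (Nat.sub_le _ _) t ht
  rw [← Real.norm_eq_abs, ← norm_iteratedFDeriv_eq_norm_iteratedDeriv] at h2
  gcongr

/-- Composition with `log ‖·‖` is bounded in `C^j` on compact sets away from the origin. -/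
lemma comp_log_bound {n : ℕ} {Z : Set (EuclideanSpace ℝ (Fin n))} (hZ : Z ⊆ {0}ᶜ) (hZc : IsCompact Z)
    (j : ℕ) : ∃ S T K, 0 ≤ K ∧ ∀ h : ℝ → ℝ, ContDiff ℝ j h → ∀ η : ℝ,
    (∀ i ≤ j, ∀ t ∈ Set.Icc S T, ‖iteratedFDeriv ℝ i h t‖ ≤ η) → ∀ x ∈ Z,
      ‖iteratedFDeriv ℝ j (fun z => h (log ‖z‖)) x‖ ≤ K * η := by
  set U : Set (EuclideanSpace ℝ (Fin n)) := {0}ᶜ with hU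
  have hUo : IsOpen U := isOpen_compl_singleton
  have hf : ContDiffOn ℝ j (fun z : EuclideanSpace ℝ (Fin n) => log ‖z‖) U := by
    intro z hz
    exact ((contDiffAt_norm ℝ hz).log (norm_ne_zero_iff.2 hz)).contDiffWithinAt
  obtain ⟨R, hR⟩ := hZc.exists_bound_of_continuousOn (hf.continuousOn.mono hZ)
  have hB : ∀ i : ℕ, ∃ B, i ≤ j → ∀ x ∈ Z,
      ‖iteratedFDerivWithin ℝ i (fun z : EuclideanSpace ℝ (Fin n) => log ‖z‖) U x‖ ≤ B := by
    intro i
    by_cases hi : i ≤ j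
    · obtain ⟨B, hB⟩ := hZc.exists_bound_of_continuousOn ((hf.continuousOn_iteratedFDerivWithin
        (m := i) (by exact_mod_cast hi) hUo.uniqueDiffOn).mono hZ)
      exact ⟨B, fun _ => hB⟩
    · exact ⟨0, fun h => absurd h hi⟩
  choose B hB using hB
  set Q := 1 + ∑ i ∈ Finset.range (j + 1), |B i| with hQ
  have hQ1 : 1 ≤ Q := le_add_of_nonneg_right (Finset.sum_nonneg fun _ _ => abs_nonneg _)
  refine ⟨-R, R, j.factorial * Q ^ j, by positivity, fun h hh η hη x hx => ?_⟩
  have hx' : log ‖x‖ ∈ Set.Icc (-R) R := abs_le.1 (hR x hx)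
  have := norm_iteratedFDerivWithin_comp_le (n := j) (g := h) (t := Set.univ) (s := U) (C := η) (D := Q)
    (hh.contDiffOn) hf le_rfl uniqueDiffOn_univ hUo.uniqueDiffOn (Set.mapsTo_univ _ _) (hZ hx)
    (fun i hi => by rw [iteratedFDerivWithin_univ]; exact hη i hi _ hx')
    (fun i h1 hi => by
      refine (hB i hi x hx).trans ((le_abs_self _).trans (le_trans ?_ (le_self_pow₀ hQ1 (by omega))))
      refine (Finset.single_le_sum (f := fun i => |B i|) (fun _ _ => abs_nonneg _)
        (Finset.mem_range.2 (Nat.lt_succ_of_le hi))).trans ?_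
      rw [hQ]; linarith)
  rw [iteratedFDerivWithin_of_isOpen j hUo (hZ hx)] at this
  refine this.trans (le_of_eq (by ring))

lemma prod_range_two_mul (f : ℕ → ℝ) (k : ℕ) :
    ∏ i ∈ Finset.range (2 * k), f i = ∏ j ∈ Finset.range k, (f (2 * j) * f (2 * j + 1)) := by
  induction k with
  | zero => simp
  | succ k ih => rw [show 2 * (k + 1) = 2 * k + 1 + 1 by ring, Finset.prod_range_succ,
      Finset.prod_range_succ, ih, Finset.prod_range_succ]; ring

section Constants

variable {n k : ℕ}

lemma ank_prod_pos (hn : 2 * k < n) :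
    0 < ∏ j ∈ Finset.range (2 * k), ((n : ℝ) + 2 * ((j : ℝ) - (k : ℝ))) := by
  have : (2 * k : ℝ) < n := by exact_mod_cast hn
  refine Finset.prod_pos fun j _ => ?_
  have : (0 : ℝ) ≤ j := Nat.cast_nonneg j
  linarith

lemma ank_pos (hn : 2 * k < n) : 0 < ank n k := rpow_pos_of_pos (ank_prod_pos hn) _

/-- The constant `a_{n,k}` makes the bubble an exact solution. -/
lemma ank_spec (hk : 0 < k) (hn : 2 * k < n) (hev : Even k) {m : ℝ} (hm : m = ((n : ℝ) - 2 * k) / 2) :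
    ∏ j ∈ Finset.range k, (-(4 * ank n k * (m + 2 * j) * (m + 2 * j + 1))) = 1 := by
  -- the `2k` factors of `a_{n,k}^{-k}` are `2m, 2m + 2, …, 2m + 4k - 2`, taken in pairs
  have h1 : ∏ j ∈ Finset.range k, (-(4 * ank n k * (m + 2 * j) * (m + 2 * j + 1))) =
      (-ank n k) ^ k * ∏ j ∈ Finset.range (2 * k), ((n : ℝ) + 2 * ((j : ℝ) - (k : ℝ))) := by
    rw [prod_range_two_mul, ← Finset.card_range k, ← Finset.prod_const, Finset.card_range,
      ← Finset.prod_mul_distrib]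
    refine Finset.prod_congr rfl fun j _ => ?_
    rw [hm]; push_cast; ring
  have hk' : (k : ℝ) ≠ 0 := by exact_mod_cast hk.ne'
  have hP := ank_prod_pos hn
  rw [h1, hev.neg_pow, ank, ← rpow_natCast, ← rpow_mul hP.le, div_mul_cancel₀ _ hk', rpow_neg_one,
    inv_mul_cancel₀ hP.ne']

lemma Ubub_eq (hn : 2 * k < n) {m : ℝ} (hm : m = ((n : ℝ) - 2 * k) / 2)
    {z : EuclideanSpace ℝ (Fin n)} (hz : z ≠ 0) :
    Ubub n k z = exp (-m * log ‖z‖) * Bub (ank n k) m 0 (log ‖z‖) := by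
  have hz' : 0 < ‖z‖ := norm_pos_iff.2 hz
  have hA := ank_pos hn
  have h1 : exp (-log ‖z‖) + ank n k * exp (log ‖z‖) = ‖z‖⁻¹ * (1 + ank n k * ‖z‖ ^ 2) := by
    rw [exp_neg, exp_log hz']; field_simp
  rw [Bub, Ubub, h1, ← hm, Nat.cast_zero, sub_zero, pow_zero, mul_one, mul_comm (-m), ← rpow_def_of_pos hz',
    mul_rpow (by positivity) (by positivity), one_div, inv_rpow hz'.le, inv_rpow (by positivity),
    rpow_neg (by positivity : (0 : ℝ) ≤ 1 + ank n k * ‖z‖ ^ 2), ← mul_assoc,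
    mul_inv_cancel₀ (by positivity), one_mul]

end Constants

/-- A radial function is recovered from its profile at `t = log ‖x‖`. -/
lemma radial_eq_prof {n : ℕ} {m : ℝ} {u : EuclideanSpace ℝ (Fin n) → ℝ}
    (hrad : ∀ x y : EuclideanSpace ℝ (Fin n), ‖x‖ = ‖y‖ → u x = u y)
    {e x : EuclideanSpace ℝ (Fin n)} (he : ‖e‖ = 1) (hx : x ≠ 0) :
    prof m u e (log ‖x‖) = ‖x‖ ^ m * u x := by
  have hx' : 0 < ‖x‖ := norm_pos_iff.2 hx
  rw [prof, mul_comm m, ← rpow_def_of_pos hx', exp_log hx']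
  congr 1
  exact hrad _ _ (by rw [norm_smul, he, mul_one, norm_norm])

/-- Uniform convergence of the logarithmic profiles with their derivatives gives `C^{2k}_loc` convergence
away from the origin. -/
lemma cLocConv_of_prof {n k : ℕ} (hn : 2 * k < n) {m : ℝ} (hm : m = ((n : ℝ) - 2 * k) / 2)
    {u : ℕ → EuclideanSpace ℝ (Fin n) → ℝ} (hu : ∀ i, ContDiff ℝ (2 * k : ℕ) (u i))
    (hrad : ∀ i, ∀ x y : EuclideanSpace ℝ (Fin n), ‖x‖ = ‖y‖ → u i x = u i y)
    {e : EuclideanSpace ℝ (Fin n)} (he : ‖e‖ = 1) {τ : ℕ → ℝ} {ε₀ : ℝ}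
    (hconv : ∀ j ≤ 2 * k, ∀ S T, TendstoUniformlyOn
      (fun i => iteratedDeriv j (fun t => prof m (u i) e (t + τ i)))
      (iteratedDeriv j (fun t => ε₀ * Bub (ank n k) m 0 t)) atTop (Set.Icc S T)) :
    CLocConv (2 * k) {(0 : EuclideanSpace ℝ (Fin n))}ᶜ
      (fun i z => exp (τ i) ^ (((n : ℝ) - 2 * k) / 2) * u i (exp (τ i) • z))
      (fun z => ε₀ * Ubub n k z) := by
  intro Z hZ hZc j hj
  set d : ℕ → ℝ → ℝ := fun i t => prof m (u i) e (t + τ i) - ε₀ * Bub (ank n k) m 0 t with hd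
  have hp : ∀ i, ContDiff ℝ (2 * k : ℕ) (fun t => prof m (u i) e (t + τ i)) := fun i =>
    (contDiff_prof (hu i)).comp (by fun_prop)
  have hb : ContDiff ℝ (2 * k : ℕ) (fun t => ε₀ * Bub (ank n k) m 0 t) :=
    contDiff_const.mul (contDiff_bub (ank_pos hn) m 0)
  have hdc : ∀ i, ContDiff ℝ (2 * k : ℕ) (d i) := fun i => (hp i).sub hb
  have hgeq : ∀ z : EuclideanSpace ℝ (Fin n), z ≠ 0 →
      ε₀ * Ubub n k z = exp (-m * log ‖z‖) * (ε₀ * Bub (ank n k) m 0 (log ‖z‖)) := fun z hz => by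
    rw [Ubub_eq hn hm hz]; ring
  have hfeq : ∀ i, ∀ z : EuclideanSpace ℝ (Fin n), z ≠ 0 →
      exp (τ i) ^ (((n : ℝ) - 2 * k) / 2) * u i (exp (τ i) • z) =
        exp (-m * log ‖z‖) * prof m (u i) e (log ‖z‖ + τ i) := fun i z hz => by
    have hz' : ‖z‖ ≠ 0 := norm_ne_zero_iff.2 hz
    have h1 := radial_eq_prof (m := m) (hrad i) he (x := exp (τ i) • z) (by
      simp [hz, (exp_pos (τ i)).ne'])
    rw [norm_smul, Real.norm_eq_abs, abs_of_pos (exp_pos _), log_mul (exp_pos _).ne' hz', log_exp,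
      add_comm (τ i)] at h1
    rw [h1, mul_rpow (exp_pos _).le (norm_nonneg _), ← hm, mul_comm (-m), mul_neg, exp_neg,
      ← rpow_def_of_pos (norm_pos_iff.2 hz)]
    have : ‖z‖ ^ m ≠ 0 := (rpow_pos_of_pos (norm_pos_iff.2 hz) m).ne'
    field_simp
  have hlog : ∀ z : EuclideanSpace ℝ (Fin n), z ≠ 0 →
      ContDiffAt ℝ (2 * k : ℕ) (fun z : EuclideanSpace ℝ (Fin n) => log ‖z‖) z := fun z hz =>
    (contDiffAt_norm ℝ hz).log (norm_ne_zero_iff.2 hz)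
  -- both functions have the form `e^{-m t} φ(t)` at `t = log ‖z‖`, and so has their difference
  have hdiff : ∀ i, ∀ x ∈ Z,
      iteratedFDeriv ℝ j (fun z => exp (τ i) ^ (((n : ℝ) - 2 * k) / 2) * u i (exp (τ i) • z)) x
        - iteratedFDeriv ℝ j (fun z => ε₀ * Ubub n k z) x =
      iteratedFDeriv ℝ j (fun z => (fun t => exp (-m * t) * d i t) (log ‖z‖)) x := by
    intro i x hx
    have hx0 : x ≠ 0 := hZ hx
    have hev : ∀ᶠ z in 𝓝 x, z ≠ 0 := isOpen_compl_singleton.mem_nhds (by simpa using hx0)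
    have h1 : ContDiffAt ℝ (j : ℕ)
        (fun z => exp (τ i) ^ (((n : ℝ) - 2 * k) / 2) * u i (exp (τ i) • z)) x :=
      ((contDiff_const.mul ((hu i).comp (contDiff_const_smul _))).contDiffAt).of_le (by exact_mod_cast hj)
    have h2 : ContDiffAt ℝ (j : ℕ) (fun z => ε₀ * Ubub n k z) x := by
      have h3 : ContDiffAt ℝ (2 * k : ℕ) ((fun t => exp (-m * t) * (ε₀ * Bub (ank n k) m 0 t)) ∘
          fun z : EuclideanSpace ℝ (Fin n) => log ‖z‖) x :=
        (((by fun_prop : ContDiff ℝ (2 * k : ℕ) fun t : ℝ => exp (-m * t)).mul hb).contDiffAt).comp x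
          (hlog x hx0)
      refine (h3.of_le (by exact_mod_cast hj)).congr_of_eventuallyEq ?_
      filter_upwards [hev] with z hz using hgeq z hz
    rw [← iteratedFDeriv_sub_apply h1 h2]
    refine (Filter.EventuallyEq.iteratedFDeriv ℝ ?_ j).self_of_nhds
    filter_upwards [hev] with z hz
    simp only [Pi.sub_apply, hd]
    rw [hgeq z hz, hfeq i z hz]; ring
  obtain ⟨S, T, K, hK, hcomp⟩ := comp_log_bound hZ hZc j
  choose W hW hweight using fun l => weight_bound m S T l
  set Ws := ∑ l ∈ Finset.range (j + 1), W l with hWs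
  have hWs0 : 0 ≤ Ws := Finset.sum_nonneg fun l _ => hW l
  rw [Metric.tendsto_atTop']
  intro r hr
  set η := r / (2 * (K * Ws + 1)) with hη
  have hη0 : 0 < η := by positivity
  have hsmall : ∀ᶠ i in atTop, ∀ l ≤ j, ∀ t ∈ Set.Icc S T, |iteratedDeriv l (d i) t| ≤ η := by
    have h1 : ∀ l ∈ Set.Iic j, ∀ᶠ i in atTop, ∀ t ∈ Set.Icc S T, |iteratedDeriv l (d i) t| ≤ η := by
      intro l hl
      filter_upwards [Metric.tendstoUniformlyOn_iff.1 (hconv l (le_trans hl hj) S T) η hη0] with i hi t ht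
      have h2 := hi t ht
      rw [dist_comm, Real.dist_eq] at h2
      have h3 : iteratedDeriv l (d i) t = iteratedDeriv l (fun t => prof m (u i) e (t + τ i)) t -
          iteratedDeriv l (fun t => ε₀ * Bub (ank n k) m 0 t) t :=
        iteratedDeriv_sub ((hp i).contDiffAt.of_le (by exact_mod_cast le_trans hl hj))
          (hb.contDiffAt.of_le (by exact_mod_cast le_trans hl hj))
      rw [h3]
      exact h2.le
    exact (Filter.eventually_all_finite (Set.finite_Iic j)).2 h1
  obtain ⟨N, hN⟩ := eventually_atTop.1 hsmall
  refine ⟨N, fun i hi => ?_⟩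
  have hx : ∀ x : Z, ‖iteratedFDeriv ℝ j
      (fun z => exp (τ i) ^ (((n : ℝ) - 2 * k) / 2) * u i (exp (τ i) • z)) (x : EuclideanSpace ℝ (Fin n))
        - iteratedFDeriv ℝ j (fun z => ε₀ * Ubub n k z) (x : EuclideanSpace ℝ (Fin n))‖ ≤
          K * (Ws * η) := by
    intro x
    rw [hdiff i x x.2]
    have hc : ContDiff ℝ (j : ℕ) fun t => exp (-m * t) * d i t :=
      (by fun_prop : ContDiff ℝ (j : ℕ) fun t : ℝ => exp (-m * t)).mul
        ((hdc i).of_le (by exact_mod_cast hj))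
    have hb' : ∀ l ≤ j, ∀ t ∈ Set.Icc S T,
        ‖iteratedFDeriv ℝ l (fun t => exp (-m * t) * d i t) t‖ ≤ Ws * η := by
      intro l hl t ht
      have h1 := hweight l (d i) ((hdc i).of_le (by exact_mod_cast hl.trans hj)) η
        (fun a ha => hN i hi.le a (ha.trans hl)) t ht
      have h2 : W l ≤ Ws :=
        Finset.single_le_sum (f := W) (fun l _ => hW l) (Finset.mem_range.2 (Nat.lt_succ_of_le hl))
      exact h1.trans (mul_le_mul_of_nonneg_right h2 hη0.le)
    exact hcomp (fun t => exp (-m * t) * d i t) hc (Ws * η) hb' x x.2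
  rw [Real.dist_eq, sub_zero, abs_of_nonneg (Real.iSup_nonneg fun _ => norm_nonneg _)]
  refine lt_of_le_of_lt (Real.iSup_le hx (by positivity)) ?_
  have h1 : (K * Ws + 1) * η = r / 2 := by rw [hη]; field_simp
  have h2 : K * (Ws * η) = (K * Ws + 1) * η - η := by ring
  rw [h2, h1]; linarith

/-- Exponential decay of the logarithmic profiles away from the concentration scale gives the decay of
`|x|^m |u_i(x)|` for `|x| ≥ R ν_i`. -/
lemma tail_of_prof {n : ℕ} {m : ℝ} {u : ℕ → EuclideanSpace ℝ (Fin n) → ℝ}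
    (hrad : ∀ i, ∀ x y : EuclideanSpace ℝ (Fin n), ‖x‖ = ‖y‖ → u i x = u i y)
    {e : EuclideanSpace ℝ (Fin n)} (he : ‖e‖ = 1) {τ : ℕ → ℝ} {c K β : ℝ} (hK : 0 < K) (hβ : 0 < β)
    (hdec : ∀ i, ∀ t ≤ 0, τ i + c ≤ t → |prof m (u i) e t| ≤ K * exp (-β * (t - τ i))) :
    Filter.Tendsto (fun R : ℝ => Filter.limsup (fun i =>
      ⨆ x : {x : EuclideanSpace ℝ (Fin n) //
        x ∈ Metric.ball (0 : EuclideanSpace ℝ (Fin n)) 1 ∧ R * exp (τ i) ≤ ‖x‖},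
        ‖(x : EuclideanSpace ℝ (Fin n))‖ ^ m * |u i (x : EuclideanSpace ℝ (Fin n))|) Filter.atTop)
    Filter.atTop (nhds 0) := by
  have hle : ∀ R : ℝ, exp c ≤ R → ∀ i, (⨆ x : {x : EuclideanSpace ℝ (Fin n) //
      x ∈ Metric.ball (0 : EuclideanSpace ℝ (Fin n)) 1 ∧ R * exp (τ i) ≤ ‖x‖},
        ‖(x : EuclideanSpace ℝ (Fin n))‖ ^ m * |u i (x : EuclideanSpace ℝ (Fin n))|) ≤
          K * exp (-β * log R) := by
    intro R hR i
    have hR0 : 0 < R := (exp_pos c).trans_le hR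
    refine Real.iSup_le (fun x => ?_) (by positivity)
    obtain ⟨x, hx1, hx2⟩ := x
    have hx0 : 0 < ‖x‖ := lt_of_lt_of_le (by positivity) hx2
    have hlog : log R + τ i ≤ log ‖x‖ := by
      have := log_le_log (by positivity) hx2
      rwa [log_mul hR0.ne' (exp_pos _).ne', log_exp] at this
    have hc : c ≤ log R := (le_log_iff_exp_le hR0).2 hR
    have h1 := hdec i (log ‖x‖) (log_nonpos hx0.le (by simpa using (mem_ball_zero_iff.1 hx1).le))
      (by linarith)
    rw [radial_eq_prof (hrad i) he (norm_pos_iff.1 hx0), abs_mul, abs_of_nonneg (by positivity)] at h1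
    refine h1.trans (mul_le_mul_of_nonneg_left (exp_le_exp.2 ?_) hK.le)
    nlinarith
  have hge : ∀ R : ℝ, ∀ i, 0 ≤ (⨆ x : {x : EuclideanSpace ℝ (Fin n) //
      x ∈ Metric.ball (0 : EuclideanSpace ℝ (Fin n)) 1 ∧ R * exp (τ i) ≤ ‖x‖},
        ‖(x : EuclideanSpace ℝ (Fin n))‖ ^ m * |u i (x : EuclideanSpace ℝ (Fin n))|) :=
    fun R i => Real.iSup_nonneg fun x => by positivity
  have hlim : Tendsto (fun R => K * exp (-β * log R)) atTop (𝓝 0) := by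
    have h1 : Tendsto (fun R => -β * log R) atTop atBot :=
      tendsto_log_atTop.const_mul_atTop_of_neg (by linarith)
    simpa using (tendsto_exp_atBot.comp h1).const_mul K
  refine squeeze_zero' ?_ ?_ hlim
  · filter_upwards [eventually_ge_atTop (exp c)] with R hR
    refine le_limsup_of_le (isBoundedUnder_of ⟨_, hle R hR⟩) fun b hb => ?_
    obtain ⟨i, hi⟩ := hb.exists
    exact (hge R i).trans hi
  · filter_upwards [eventually_ge_atTop (exp c)] with R hR
    exact limsup_le_of_le (isCoboundedUnder_le_of_le atTop (hge R)) (Eventually.of_forall (hle R hR))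

theorem stmt7 (n k : ℕ) (hk : 2 ≤ 2 * k) (hn : 2 * k < n) (M : ℝ) (hM : 0 < M)
    (lam : ℕ → ℝ) (u : ℕ → EuclideanSpace ℝ (Fin n) → ℝ)
    (hsetup : BlowUpSetup n k M lam u) :
    ∃ φ : ℕ → ℕ, StrictMono φ ∧
      ∃ ν : ℕ → ℝ, ∃ ε₀ : ℝ,
        Concentration n k (fun i => u (φ i)) ν ε₀ := by
  obtain ⟨hlam, hlam0, hu, hrad, heq, hdir, hnt, hint⟩ := hsetup
  have hk0 : 0 < k := by omega
  have hkn : (2 * k : ℝ) < n := by exact_mod_cast hn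
  have hkR : (0 : ℝ) < k := by exact_mod_cast hk0
  obtain ⟨m, hm⟩ : ∃ m, m = ((n : ℝ) - 2 * k) / 2 := ⟨_, rfl⟩
  have hm0 : 0 < m := by rw [hm]; linarith
  obtain ⟨q, hq⟩ : ∃ q, q = twoStar n k - 2 := ⟨_, rfl⟩
  have hd : (n : ℝ) - 2 * k ≠ 0 := by linarith
  have hmq : m * q = 2 * k := by
    rw [hm, hq, twoStar]; field_simp; ring
  have hq0 : 0 < q := by
    have : 0 < m * q := by rw [hmq]; positivity
    exact (mul_pos_iff_of_pos_left hm0).1 this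
  have hstar : twoStar n k = q + 2 := by rw [hq]; ring
  set e : EuclideanSpace ℝ (Fin n) := EuclideanSpace.single ⟨0, by omega⟩ 1 with he
  have he1 : ‖e‖ = 1 := by simp [he]
  rw [← hq] at heq
  rw [hstar] at hint
  obtain ⟨φ, hφ, τ, ε₀, hε₀, hτ, hconv, c, K, β, hK, hβ, hdec⟩ := log_concentration hk0 hm0 hq0 hmq
    (ank_pos hn) (fun hev => ank_spec hk0 hn hev hm) hlam hlam0
    (fun i => radSol_of_radial hk0 hn hm hmq (hu i) (hrad i) he1 (heq i) (hdir i) (hnt i) (hint i))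
  simp only [opP_chainPoly_zero] at hconv hdec
  refine ⟨φ, hφ, fun i => exp (τ i), ε₀, fun i => exp_pos _, tendsto_exp_atBot.comp hτ, hε₀, ?_, ?_⟩
  · exact cLocConv_of_prof hn hm (fun i => hu _) (fun i => hrad _) he1 hconv
  · rw [← hm]
    exact tail_of_prof (fun i => hrad _) he1 hK hβ hdec
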